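/- For every integer d ≥ 3 and every nonnegative u in D^{1,2}(ℝ^d), setting v = u^{(d+2)/(d−2)}, one has S_d ‖v‖_{2d/(d+2)}² − ∫ v (−Δ)^{−1} v dx ≤ C · S_d · ( ∫ v^{2d/(d+2)} dx )^{4/d} · [ S_d ‖∇u‖_2² − ‖u‖_{2^*}² ], where C = ((d+2)/d)(1 − e^{−d/2}). -/

import Mathlib

open MeasureTheory Real

noncomputable section

/-- Surface area of the unit sphere `𝕊^{d-1} ⊆ ℝ^d`. -/
def sphereArea (d : ℕ) : ℝ := 2 * Real.pi ^ ((d : ℝ) / 2) / Real.Gamma ((d : ℝ) / 2)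

/-- Green function of `-Δ` on `ℝ^d`, `d ≥ 3`: `G_d(x) = |x|^{2-d} / ((d-2)|𝕊^{d-1}|)`. -/
def greenKernel (d : ℕ) (x : EuclideanSpace ℝ (Fin d)) : ℝ :=
  ‖x‖ ^ ((2 : ℝ) - d) / (((d : ℝ) - 2) * sphereArea d)

/-- `(−Δ)⁻¹ v`, the convolution of `v` with the Green function of `-Δ` on `ℝ^d`. -/
def invLap (d : ℕ) (v : EuclideanSpace ℝ (Fin d) → ℝ) (x : EuclideanSpace ℝ (Fin d)) : ℝ :=
  ∫ y, greenKernel d (x - y) * v y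

/-- The Aubin–Talenti (optimal Sobolev) constant
`S_d = (1/(π d (d−2))) (Γ(d)/Γ(d/2))^{2/d}`. -/
def sobolevConst (d : ℕ) : ℝ :=
  1 / (Real.pi * d * ((d : ℝ) - 2)) *
    (Real.Gamma (d : ℝ) / Real.Gamma ((d : ℝ) / 2)) ^ ((2 : ℝ) / (d : ℝ))

/-- Membership in `D^{1,2}(ℝ^d)`: a (weakly) differentiable function with
`∇u ∈ L²` and `u ∈ L^{2*}`, `2* = 2d/(d-2)`. -/
def MemD12 (d : ℕ) (u : EuclideanSpace ℝ (Fin d) → ℝ) : Prop :=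
  Differentiable ℝ u ∧
  Integrable (fun x => ‖gradient u x‖ ^ 2) ∧
  Integrable (fun x => |u x| ^ (2 * (d : ℝ) / ((d : ℝ) - 2)))

/-- The `L^p` norm of `u`, written with real exponents: `(∫ |u|^p)^{1/p}`. -/
def lpNorm' {d : ℕ} (p : ℝ) (u : EuclideanSpace ℝ (Fin d) → ℝ) : ℝ :=
  (∫ x, |u x| ^ p) ^ (1 / p)

/-- The Laplacian `Δu = ∑ ∂²u/∂x_i²`. -/
def lap (d : ℕ) (u : EuclideanSpace ℝ (Fin d) → ℝ) (x : EuclideanSpace ℝ (Fin d)) : ℝ :=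
  ∑ i : Fin d, iteratedFDeriv ℝ 2 u x ![EuclideanSpace.single i 1, EuclideanSpace.single i 1]

/-!
Write `v = u ^ ((d + 2) / (d - 2))` and `X = ∫ u ^ (2 * d / (d - 2))`. Completing the square in the
Dirichlet form gives `2 c ∫ u v ≤ c ^ 2 ‖∇u‖₂² + ∫ v (-Δ)⁻¹ v` for every `c`; the choice
`c = S_d X ^ (2 / d)` is the asserted inequality with `1` in place of `C`. By the sharp Sobolev
inequality the bracket on the right-hand side is nonnegative, so the inequality persists for every
constant at least `1`, and `1 ≤ C` because `1 + d / 2 ≤ e ^ (d / 2)`.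

The sharp Sobolev inequality is proved by mass transport (Cordero-Erausquin, Nazaret, Villani), with
the triangular Knothe map onto the Aubin-Talenti profile in place of the optimal map: only the
arithmetic-geometric mean inequality between its divergence and its Jacobian is needed. In the
completed square the Green function is regularized as the potential of a smooth mollifier, and the
potential energy of `v` is finite by the Hardy-Littlewood-Sobolev inequality.
-/

section Rearrangement

open Set Filter Topology

variable {f g : ℝ → ℝ} {a b : ℝ}

lemma continuousAt_of_strictMono_comp {α β γ : Type*} [TopologicalSpace α] [LinearOrder β]
    [TopologicalSpace β] [OrderTopology β] [LinearOrder γ] [TopologicalSpace γ] [OrderTopology γ]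
    {H : β → γ} {τ : α → β} {t : α} (hH : StrictMono H) (h : ContinuousAt (H ∘ τ) t) :
    ContinuousAt τ t :=
  tendsto_order.2 ⟨
    fun _ hc => (h.eventually (lt_mem_nhds (hH hc))).mono fun _ hs => hH.lt_iff_lt.1 hs,
    fun _ hc => (h.eventually (gt_mem_nhds (hH hc))).mono fun _ hs => hH.lt_iff_lt.1 hs⟩

lemma hasDerivAt_integral_right (hg : Continuous g) (a t : ℝ) :
    HasDerivAt (fun s => ∫ x in a..s, g x) (g t) t :=
  intervalIntegral.integral_hasDerivAt_right (hg.intervalIntegrable _ _)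
    (hg.stronglyMeasurableAtFilter _ _) hg.continuousAt

lemma hasDerivAt_integral_Iic (hf : Continuous f) (hfi : Integrable f) (t : ℝ) :
    HasDerivAt (fun s => ∫ x in Iic s, f x) (f t) t := by
  have h_split : (fun s => ∫ x in Iic s, f x)
      = fun s => (∫ x in Iic (0 : ℝ), f x) + ∫ x in (0 : ℝ)..s, f x := by
    funext s
    rw [← intervalIntegral.integral_Iic_sub_Iic hfi.integrableOn hfi.integrableOn]
    ring
  rw [h_split]
  exact (hasDerivAt_integral_right hf 0 t).const_add _

lemma strictMono_integral_right (hg : Continuous g) (hg0 : ∀ x, 0 < g x) (a : ℝ) :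
    StrictMono fun s => ∫ x in a..s, g x :=
  strictMono_of_deriv_pos fun t => by simpa [(hasDerivAt_integral_right hg a t).deriv] using hg0 t

lemma strictMono_integral_Iic (hf : Continuous f) (hfi : Integrable f) (hf0 : ∀ x, 0 < f x) :
    StrictMono fun s => ∫ x in Iic s, f x :=
  strictMono_of_deriv_pos fun t => by simpa [(hasDerivAt_integral_Iic hf hfi t).deriv] using hf0 t

lemma integral_Iic_mem_Ioo (hf : Continuous f) (hfi : Integrable f) (hf0 : ∀ x, 0 < f x) (t : ℝ) :
    ∫ x in Iic t, f x ∈ Ioo 0 (∫ x, f x) :=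
  ⟨(setIntegral_nonneg measurableSet_Iic fun x _ => (hf0 x).le).trans_lt
      (strictMono_integral_Iic hf hfi hf0 (sub_one_lt t)),
    (strictMono_integral_Iic hf hfi hf0 (lt_add_one t)).trans_le
      (setIntegral_le_integral hfi (ae_of_all _ fun x => (hf0 x).le))⟩

lemma integral_pos_of_continuous_of_pos (hf : Continuous f) (hfi : Integrable f)
    (hf0 : ∀ x, 0 < f x) : 0 < ∫ x, f x :=
  integral_pos_of_integrable_nonneg_nonzero hf hfi (fun x => (hf0 x).le) (hf0 0).ne'

lemma exists_integral_Iic_eq (hf : Continuous f) (hfi : Integrable f) {m : ℝ}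
    (hm : m ∈ Ioo 0 (∫ x, f x)) : ∃ t, ∫ x in Iic t, f x = m := by
  have h_cont : Continuous fun t => ∫ x in Iic t, f x :=
    continuous_iff_continuousAt.2 fun t => (hasDerivAt_integral_Iic hf hfi t).continuousAt
  have h_top : Tendsto (fun t => ∫ x in Iic t, f x) atTop (𝓝 (∫ x, f x)) :=
    (aecover_Iic tendsto_id).integral_tendsto_of_countably_generated hfi
  have h_bot : Tendsto (fun t => ∫ x in Iic t, f x) atBot (𝓝 0) :=
    tendsto_integral_Iic_zero tendsto_id
  obtain ⟨s, hs⟩ := (h_bot.eventually (gt_mem_nhds hm.1)).exists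
  obtain ⟨t, ht⟩ := (h_top.eventually (lt_mem_nhds hm.2)).exists
  exact mem_range_of_exists_le_of_exists_ge h_cont ⟨s, hs.le⟩ ⟨t, ht.le⟩

/-- The increasing rearrangement `τ` of the mass density `f` on `ℝ` onto the density `g` on
`(a, b)`: the proportion of `g` lying to the left of `τ t` is the proportion of `f` lying to the
left of `t`. -/
structure IsIncreasingRearrangement (f g : ℝ → ℝ) (a b : ℝ) (τ : ℝ → ℝ) : Prop where
  mem_Ioo : ∀ t, τ t ∈ Ioo a b
  integral_eq : ∀ t,
    ∫ x in a..τ t, g x = (∫ x in a..b, g x) / (∫ x, f x) * ∫ x in Iic t, f x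

lemma exists_isIncreasingRearrangement (hf : Continuous f) (hfi : Integrable f)
    (hf0 : ∀ x, 0 < f x) (hg : Continuous g) (hg0 : ∀ x, 0 < g x) (hab : a < b) :
    ∃ τ, IsIncreasingRearrangement f g a b τ := by
  have hf_mass := integral_pos_of_continuous_of_pos hf hfi hf0
  have hg_mass : 0 < ∫ x in a..b, g x :=
    intervalIntegral.intervalIntegral_pos_of_pos (hg.intervalIntegrable _ _) hg0 hab
  have h_value : ∀ t, (∫ x in a..b, g x) / (∫ x, f x) * ∫ x in Iic t, f x ∈
      Ioo (∫ x in a..a, g x) (∫ x in a..b, g x) := by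
    intro t
    obtain ⟨h_pos, h_lt⟩ := integral_Iic_mem_Ioo hf hfi hf0 t
    rw [intervalIntegral.integral_same]
    refine ⟨by positivity, ?_⟩
    rw [div_mul_eq_mul_div, div_lt_iff₀ hf_mass]
    exact mul_lt_mul_of_pos_left h_lt hg_mass
  have h_cont : Continuous fun s => ∫ x in a..s, g x :=
    continuous_iff_continuousAt.2 fun s => (hasDerivAt_integral_right hg a s).continuousAt
  choose τ hτ_mem hτ_eq using fun t =>
    intermediate_value_Ioo hab.le h_cont.continuousOn (h_value t)
  exact ⟨τ, hτ_mem, hτ_eq⟩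

namespace IsIncreasingRearrangement

variable {τ : ℝ → ℝ}

lemma hasDerivAt (h : IsIncreasingRearrangement f g a b τ) (hf : Continuous f)
    (hfi : Integrable f) (hg : Continuous g) (hg0 : ∀ x, 0 < g x) (t : ℝ) :
    HasDerivAt τ ((∫ x in a..b, g x) / (∫ x, f x) * f t / g (τ t)) t := by
  have h_comp : HasDerivAt ((fun s => ∫ x in a..s, g x) ∘ τ)
      ((∫ x in a..b, g x) / (∫ x, f x) * f t) t := by
    rw [show (fun s => ∫ x in a..s, g x) ∘ τ = _ from funext h.integral_eq]
    exact (hasDerivAt_integral_Iic hf hfi t).const_mul _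
  have h_cont : ContinuousAt τ t :=
    continuousAt_of_strictMono_comp (strictMono_integral_right hg hg0 a) h_comp.continuousAt
  exact .of_comp_left h_cont (hasDerivAt_integral_right hg a (τ t)) h_comp (hg0 _).ne' .rfl

lemma injective (h : IsIncreasingRearrangement f g a b τ) (hf : Continuous f)
    (hfi : Integrable f) (hf0 : ∀ x, 0 < f x) (hg : Continuous g) (hg0 : ∀ x, 0 < g x)
    (hab : a < b) : Function.Injective τ := by
  intro s t hst
  have h_ratio : 0 < (∫ x in a..b, g x) / ∫ x, f x :=
    div_pos (intervalIntegral.intervalIntegral_pos_of_pos (hg.intervalIntegrable _ _) hg0 hab)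
      (integral_pos_of_continuous_of_pos hf hfi hf0)
  have h_eq := h.integral_eq s
  rw [hst, h.integral_eq t] at h_eq
  exact (strictMono_integral_Iic hf hfi hf0).injective (mul_left_cancel₀ h_ratio.ne' h_eq.symm)

lemma range_eq_Ioo (h : IsIncreasingRearrangement f g a b τ) (hf : Continuous f)
    (hfi : Integrable f) (hf0 : ∀ x, 0 < f x) (hg : Continuous g) (hg0 : ∀ x, 0 < g x) :
    range τ = Ioo a b := by
  refine (range_subset_iff.2 h.mem_Ioo).antisymm fun s hs => ?_
  have hf_mass := integral_pos_of_continuous_of_pos hf hfi hf0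
  have h_mono := strictMono_integral_right hg hg0 a
  have h_left : 0 < ∫ x in a..s, g x := by simpa using h_mono hs.1
  have h_right : ∫ x in a..s, g x < ∫ x in a..b, g x := h_mono hs.2
  have hg_mass := h_left.trans h_right
  obtain ⟨t, ht⟩ := exists_integral_Iic_eq hf hfi
    (m := (∫ x in a..s, g x) / (∫ x in a..b, g x) * ∫ x, f x)
    ⟨by positivity, mul_lt_of_lt_one_left hf_mass ((div_lt_one hg_mass).2 h_right)⟩
  refine ⟨t, h_mono.injective ?_⟩
  simp only [h.integral_eq, ht]
  field_simp

lemma lintegral_comp (h : IsIncreasingRearrangement f g a b τ) (hf : Continuous f)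
    (hfi : Integrable f) (hf0 : ∀ x, 0 < f x) (hg : Continuous g) (hg0 : ∀ x, 0 < g x)
    (hab : a < b) (ψ : ℝ → ENNReal) :
    ∫⁻ t, ENNReal.ofReal (f t) * ψ (τ t) =
      ENNReal.ofReal ((∫ x, f x) / ∫ x in a..b, g x) *
        ∫⁻ s in Ioo a b, ENNReal.ofReal (g s) * ψ s := by
  have hf_mass := integral_pos_of_continuous_of_pos hf hfi hf0
  have hg_mass : 0 < ∫ x in a..b, g x :=
    intervalIntegral.intervalIntegral_pos_of_pos (hg.intervalIntegrable _ _) hg0 hab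
  rw [← h.range_eq_Ioo hf hfi hf0 hg hg0, ← image_univ,
    lintegral_image_eq_lintegral_abs_deriv_mul MeasurableSet.univ
      (fun t _ => (h.hasDerivAt hf hfi hg hg0 t).hasDerivWithinAt)
      (h.injective hf hfi hf0 hg hg0 hab).injOn,
    setLIntegral_univ, ← lintegral_const_mul' _ _ ENNReal.ofReal_ne_top]
  congr with t
  have := hf0 t
  have := hg0 (τ t)
  rw [← mul_assoc, ← mul_assoc, abs_of_pos (by positivity), ← ENNReal.ofReal_mul (by positivity),
    ← ENNReal.ofReal_mul (by positivity)]
  congr 2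
  field_simp

lemma measurable_uncurry {X : Type*} [MeasurableSpace X] {f g τ : X → ℝ → ℝ}
    (hτ : ∀ x, IsIncreasingRearrangement (f x) (g x) a b (τ x))
    (hf : Measurable (Function.uncurry f)) (hg : Measurable (Function.uncurry g))
    (hgc : ∀ x, Continuous (g x)) (hg0 : ∀ x t, 0 < g x t) : Measurable (Function.uncurry τ) := by
  have hg_int : ∀ c, Measurable fun x => ∫ s in a..c, g x s := fun c =>
    .sub hg.stronglyMeasurable.integral_prod_right'.measurable
      hg.stronglyMeasurable.integral_prod_right'.measurable
  have hf_int : Measurable fun x => ∫ t, f x t :=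
    hf.stronglyMeasurable.integral_prod_right'.measurable
  have hf_left : Measurable fun p : X × ℝ => ∫ t in Iic p.2, f p.1 t := by
    have h_ind : Measurable ({q : (X × ℝ) × ℝ | q.2 ≤ q.1.2}.indicator fun q => f q.1.1 q.2) :=
      (hf.comp (by fun_prop : Measurable fun q : (X × ℝ) × ℝ => (q.1.1, q.2))).indicator
        (measurableSet_le measurable_snd (by fun_prop))
    convert (h_ind.stronglyMeasurable.integral_prod_right' (ν := volume)).measurable using 2 with p
    exact (integral_indicator measurableSet_Iic).symm
  refine measurable_of_Iio fun c => ?_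
  have h_preimage : Function.uncurry τ ⁻¹' Iio c =
      {p | (∫ s in a..b, g p.1 s) / (∫ t, f p.1 t) * ∫ t in Iic p.2, f p.1 t <
        ∫ s in a..c, g p.1 s} := by
    ext ⟨x, t⟩
    rw [mem_ofPred_eq, ← (hτ x).integral_eq t,
      (strictMono_integral_right (hgc x) (hg0 x) a).lt_iff_lt]
    rfl
  rw [h_preimage]
  exact measurableSet_lt ((((hg_int b).comp measurable_fst).div
    (hf_int.comp measurable_fst)).mul hf_left) ((hg_int c).comp measurable_fst)

end IsIncreasingRearrangement

end Rearrangement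

section Knothe

open Set

variable {n : ℕ}

lemma lintegral_pi_insertNth {α : Fin (n + 1) → Type*} {m : ∀ i, MeasurableSpace (α i)}
    (μ : ∀ i, Measure (α i)) [∀ i, SigmaFinite (μ i)] (i : Fin (n + 1)) {φ : (∀ j, α j) → ENNReal}
    (hφ : Measurable φ) :
    ∫⁻ x, φ x ∂Measure.pi μ =
      ∫⁻ x', ∫⁻ t, φ (i.insertNth t x') ∂μ i ∂Measure.pi fun j => μ (i.succAbove j) := by
  have h_equiv := (measurePreserving_piFinSuccAbove μ i).symm
  rw [← h_equiv.lintegral_comp hφ]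
  exact lintegral_prod_symm' _ (hφ.comp h_equiv.measurable)

/-- The cube `(a, b)ⁿ`, on which the target densities of the Knothe map live. -/
def openCube (n : ℕ) (a b : ℝ) : Set (Fin n → ℝ) := univ.pi fun _ => Ioo a b

lemma restrict_openCube (n : ℕ) (a b : ℝ) :
    (volume : Measure (Fin n → ℝ)).restrict (openCube n a b) =
      Measure.pi fun _ => volume.restrict (Ioo a b) :=
  Measure.restrict_pi_pi _ _

lemma lintegral_cons {φ : (Fin (n + 1) → ℝ) → ENNReal} (hφ : Measurable φ) :
    ∫⁻ x, φ x = ∫⁻ x' : Fin n → ℝ, ∫⁻ t : ℝ, φ (Fin.cons t x') := by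
  simpa only [Fin.insertNth_zero', volume_pi] using
    lintegral_pi_insertNth (fun _ => (volume : Measure ℝ)) 0 hφ

lemma lintegral_openCube_cons {a b : ℝ} {φ : (Fin (n + 1) → ℝ) → ENNReal} (hφ : Measurable φ) :
    ∫⁻ x in openCube (n + 1) a b, φ x =
      ∫⁻ x' in openCube n a b, ∫⁻ t in Ioo a b, φ (Fin.cons t x') := by
  simpa only [Fin.insertNth_zero', restrict_openCube] using
    lintegral_pi_insertNth (fun _ => (volume : Measure ℝ).restrict (Ioo a b)) 0 hφ

lemma continuous_finCons {X : Type*} [TopologicalSpace X] {f : X → ℝ} {g : X → Fin n → ℝ}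
    (hf : Continuous f) (hg : Continuous g) :
    Continuous fun x => (Fin.cons (f x) (g x) : Fin (n + 1) → ℝ) :=
  Continuous.finCons (A := fun _ => ℝ) hf hg

lemma measurable_finCons {X : Type*} [MeasurableSpace X] {f : X → ℝ} {g : X → Fin n → ℝ}
    (hf : Measurable f) (hg : Measurable g) :
    Measurable fun x => (Fin.cons (f x) (g x) : Fin (n + 1) → ℝ) :=
  (continuous_finCons continuous_fst continuous_snd).measurable.comp (hf.prodMk hg)

lemma continuous_finCons_left (x : Fin n → ℝ) :
    Continuous fun t : ℝ => (Fin.cons t x : Fin (n + 1) → ℝ) :=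
  continuous_finCons continuous_id continuous_const

lemma measurable_finTail : Measurable (Fin.tail : (Fin (n + 1) → ℝ) → Fin n → ℝ) :=
  measurable_pi_lambda _ fun i => measurable_pi_apply i.succ

/-- A continuous positive function on `ℝⁿ` with a Gaussian upper bound: the class of source
densities of the Knothe map, stable under powers and marginals. -/
structure GaussianDominated (f : (Fin n → ℝ) → ℝ) : Prop where
  continuous : Continuous f
  pos : ∀ x, 0 < f x
  bound : ∃ C b : ℝ, 0 < b ∧ ∀ x, f x ≤ C * exp (-b * ∑ i, x i ^ 2)

lemma integrable_exp_neg_mul_sum_sq {b : ℝ} (hb : 0 < b) :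
    Integrable fun x : Fin n → ℝ => exp (-b * ∑ i, x i ^ 2) := by
  simp only [Finset.mul_sum, exp_sum]
  exact Integrable.fintype_prod (f := fun _ t => exp (-b * t ^ 2)) (μ := fun _ => volume)
    fun _ => integrable_exp_neg_mul_sq hb

namespace GaussianDominated

lemma exists_nonneg_bound {f : (Fin n → ℝ) → ℝ} (hf : GaussianDominated f) :
    ∃ C b : ℝ, 0 ≤ C ∧ 0 < b ∧ ∀ x, f x ≤ C * exp (-b * ∑ i, x i ^ 2) := by
  obtain ⟨C, b, hb, hC⟩ := hf.bound
  exact ⟨C, b, by simpa using (hf.pos 0).le.trans (hC 0), hb, hC⟩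

lemma rpow {f : (Fin n → ℝ) → ℝ} (hf : GaussianDominated f) {p : ℝ} (hp : 0 < p) :
    GaussianDominated fun x => f x ^ p := by
  obtain ⟨C, b, hC0, hb, hC⟩ := hf.exists_nonneg_bound
  refine ⟨hf.continuous.rpow_const fun x => .inl (hf.pos x).ne',
    fun x => rpow_pos_of_pos (hf.pos x) p, C ^ p, b * p, by positivity, fun x => ?_⟩
  calc f x ^ p ≤ (C * exp (-b * ∑ i, x i ^ 2)) ^ p := rpow_le_rpow (hf.pos x).le (hC x) hp.le
    _ = C ^ p * exp (-(b * p) * ∑ i, x i ^ 2) := by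
      rw [mul_rpow hC0 (exp_nonneg _), ← exp_mul]
      ring_nf

lemma integrable {f : (Fin n → ℝ) → ℝ} (hf : GaussianDominated f) : Integrable f := by
  obtain ⟨C, b, hb, hC⟩ := hf.bound
  refine ((integrable_exp_neg_mul_sum_sq hb).const_mul C).mono'
    hf.continuous.aestronglyMeasurable (ae_of_all _ fun x => ?_)
  rw [norm_of_nonneg (hf.pos x).le]
  exact hC x

lemma exists_slice_bound {f : (Fin (n + 1) → ℝ) → ℝ} (hf : GaussianDominated f) :
    ∃ C b : ℝ, 0 ≤ C ∧ 0 < b ∧ ∀ (i : Fin (n + 1)) t (x : Fin n → ℝ),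
      f (i.insertNth t x) ≤ exp (-b * t ^ 2) * (C * exp (-b * ∑ j, x j ^ 2)) := by
  obtain ⟨C, b, hC0, hb, hC⟩ := hf.exists_nonneg_bound
  refine ⟨C, b, hC0, hb, fun i t x => (hC _).trans_eq ?_⟩
  rw [Fin.sum_univ_succAbove _ i]
  simp only [Fin.insertNth_apply_same, Fin.insertNth_apply_succAbove, mul_add, exp_add]
  ring

lemma slice_integrable {f : (Fin (n + 1) → ℝ) → ℝ} (hf : GaussianDominated f) (x : Fin n → ℝ) :
    Integrable fun t : ℝ => f (Fin.cons t x) := by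
  obtain ⟨C, b, -, hb, hC⟩ := hf.exists_slice_bound
  refine ((integrable_exp_neg_mul_sq hb).mul_const (C * exp (-b * ∑ j, x j ^ 2))).mono'
    (hf.continuous.comp (continuous_finCons_left x)).aestronglyMeasurable (ae_of_all _ fun t => ?_)
  rw [norm_of_nonneg (hf.pos _).le, ← Fin.insertNth_zero']
  exact hC 0 t x

lemma marginal {f : (Fin (n + 1) → ℝ) → ℝ} (hf : GaussianDominated f) :
    GaussianDominated fun x : Fin n → ℝ => ∫ t : ℝ, f (Fin.cons t x) := by
  obtain ⟨C, b, hC0, hb, hC⟩ := hf.exists_slice_bound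
  replace hC : ∀ t (x : Fin n → ℝ),
      f (Fin.cons t x) ≤ exp (-b * t ^ 2) * (C * exp (-b * ∑ j, x j ^ 2)) := fun t x => by
    rw [← Fin.insertNth_zero']
    exact hC 0 t x
  refine ⟨continuous_of_dominated (bound := fun t => exp (-b * t ^ 2) * C)
    (fun x => (hf.slice_integrable x).1) (fun x => ae_of_all _ fun t => ?_)
    ((integrable_exp_neg_mul_sq hb).mul_const _)
    (ae_of_all _ fun t => hf.continuous.comp (continuous_finCons continuous_const continuous_id)),
    fun x => integral_pos_of_continuous_of_pos (hf.continuous.comp (continuous_finCons_left x))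
      (hf.slice_integrable x) fun t => hf.pos _,
    (∫ t, exp (-b * t ^ 2)) * C, b, hb, fun x => ?_⟩
  · rw [norm_of_nonneg (hf.pos _).le]
    refine (hC t x).trans ?_
    gcongr
    exact mul_le_of_le_one_right hC0 (exp_le_one_iff.2 (by
      rw [neg_mul, neg_nonpos]
      positivity))
  · rw [mul_assoc, ← integral_mul_const]
    exact integral_mono (hf.slice_integrable x) ((integrable_exp_neg_mul_sq hb).mul_const _)
      fun t => hC t x

end GaussianDominated

variable {a b : ℝ}

/-- A Knothe map `T` from the density `F` on `ℝⁿ` to the density `G` on the cube `(a, b)ⁿ`. The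
`i`-th entry of `D x` is the diagonal entry `∂ᵢTᵢ(x)` of the Jacobian matrix; since the matrix is
triangular, `prod_deriv_mul` is the Monge–Ampère equation `det DT · G ∘ T = F`. -/
structure IsKnotheMap (F G : (Fin n → ℝ) → ℝ) (a b : ℝ) (T D : (Fin n → ℝ) → Fin n → ℝ) :
    Prop where
  measurable : Measurable T
  measurable_deriv : Measurable D
  mem_Ioo : ∀ x i, T x i ∈ Ioo a b
  hasDerivAt : ∀ x i, HasDerivAt (fun t => T (Function.update x i t) i) (D x i) (x i)
  deriv_pos : ∀ x i, 0 < D x i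
  prod_deriv_mul : ∀ x, (∏ i, D x i) * G (T x) = F x
  lintegral_comp : ∀ ψ : (Fin n → ℝ) → ENNReal, Measurable ψ →
    ∫⁻ x, ENNReal.ofReal (F x) * ψ (T x) = ∫⁻ y in openCube n a b, ENNReal.ofReal (G y) * ψ y

lemma exists_isKnotheMap_zero {F G : (Fin 0 → ℝ) → ℝ} (hF : ∀ x, 0 < F x) (hG : ∀ x, 0 < G x)
    (h_mass : ∫⁻ x, ENNReal.ofReal (F x) = ∫⁻ y in openCube 0 a b, ENNReal.ofReal (G y)) :
    ∃ T D, IsKnotheMap F G a b T D := by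
  have h_cube : openCube 0 a b = univ := by simp [openCube, pi_def]
  have h_eq : F = G := by
    funext x
    rw [← ENNReal.ofReal_eq_ofReal_iff (hF x).le (hG x).le]
    simpa [h_cube, lintegral_unique, Unique.eq_default x, volume_pi,
      Measure.pi_of_empty] using h_mass
  exact ⟨id, id, measurable_id, measurable_id, fun _ i => i.elim0, fun _ i => i.elim0,
    fun _ i => i.elim0, fun x => by simp [h_eq], fun ψ _ => by simp [h_cube, h_eq]⟩

/-- The marginal of a density on `(a, b) × ℝⁿ` obtained by integrating out the first coordinate. -/
def intervalMarginal (G : (Fin (n + 1) → ℝ) → ℝ) (a b : ℝ) (y : Fin n → ℝ) : ℝ :=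
  ∫ s in a..b, G (Fin.cons s y)

section IntervalMarginal

variable {G : (Fin (n + 1) → ℝ) → ℝ}

lemma continuous_intervalMarginal (hG : Continuous G) : Continuous (intervalMarginal G a b) :=
  intervalIntegral.continuous_parametric_intervalIntegral_of_continuous'
    (f := fun y s => G (Fin.cons s y))
    (hG.comp (continuous_finCons continuous_snd continuous_fst)) a b

lemma intervalMarginal_pos (hG : Continuous G) (hG0 : ∀ x, 0 < G x) (hab : a < b)
    (y : Fin n → ℝ) : 0 < intervalMarginal G a b y :=
  intervalIntegral.intervalIntegral_pos_of_pos
    ((hG.comp (continuous_finCons_left y)).intervalIntegrable _ _) (fun _ => hG0 _) hab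

lemma ofReal_intervalMarginal (hG : Continuous G) (hG0 : ∀ x, 0 < G x) (hab : a < b)
    (y : Fin n → ℝ) :
    ENNReal.ofReal (intervalMarginal G a b y) =
      ∫⁻ s in Ioo a b, ENNReal.ofReal (G (Fin.cons s y)) := by
  rw [intervalMarginal, intervalIntegral.integral_of_le hab.le, integral_Ioc_eq_integral_Ioo]
  exact ofReal_integral_eq_lintegral_ofReal
    (((hG.comp (continuous_finCons_left y)).integrableOn_Icc).mono_set Ioo_subset_Icc_self)
    (ae_of_all _ fun _ => (hG0 _).le)

end IntervalMarginal

section Succ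

variable {F G : (Fin (n + 1) → ℝ) → ℝ} {T' D' : (Fin n → ℝ) → Fin n → ℝ}
  {τ : (Fin n → ℝ) → ℝ → ℝ}

/-- The map that applies `T'` to the last `n` coordinates and, on the fibre over them, the
one-dimensional map `τ` to the first coordinate. -/
def knotheCons (τ : (Fin n → ℝ) → ℝ → ℝ) (T' : (Fin n → ℝ) → Fin n → ℝ) (x : Fin (n + 1) → ℝ) :
    Fin (n + 1) → ℝ :=
  Fin.cons (τ (Fin.tail x) (x 0)) (T' (Fin.tail x))

/-- The diagonal of the Jacobian matrix of `knotheCons τ T'` when `τ` rearranges the fibres of `F`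
onto those of `G` and `D'` is the diagonal for `T'`. -/
def knotheConsDeriv (F G : (Fin (n + 1) → ℝ) → ℝ) (a b : ℝ) (τ : (Fin n → ℝ) → ℝ → ℝ)
    (T' D' : (Fin n → ℝ) → Fin n → ℝ) (x : Fin (n + 1) → ℝ) : Fin (n + 1) → ℝ :=
  Fin.cons (intervalMarginal G a b (T' (Fin.tail x)) / (∫ t, F (Fin.cons t (Fin.tail x))) * F x /
    G (knotheCons τ T' x)) (D' (Fin.tail x))

/-- `τ` rearranges each fibre of `F` onto the corresponding fibre of `G`. -/
def IsFiberRearrangement (F G : (Fin (n + 1) → ℝ) → ℝ) (a b : ℝ)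
    (T' : (Fin n → ℝ) → Fin n → ℝ) (τ : (Fin n → ℝ) → ℝ → ℝ) : Prop :=
  ∀ x, IsIncreasingRearrangement (fun t => F (Fin.cons t x)) (fun s => G (Fin.cons s (T' x)))
    a b (τ x)

lemma measurable_knotheCons (hF : Continuous F) (hG : Continuous G) (hG0 : ∀ x, 0 < G x)
    (hT' : Measurable T') (hτ : IsFiberRearrangement F G a b T' τ) :
    Measurable (knotheCons τ T') := by
  have hτ_meas : Measurable (Function.uncurry τ) :=
    IsIncreasingRearrangement.measurable_uncurry hτ
      (hF.measurable.comp (measurable_finCons measurable_snd measurable_fst))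
      (hG.measurable.comp (measurable_finCons measurable_snd (hT'.comp measurable_fst)))
      (fun x => hG.comp (continuous_finCons_left _)) (fun _ _ => hG0 _)
  exact measurable_finCons (hτ_meas.comp (measurable_finTail.prodMk (measurable_pi_apply 0)))
    (hT'.comp measurable_finTail)

lemma measurable_knotheConsDeriv (hF : GaussianDominated F) (hG : Continuous G)
    (hG0 : ∀ x, 0 < G x) (hT' : Measurable T') (hD' : Measurable D')
    (hτ : IsFiberRearrangement F G a b T' τ) : Measurable (knotheConsDeriv F G a b τ T' D') :=
  measurable_finCons
    (((((continuous_intervalMarginal hG).measurable.comp (hT'.comp measurable_finTail)).div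
      (hF.marginal.continuous.measurable.comp measurable_finTail)).mul hF.continuous.measurable).div
      (hG.measurable.comp (measurable_knotheCons hF.continuous hG hG0 hT' hτ)))
    (hD'.comp measurable_finTail)

lemma hasDerivAt_knotheCons (hF : GaussianDominated F) (hG : Continuous G) (hG0 : ∀ x, 0 < G x)
    (hτ : IsFiberRearrangement F G a b T' τ)
    (hT' : ∀ x i, HasDerivAt (fun t => T' (Function.update x i t) i) (D' x i) (x i))
    (x : Fin (n + 1) → ℝ) (i : Fin (n + 1)) :
    HasDerivAt (fun t => knotheCons τ T' (Function.update x i t) i)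
      (knotheConsDeriv F G a b τ T' D' x i) (x i) := by
  cases i using Fin.cases with
  | zero =>
    simpa [knotheCons, knotheConsDeriv, intervalMarginal] using
      (hτ (Fin.tail x)).hasDerivAt (hF.continuous.comp (continuous_finCons_left _))
        (hF.slice_integrable _) (hG.comp (continuous_finCons_left _)) (fun _ => hG0 _) (x 0)
  | succ j =>
    simpa only [knotheCons, knotheConsDeriv, Fin.cons_succ, Fin.tail_update_succ, Fin.tail] using
      hT' (Fin.tail x) j

lemma knotheConsDeriv_pos (hF : GaussianDominated F) (hG : Continuous G) (hG0 : ∀ x, 0 < G x)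
    (hab : a < b) (hD' : ∀ x i, 0 < D' x i) (x : Fin (n + 1) → ℝ) (i : Fin (n + 1)) :
    0 < knotheConsDeriv F G a b τ T' D' x i := by
  cases i using Fin.cases with
  | zero =>
    exact div_pos (mul_pos (div_pos (intervalMarginal_pos hG hG0 hab _) (hF.marginal.pos _))
      (hF.pos x)) (hG0 _)
  | succ j => exact hD' (Fin.tail x) j

lemma prod_knotheConsDeriv_mul (hF : GaussianDominated F) (hG : Continuous G)
    (hG0 : ∀ x, 0 < G x) (hab : a < b)
    (h_jac : ∀ x, (∏ i, D' x i) * intervalMarginal G a b (T' x) = ∫ t, F (Fin.cons t x))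
    (x : Fin (n + 1) → ℝ) :
    (∏ i, knotheConsDeriv F G a b τ T' D' x i) * G (knotheCons τ T' x) = F x := by
  have hF' := (hF.marginal.pos (Fin.tail x)).ne'
  have hG' := (intervalMarginal_pos hG hG0 hab (T' (Fin.tail x))).ne'
  have hGT := (hG0 (knotheCons τ T' x)).ne'
  simp only [Fin.prod_univ_succ, knotheConsDeriv, Fin.cons_zero, Fin.cons_succ]
  rw [← h_jac] at hF' ⊢
  have hD' := left_ne_zero_of_mul hF'
  field_simp

lemma lintegral_fiber_knotheCons (hF : GaussianDominated F) (hG : Continuous G)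
    (hG0 : ∀ x, 0 < G x) (hab : a < b) (hτ : IsFiberRearrangement F G a b T' τ)
    (ψ : (Fin (n + 1) → ℝ) → ENNReal) (x : Fin n → ℝ) :
    ∫⁻ t, ENNReal.ofReal (F (Fin.cons t x)) * ψ (knotheCons τ T' (Fin.cons t x)) =
      ENNReal.ofReal (∫ t, F (Fin.cons t x)) *
        ((ENNReal.ofReal (intervalMarginal G a b (T' x)))⁻¹ *
          ∫⁻ s in Ioo a b, ENNReal.ofReal (G (Fin.cons s (T' x))) * ψ (Fin.cons s (T' x))) := by
  rw [← mul_assoc, ← ENNReal.ofReal_inv_of_pos (intervalMarginal_pos hG hG0 hab _),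
    ← ENNReal.ofReal_mul (hF.marginal.pos x).le, ← div_eq_mul_inv]
  exact (hτ x).lintegral_comp (hF.continuous.comp (continuous_finCons_left x))
    (hF.slice_integrable x) (fun _ => hF.pos _) (hG.comp (continuous_finCons_left _))
    (fun _ => hG0 _) hab fun s => ψ (Fin.cons s (T' x))

lemma lintegral_comp_knotheCons (hF : GaussianDominated F) (hG : Continuous G)
    (hG0 : ∀ x, 0 < G x) (hab : a < b) (hτ : IsFiberRearrangement F G a b T' τ)
    (hT' : IsKnotheMap (fun x => ∫ t, F (Fin.cons t x)) (intervalMarginal G a b) a b T' D')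
    {ψ : (Fin (n + 1) → ℝ) → ENNReal} (hψ : Measurable ψ) :
    ∫⁻ x, ENNReal.ofReal (F x) * ψ (knotheCons τ T' x) =
      ∫⁻ y in openCube (n + 1) a b, ENNReal.ofReal (G y) * ψ y := by
  have hGψ : Measurable fun y => ENNReal.ofReal (G y) * ψ y :=
    hG.measurable.ennreal_ofReal.mul hψ
  have h_fiber : Measurable fun y : Fin n → ℝ => (ENNReal.ofReal (intervalMarginal G a b y))⁻¹ *
      ∫⁻ s in Ioo a b, ENNReal.ofReal (G (Fin.cons s y)) * ψ (Fin.cons s y) :=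
    (continuous_intervalMarginal hG).measurable.ennreal_ofReal.inv.mul
      (hGψ.comp (measurable_finCons measurable_snd measurable_fst)).lintegral_prod_right'
  have hFψ : Measurable fun x => ENNReal.ofReal (F x) * ψ (knotheCons τ T' x) :=
    hF.continuous.measurable.ennreal_ofReal.mul
      (hψ.comp (measurable_knotheCons hF.continuous hG hG0 hT'.measurable hτ))
  rw [lintegral_cons hFψ, lintegral_openCube_cons hGψ]
  simp only [lintegral_fiber_knotheCons hF hG hG0 hab hτ]
  rw [hT'.lintegral_comp _ h_fiber]
  refine lintegral_congr fun y => ?_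
  rw [← mul_assoc, ENNReal.mul_inv_cancel (by simpa using intervalMarginal_pos hG hG0 hab y)
    ENNReal.ofReal_ne_top, one_mul]

lemma IsKnotheMap.cons (hF : GaussianDominated F) (hG : Continuous G) (hG0 : ∀ x, 0 < G x)
    (hab : a < b) (hτ : IsFiberRearrangement F G a b T' τ)
    (hT' : IsKnotheMap (fun x => ∫ t, F (Fin.cons t x)) (intervalMarginal G a b) a b T' D') :
    IsKnotheMap F G a b (knotheCons τ T') (knotheConsDeriv F G a b τ T' D') where
  measurable := measurable_knotheCons hF.continuous hG hG0 hT'.measurable hτ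
  measurable_deriv := measurable_knotheConsDeriv hF hG hG0 hT'.measurable hT'.measurable_deriv hτ
  mem_Ioo x i := by
    cases i using Fin.cases with
    | zero => exact (hτ _).mem_Ioo _
    | succ j => exact hT'.mem_Ioo _ j
  hasDerivAt := hasDerivAt_knotheCons hF hG hG0 hτ hT'.hasDerivAt
  deriv_pos := knotheConsDeriv_pos hF hG hG0 hab hT'.deriv_pos
  prod_deriv_mul := prod_knotheConsDeriv_mul hF hG hG0 hab hT'.prod_deriv_mul
  lintegral_comp _ := lintegral_comp_knotheCons hF hG hG0 hab hτ hT'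

end Succ

theorem exists_isKnotheMap (hab : a < b) : ∀ {n : ℕ} {F G : (Fin n → ℝ) → ℝ},
    GaussianDominated F → Continuous G → (∀ x, 0 < G x) →
    ∫⁻ x, ENNReal.ofReal (F x) = ∫⁻ y in openCube n a b, ENNReal.ofReal (G y) →
    ∃ T D, IsKnotheMap F G a b T D
  | 0, _, _, hF, _, hG0, h_mass => exists_isKnotheMap_zero hF.pos hG0 h_mass
  | n + 1, F, G, hF, hG, hG0, h_mass => by
    have h_marginal_mass : ∫⁻ x : Fin n → ℝ, ENNReal.ofReal (∫ t, F (Fin.cons t x)) =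
        ∫⁻ y in openCube n a b, ENNReal.ofReal (intervalMarginal G a b y) := by
      simp only [ofReal_intervalMarginal hG hG0 hab]
      rw [← lintegral_openCube_cons hG.measurable.ennreal_ofReal, ← h_mass,
        lintegral_cons hF.continuous.measurable.ennreal_ofReal]
      exact lintegral_congr fun x => ofReal_integral_eq_lintegral_ofReal (hF.slice_integrable x)
        (ae_of_all _ fun _ => (hF.pos _).le)
    obtain ⟨T', D', hT'⟩ := exists_isKnotheMap hab hF.marginal (continuous_intervalMarginal hG)
      (intervalMarginal_pos hG hG0 hab) h_marginal_mass
    choose τ hτ using fun x : Fin n → ℝ => exists_isIncreasingRearrangement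
      (hF.continuous.comp (continuous_finCons_left x)) (hF.slice_integrable x) (fun _ => hF.pos _)
      (hG.comp (continuous_finCons_left (T' x))) (fun _ => hG0 _) hab
    exact ⟨_, _, hT'.cons hF hG hG0 hab hτ⟩

end Knothe

section Transport

open Set

variable {n : ℕ} {a b : ℝ}

lemma hasLineDerivAt_single_of_update {ι : Type*} [DecidableEq ι] {h : (ι → ℝ) → ℝ}
    {i : ι} {x : ι → ℝ} {h' : ℝ}
    (hh : HasDerivAt (fun t => h (Function.update x i t)) h' (x i)) :
    HasLineDerivAt ℝ h h' x (Pi.single i 1) := by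
  have h_shift : HasDerivAt (fun t => h (Function.update x i (x i + t))) h' 0 :=
    HasDerivAt.comp_const_add (x i) 0 (by simpa using hh)
  refine h_shift.congr_of_eventuallyEq (.of_forall fun t => congrArg h ?_)
  ext j
  obtain rfl | hj := eq_or_ne j i
  · simp
  · simp [hj]

lemma lintegral_deriv_le_of_mem_Ioo {τ τ' : ℝ → ℝ} (hτ : ∀ t, HasDerivAt τ (τ' t) t)
    (h_nonneg : ∀ t, 0 ≤ τ' t) (h_mem : ∀ t, τ t ∈ Ioo a b) :
    ∫⁻ t, ENNReal.ofReal (τ' t) ≤ ENNReal.ofReal (b - a) := by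
  have h_mono : Monotone τ := monotone_of_deriv_nonneg (fun t => (hτ t).differentiableAt)
    fun t => (hτ t).deriv ▸ h_nonneg t
  rw [← setLIntegral_univ, lintegral_deriv_eq_volume_image_of_monotoneOn .univ
    (fun t _ => (hτ t).hasDerivWithinAt) (h_mono.monotoneOn _), ← Real.volume_Ioo]
  exact measure_mono (image_subset_iff.2 fun t _ => h_mem t)

-- On each line in the direction `i` the integral of `h'` is at most `b - a`.
lemma GaussianDominated.integrable_mul_deriv {g : (Fin n → ℝ) → ℝ} (hg : GaussianDominated g)
    {h h' : (Fin n → ℝ) → ℝ} (i : Fin n) (h_meas : Measurable h') (h_mem : ∀ x, h x ∈ Ioo a b)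
    (hh : ∀ x, HasDerivAt (fun t => h (Function.update x i t)) (h' x) (x i))
    (h_pos : ∀ x, 0 < h' x) : Integrable fun x => g x * h' x := by
  obtain _ | m := n
  · exact i.elim0
  obtain ⟨C, β, hC0, hβ, hC⟩ := hg.exists_slice_bound
  have h_prod_meas : Measurable fun x => g x * h' x := hg.continuous.measurable.mul h_meas
  have h_deriv : ∀ (x : Fin m → ℝ) t, HasDerivAt (fun t => h (i.insertNth t x))
      (h' (i.insertNth t x)) t := fun x t => by
    simpa only [Fin.update_insertNth, Fin.insertNth_apply_same] using hh (i.insertNth t x)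
  have h_line : ∀ x : Fin m → ℝ,
      ∫⁻ t : ℝ, ENNReal.ofReal (g (i.insertNth t x) * h' (i.insertNth t x)) ≤
        ENNReal.ofReal (C * exp (-β * ∑ j, x j ^ 2)) * ENNReal.ofReal (b - a) := fun x => by
    refine le_trans ?_ (mul_le_mul_right (lintegral_deriv_le_of_mem_Ioo (h_deriv x)
      (fun _ => (h_pos _).le) (fun _ => h_mem _)) _)
    rw [← lintegral_const_mul' _ _ ENNReal.ofReal_ne_top]
    refine lintegral_mono fun t => ?_
    rw [← ENNReal.ofReal_mul (by positivity)]
    have h_gauss : exp (-β * t ^ 2) ≤ 1 := exp_le_one_iff.2 (by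
      rw [neg_mul, neg_nonpos]
      positivity)
    exact ENNReal.ofReal_le_ofReal (mul_le_mul_of_nonneg_right
      ((hC i t x).trans (mul_le_of_le_one_left (by positivity) h_gauss)) (h_pos _).le)
  refine ⟨h_prod_meas.aestronglyMeasurable, ?_⟩
  rw [hasFiniteIntegral_iff_ofReal (ae_of_all _ fun x => (mul_pos (hg.pos x) (h_pos x)).le),
    volume_pi, lintegral_pi_insertNth _ i h_prod_meas.ennreal_ofReal]
  refine (lintegral_mono h_line).trans_lt ?_
  rw [lintegral_mul_const' _ _ ENNReal.ofReal_ne_top, ← volume_pi,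
    ← ofReal_integral_eq_lintegral_ofReal ((integrable_exp_neg_mul_sum_sq hβ).const_mul C)
      (ae_of_all _ fun x => by positivity)]
  exact ENNReal.mul_lt_top ENNReal.ofReal_lt_top ENNReal.ofReal_lt_top

lemma integrableOn_openCube {g : (Fin n → ℝ) → ℝ} (hg : Continuous g) :
    IntegrableOn g (openCube n a b) :=
  (hg.continuousOn.integrableOn_compact (isCompact_univ_pi fun _ => isCompact_Icc)).mono_set
    (pi_mono fun _ _ => Ioo_subset_Icc_self)

namespace IsKnotheMap

variable {F G : (Fin n → ℝ) → ℝ} {T D : (Fin n → ℝ) → Fin n → ℝ}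

lemma measurable_apply (hT : IsKnotheMap F G a b T D) (i : Fin n) : Measurable fun x => T x i :=
  (measurable_pi_apply i).comp hT.measurable

lemma measurable_deriv_apply (hT : IsKnotheMap F G a b T D) (i : Fin n) :
    Measurable fun x => D x i :=
  (measurable_pi_apply i).comp hT.measurable_deriv

lemma abs_apply_le (hT : IsKnotheMap F G a b T D) (x : Fin n → ℝ) (i : Fin n) :
    |T x i| ≤ max |a| |b| :=
  abs_le_max_abs_abs (hT.mem_Ioo x i).1.le (hT.mem_Ioo x i).2.le

lemma integral_comp (hT : IsKnotheMap F G a b T D) (hF : Measurable F) (hF0 : ∀ x, 0 < F x)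
    (hG : Continuous G) (hG0 : ∀ x, 0 < G x) {ψ : (Fin n → ℝ) → ℝ} (hψ : Measurable ψ)
    (hψ0 : ∀ y, 0 ≤ ψ y) :
    ∫ x, F x * ψ (T x) = ∫ y in openCube n a b, G y * ψ y := by
  rw [integral_eq_lintegral_of_nonneg_ae (ae_of_all _ fun x => mul_nonneg (hF0 x).le (hψ0 _))
      (hF.mul (hψ.comp hT.measurable)).aestronglyMeasurable,
    integral_eq_lintegral_of_nonneg_ae (ae_of_all _ fun y => mul_nonneg (hG0 y).le (hψ0 _))
      (hG.measurable.mul hψ).aestronglyMeasurable]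
  simp only [ENNReal.ofReal_mul (hF0 _).le, ENNReal.ofReal_mul (hG0 _).le]
  rw [hT.lintegral_comp _ hψ.ennreal_ofReal]

-- The arithmetic-geometric mean inequality for the diagonal of the Jacobian matrix.
lemma mul_rpow_le (hT : IsKnotheMap F G a b T D) (hn : n ≠ 0) (hF0 : ∀ x, 0 < F x)
    (hG0 : ∀ x, 0 < G x) (x : Fin n → ℝ) :
    F x * G (T x) ^ (-(1 / n : ℝ)) ≤ 1 / n * ∑ i, F x ^ (1 - 1 / n : ℝ) * D x i := by
  have h_prod : 0 ≤ ∏ i, D x i := Finset.prod_nonneg fun i _ => (hT.deriv_pos x i).le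
  have h_mean : (∏ i, D x i) ^ (1 / n : ℝ) ≤ ∑ i, (1 / n : ℝ) * D x i := by
    rw [← finsetProd_rpow _ _ fun i _ => (hT.deriv_pos x i).le]
    exact geom_mean_le_arith_mean_weighted _ (fun _ => (1 / n : ℝ)) _ (fun _ _ => by positivity)
      (by simp [hn]) fun i _ => (hT.deriv_pos x i).le
  have h_jac : F x * G (T x) ^ (-(1 / n : ℝ)) =
      F x ^ (1 - 1 / n : ℝ) * (∏ i, D x i) ^ (1 / n : ℝ) := by
    have h_root : F x ^ (1 / n : ℝ) = (∏ i, D x i) ^ (1 / n : ℝ) * G (T x) ^ (1 / n : ℝ) := by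
      rw [← hT.prod_deriv_mul x, mul_rpow h_prod (hG0 _).le]
    have h_cancel : G (T x) ^ (1 / n : ℝ) * G (T x) ^ (-(1 / n : ℝ)) = 1 := by
      rw [← rpow_add (hG0 _), add_neg_cancel, rpow_zero]
    calc F x * G (T x) ^ (-(1 / n : ℝ))
        = F x ^ (1 - 1 / n : ℝ) * F x ^ (1 / n : ℝ) * G (T x) ^ (-(1 / n : ℝ)) := by
          rw [← rpow_add (hF0 x), sub_add_cancel, rpow_one]
      _ = F x ^ (1 - 1 / n : ℝ) * (∏ i, D x i) ^ (1 / n : ℝ) *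
            (G (T x) ^ (1 / n : ℝ) * G (T x) ^ (-(1 / n : ℝ))) := by
          rw [h_root]; ring
      _ = F x ^ (1 - 1 / n : ℝ) * (∏ i, D x i) ^ (1 / n : ℝ) := by rw [h_cancel, mul_one]
  rw [h_jac, ← Finset.mul_sum, mul_left_comm, Finset.mul_sum]
  exact mul_le_mul_of_nonneg_left h_mean (rpow_nonneg (hF0 x).le _)

lemma integral_rpow_le (hT : IsKnotheMap F G a b T D) (hn : n ≠ 0) (hF : GaussianDominated F)
    (hG : Continuous G) (hG0 : ∀ x, 0 < G x)
    (h_int : ∀ i, Integrable fun x => F x ^ (1 - 1 / n : ℝ) * D x i) :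
    ∫ y in openCube n a b, G y ^ (1 - 1 / n : ℝ) ≤
      1 / n * ∑ i, ∫ x, F x ^ (1 - 1 / n : ℝ) * D x i := by
  have hG_cont : Continuous fun y => G y ^ (-(1 / n : ℝ)) :=
    hG.rpow_const fun x => .inl (hG0 x).ne'
  rw [← integral_finsetSum _ fun i _ => h_int i, ← integral_const_mul]
  calc ∫ y in openCube n a b, G y ^ (1 - 1 / n : ℝ)
      = ∫ y in openCube n a b, G y * G y ^ (-(1 / n : ℝ)) := by
        simp only [sub_eq_add_neg, rpow_add (hG0 _), rpow_one]
    _ = ∫ x, F x * G (T x) ^ (-(1 / n : ℝ)) :=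
        (hT.integral_comp hF.continuous.measurable hF.pos hG hG0 hG_cont.measurable
          fun y => rpow_nonneg (hG0 y).le _).symm
    _ ≤ ∫ x, 1 / n * ∑ i, F x ^ (1 - 1 / n : ℝ) * D x i :=
        integral_mono_of_nonneg
          (ae_of_all _ fun x => mul_nonneg (hF.pos x).le (rpow_nonneg (hG0 _).le _))
          ((integrable_finsetSum _ fun i _ => h_int i).const_mul _)
          (ae_of_all _ (hT.mul_rpow_le hn hF.pos hG0))

section Power

variable {f : (Fin n → ℝ) → ℝ} {p : ℝ}

lemma integrable_rpow_mul_deriv (hT : IsKnotheMap F G a b T D) (hf : GaussianDominated f)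
    (hp : 0 < p) (i : Fin n) : Integrable fun x => f x ^ p * D x i :=
  (hf.rpow hp).integrable_mul_deriv i (hT.measurable_deriv_apply i) (fun x => hT.mem_Ioo x i)
    (fun x => hT.hasDerivAt x i) (fun x => hT.deriv_pos x i)

lemma integrable_rpow_mul_apply (hT : IsKnotheMap F G a b T D) (hf : GaussianDominated f)
    (hp : 0 < p) (i : Fin n) : Integrable fun x => f x ^ p * T x i :=
  (hf.rpow hp).integrable.mul_bdd (hT.measurable_apply i).aestronglyMeasurable
    (ae_of_all _ fun x => hT.abs_apply_le x i)

lemma integral_rpow_mul_deriv (hT : IsKnotheMap F G a b T D) (hf : GaussianDominated f)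
    (hfd : Differentiable ℝ f) (hp : 0 < p) (i : Fin n)
    (h_int : Integrable fun x => f x ^ (p - 1) * fderiv ℝ f x (Pi.single i 1) * T x i) :
    ∫ x, f x ^ p * D x i =
      -(p * ∫ x, f x ^ (p - 1) * fderiv ℝ f x (Pi.single i 1) * T x i) := by
  have h_deriv : ∀ x, HasLineDerivAt ℝ (fun x => f x ^ p)
      (p * (f x ^ (p - 1) * fderiv ℝ f x (Pi.single i 1))) x (Pi.single i 1) := fun x => by
    simpa [mul_assoc] using ((hfd x).hasFDerivAt.rpow_const
      (.inl (hf.pos x).ne')).hasLineDerivAt (Pi.single i 1)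
  rw [← integral_const_mul]
  simpa only [ContinuousLinearMap.mul_apply', mul_assoc] using
    integral_bilinear_hasLineDerivAt_right_eq_neg_left_of_integrable
      (B := ContinuousLinearMap.mul ℝ ℝ)
      (by simpa only [ContinuousLinearMap.mul_apply', mul_assoc] using h_int.const_mul p)
      (hT.integrable_rpow_mul_deriv hf hp i) (hT.integrable_rpow_mul_apply hf hp i)
      (fun x _ => h_deriv x) (fun x _ => hasLineDerivAt_single_of_update (hT.hasDerivAt x i))

lemma integrable_rpow_mul_sq_apply (hT : IsKnotheMap F G a b T D) (hf : GaussianDominated f)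
    (hp : 0 < p) (i : Fin n) : Integrable fun x => f x ^ p * T x i ^ 2 := by
  simpa only [mul_assoc, sq] using (hT.integrable_rpow_mul_apply hf hp i).mul_bdd
    (hT.measurable_apply i).aestronglyMeasurable (ae_of_all _ fun x => hT.abs_apply_le x i)

lemma integrable_rpow_mul_fderiv_mul_apply (hT : IsKnotheMap F G a b T D)
    (hf : GaussianDominated f) (hp : 0 < p) (i : Fin n)
    (h_grad : Integrable fun x => fderiv ℝ f x (Pi.single i 1) ^ 2) :
    Integrable fun x => f x ^ (p / 2) * fderiv ℝ f x (Pi.single i 1) * T x i := by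
  refine (h_grad.add (hT.integrable_rpow_mul_sq_apply hf hp i)).mono'
    (((hf.rpow (half_pos hp)).continuous.measurable.mul
      (measurable_fderiv_apply_const ℝ f _)).mul (hT.measurable_apply i)).aestronglyMeasurable
    (ae_of_all _ fun x => ?_)
  have h_sq : f x ^ p = f x ^ (p / 2) * f x ^ (p / 2) := by
    rw [← rpow_add (hf.pos x), add_halves]
  rw [Pi.add_apply, h_sq, norm_eq_abs, abs_le]
  constructor <;>
    nlinarith [sq_nonneg (fderiv ℝ f x (Pi.single i 1) - f x ^ (p / 2) * T x i),
      sq_nonneg (fderiv ℝ f x (Pi.single i 1) + f x ^ (p / 2) * T x i)]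

lemma neg_integral_rpow_mul_fderiv_mul_apply_le (hT : IsKnotheMap F G a b T D)
    (hf : GaussianDominated f) (hp : 0 < p) (i : Fin n)
    (h_grad : Integrable fun x => fderiv ℝ f x (Pi.single i 1) ^ 2) {l : ℝ} (hl : 0 < l) :
    -∫ x, f x ^ (p / 2) * fderiv ℝ f x (Pi.single i 1) * T x i ≤
      l / 2 * (∫ x, fderiv ℝ f x (Pi.single i 1) ^ 2) +
        1 / (2 * l) * ∫ x, f x ^ p * T x i ^ 2 := by
  have h_trans := hT.integrable_rpow_mul_sq_apply hf hp i
  rw [← integral_neg, ← integral_const_mul, ← integral_const_mul,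
    ← integral_add (h_grad.const_mul _) (h_trans.const_mul _)]
  refine integral_mono (hT.integrable_rpow_mul_fderiv_mul_apply hf hp i h_grad).neg
    ((h_grad.const_mul _).add (h_trans.const_mul _)) fun x => ?_
  have h_sq : f x ^ p = f x ^ (p / 2) * f x ^ (p / 2) := by
    rw [← rpow_add (hf.pos x), add_halves]
  have h_young : l / 2 * fderiv ℝ f x (Pi.single i 1) ^ 2 + 1 / (2 * l) * (f x ^ p * T x i ^ 2) -
      -(f x ^ (p / 2) * fderiv ℝ f x (Pi.single i 1) * T x i) =
      1 / (2 * l) * (l * fderiv ℝ f x (Pi.single i 1) + f x ^ (p / 2) * T x i) ^ 2 := by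
    rw [h_sq]
    field_simp
    ring
  have h_nonneg : 0 ≤
      1 / (2 * l) * (l * fderiv ℝ f x (Pi.single i 1) + f x ^ (p / 2) * T x i) ^ 2 := by
    positivity
  exact sub_nonneg.1 (h_young ▸ h_nonneg)

lemma integral_rpow_mul_deriv_le (hT : IsKnotheMap F G a b T D) (hf : GaussianDominated f)
    (hfd : Differentiable ℝ f) (hp : 0 < p) (i : Fin n)
    (h_grad : Integrable fun x => fderiv ℝ f x (Pi.single i 1) ^ 2) {l : ℝ} (hl : 0 < l) :
    ∫ x, f x ^ (p / 2 + 1) * D x i ≤ (p / 2 + 1) *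
      (l / 2 * (∫ x, fderiv ℝ f x (Pi.single i 1) ^ 2) +
        1 / (2 * l) * ∫ x, f x ^ p * T x i ^ 2) := by
  have hp' : 0 < p / 2 + 1 := by positivity
  have h_int := hT.integrable_rpow_mul_fderiv_mul_apply hf hp i h_grad
  rw [hT.integral_rpow_mul_deriv hf hfd hp' i (by rwa [add_sub_cancel_right]),
    add_sub_cancel_right, ← mul_neg]
  exact mul_le_mul_of_nonneg_left
    (hT.neg_integral_rpow_mul_fderiv_mul_apply_le hf hp i h_grad hl) hp'.le

end Power

end IsKnotheMap

theorem integral_rpow_openCube_le (hn : n ≠ 0) (hab : a < b) {q : ℝ} (hq : 0 < q)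
    (hqn : q * (1 - 1 / n) = q / 2 + 1) {f G : (Fin n → ℝ) → ℝ}
    (hf : GaussianDominated f) (hfd : Differentiable ℝ f)
    (h_grad : ∀ i, Integrable fun x => fderiv ℝ f x (Pi.single i 1) ^ 2) (hG : Continuous G)
    (hG0 : ∀ x, 0 < G x) (h_mass : ∫ x, f x ^ q = ∫ y in openCube n a b, G y) {l : ℝ}
    (hl : 0 < l) :
    ∫ y in openCube n a b, G y ^ (1 - 1 / n : ℝ) ≤
      (q / 2 + 1) / n * (l / 2 * (∫ x, ∑ i, fderiv ℝ f x (Pi.single i 1) ^ 2) +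
        1 / (2 * l) * ∫ y in openCube n a b, G y * ∑ i, y i ^ 2) := by
  have hF := hf.rpow hq
  obtain ⟨T, D, hT⟩ := exists_isKnotheMap hab hF hG hG0 (by
    rw [← ofReal_integral_eq_lintegral_ofReal hF.integrable (ae_of_all _ fun x => (hF.pos x).le),
      ← ofReal_integral_eq_lintegral_ofReal (integrableOn_openCube hG)
        (ae_of_all _ fun x => (hG0 x).le), h_mass])
  have h_pow : ∀ x, (f x ^ q) ^ (1 - 1 / n : ℝ) = f x ^ (q / 2 + 1) := fun x => by
    rw [← rpow_mul (hf.pos x).le, hqn]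
  have h_transport := hT.integral_rpow_le hn hF hG hG0 fun i => by
    simpa only [h_pow] using hT.integrable_rpow_mul_deriv hf (p := q / 2 + 1) (by positivity) i
  have h_second_moment : ∑ i, ∫ x, f x ^ q * T x i ^ 2 =
      ∫ y in openCube n a b, G y * ∑ i, y i ^ 2 := by
    rw [← hT.integral_comp hF.continuous.measurable hF.pos hG hG0
      (ψ := fun y => ∑ i, y i ^ 2) (by fun_prop) fun y => by positivity,
      ← integral_finsetSum _ fun i _ => hT.integrable_rpow_mul_sq_apply hf hq i]
    simp only [Finset.mul_sum]
  simp only [h_pow] at h_transport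
  refine h_transport.trans ((mul_le_mul_of_nonneg_left (Finset.sum_le_sum fun i _ =>
    hT.integral_rpow_mul_deriv_le hf hfd hq i (h_grad i) hl) (by positivity)).trans_eq ?_)
  rw [← h_second_moment, integral_finsetSum _ fun i _ => h_grad i, ← Finset.mul_sum,
    Finset.sum_add_distrib, ← Finset.mul_sum, ← Finset.mul_sum]
  ring

end Transport

section TalentiWeight

open Set Filter Topology

variable {n : ℕ} {s t : ℝ}

lemma integral_exp_neg_mul_sum_sq (n : ℕ) (ht : 0 < t) :
    ∫ y : Fin n → ℝ, exp (-t * ∑ i, y i ^ 2) = (π / t) ^ (n / 2 : ℝ) := by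
  simp only [Finset.mul_sum, exp_sum]
  rw [integral_fintype_prod_volume_eq_pow fun z : ℝ => exp (-t * z ^ 2), integral_gaussian,
    sqrt_eq_rpow, ← rpow_natCast, ← rpow_mul (by positivity), Fintype.card_fin, one_div_mul_eq_div]

lemma lintegral_exp_neg_mul_sum_sq (n : ℕ) (ht : 0 < t) :
    ∫⁻ y : Fin n → ℝ, ENNReal.ofReal (exp (-t * ∑ i, y i ^ 2)) =
      ENNReal.ofReal ((π / t) ^ (n / 2 : ℝ)) := by
  rw [← integral_exp_neg_mul_sum_sq n ht, ofReal_integral_eq_lintegral_ofReal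
    (integrable_exp_neg_mul_sum_sq ht) (ae_of_all _ fun y => (exp_pos _).le)]

lemma lintegral_rpow_mul_exp_neg_mul_Ioi {r : ℝ} (hs : 0 < s) (hr : 0 < r) :
    ∫⁻ t in Ioi (0 : ℝ), ENNReal.ofReal (t ^ (s - 1) * exp (-(r * t))) =
      ENNReal.ofReal ((1 / r) ^ s * Gamma s) := by
  rw [← integral_rpow_mul_exp_neg_mul_Ioi hs hr, ofReal_integral_eq_lintegral_ofReal]
  · simpa [IntegrableOn] using
      integrableOn_rpow_mul_exp_neg_mul_rpow (s := s - 1) (by linarith) one_pos hr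
  · filter_upwards [ae_restrict_mem measurableSet_Ioi] with t ht
    exact mul_nonneg (rpow_nonneg (le_of_lt ht) _) (exp_pos _).le

/-- The weight `1 + |y|²` on `ℝⁿ`, whose power `-(n - 2) / 2` is the Aubin–Talenti extremal of the
Sobolev inequality. -/
def talentiWeight (y : Fin n → ℝ) : ℝ := 1 + ∑ i, y i ^ 2

lemma talentiWeight_pos (y : Fin n → ℝ) : 0 < talentiWeight y := by
  unfold talentiWeight
  positivity

lemma continuous_talentiWeight : Continuous (talentiWeight (n := n)) := by
  unfold talentiWeight
  fun_prop

lemma continuous_talentiWeight_rpow (s : ℝ) :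
    Continuous fun y : Fin n → ℝ => talentiWeight y ^ s :=
  continuous_talentiWeight.rpow_const fun y => .inl (talentiWeight_pos y).ne'

lemma ofReal_Gamma_mul_talentiWeight_rpow_neg (hs : 0 < s) (y : Fin n → ℝ) :
    ENNReal.ofReal (Gamma s) * ENNReal.ofReal (talentiWeight y ^ (-s)) =
      ∫⁻ t in Ioi (0 : ℝ), ENNReal.ofReal (t ^ (s - 1) * exp (-(talentiWeight y * t))) := by
  have hy := talentiWeight_pos y
  rw [lintegral_rpow_mul_exp_neg_mul_Ioi hs hy, ← ENNReal.ofReal_mul (Gamma_pos_of_pos hs).le,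
    one_div, inv_rpow hy.le, rpow_neg hy.le, mul_comm]

lemma lintegral_exp_neg_talentiWeight_mul (n : ℕ) (ht : 0 < t) :
    ∫⁻ y : Fin n → ℝ, ENNReal.ofReal (t ^ (s - 1) * exp (-(talentiWeight y * t))) =
      ENNReal.ofReal (π ^ (n / 2 : ℝ)) *
        ENNReal.ofReal (t ^ (s - n / 2 - 1) * exp (-(1 * t))) := by
  have h_split : ∀ y : Fin n → ℝ, t ^ (s - 1) * exp (-(talentiWeight y * t)) =
      t ^ (s - 1) * exp (-t) * exp (-t * ∑ i, y i ^ 2) := fun y => by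
    rw [mul_assoc, ← exp_add, talentiWeight]
    ring_nf
  simp_rw [h_split, ENNReal.ofReal_mul (show 0 ≤ t ^ (s - 1) * exp (-t) by positivity)]
  rw [lintegral_const_mul' _ _ ENNReal.ofReal_ne_top, lintegral_exp_neg_mul_sum_sq n ht,
    ← ENNReal.ofReal_mul (by positivity), ← ENNReal.ofReal_mul (by positivity),
    div_rpow pi_pos.le ht.le, sub_right_comm, rpow_sub ht (s - 1), one_mul]
  ring_nf

lemma lintegral_talentiWeight_rpow_neg (n : ℕ) (hs : (n / 2 : ℝ) < s) :
    ∫⁻ y : Fin n → ℝ, ENNReal.ofReal (talentiWeight y ^ (-s)) =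
      ENNReal.ofReal (π ^ (n / 2 : ℝ) * Gamma (s - n / 2) / Gamma s) := by
  have hs0 : 0 < s := hs.trans_le' (by positivity)
  have hΓ := Gamma_pos_of_pos hs0
  have h_meas : Measurable (talentiWeight (n := n)) := continuous_talentiWeight.measurable
  have h_swap : ENNReal.ofReal (Gamma s) *
      ∫⁻ y : Fin n → ℝ, ENNReal.ofReal (talentiWeight y ^ (-s)) =
        ENNReal.ofReal (π ^ (n / 2 : ℝ) * Gamma (s - n / 2)) := by
    rw [← lintegral_const_mul' _ _ ENNReal.ofReal_ne_top]
    simp_rw [ofReal_Gamma_mul_talentiWeight_rpow_neg hs0]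
    rw [lintegral_lintegral_swap (Measurable.aemeasurable (by fun_prop)),
      setLIntegral_congr_fun measurableSet_Ioi fun t ht => lintegral_exp_neg_talentiWeight_mul n ht,
      lintegral_const_mul' _ _ ENNReal.ofReal_ne_top,
      lintegral_rpow_mul_exp_neg_mul_Ioi (sub_pos.2 hs) one_pos,
      ← ENNReal.ofReal_mul (by positivity), div_one, one_rpow, one_mul]
  rw [ENNReal.ofReal_div_of_pos hΓ, ← h_swap, mul_comm,
    ENNReal.mul_div_cancel_right (by simpa using hΓ) ENNReal.ofReal_ne_top]

lemma integrable_talentiWeight_rpow_neg (n : ℕ) (hs : (n / 2 : ℝ) < s) :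
    Integrable fun y : Fin n → ℝ => talentiWeight y ^ (-s) := by
  refine ⟨(continuous_talentiWeight_rpow _).aestronglyMeasurable, ?_⟩
  rw [hasFiniteIntegral_iff_ofReal (ae_of_all _ fun y => rpow_nonneg (talentiWeight_pos y).le _),
    lintegral_talentiWeight_rpow_neg n hs]
  exact ENNReal.ofReal_lt_top

lemma integral_talentiWeight_rpow_neg (n : ℕ) (hs : (n / 2 : ℝ) < s) :
    ∫ y : Fin n → ℝ, talentiWeight y ^ (-s) =
      π ^ (n / 2 : ℝ) * Gamma (s - n / 2) / Gamma s := by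
  have := Gamma_pos_of_pos (hs.trans_le' (by positivity))
  have := Gamma_pos_of_pos (sub_pos.2 hs)
  rw [integral_eq_lintegral_of_nonneg_ae
    (ae_of_all _ fun y => rpow_nonneg (talentiWeight_pos y).le _)
    (continuous_talentiWeight_rpow _).aestronglyMeasurable, lintegral_talentiWeight_rpow_neg n hs,
    ENNReal.toReal_ofReal (by positivity)]

end TalentiWeight

section SharpConstant

open Set Filter Topology

variable {n : ℕ}

/-- The normalisation `∫ (1 + |y|²)⁻ⁿ dy` of the density to which `f ^ (2n / (n - 2))` is
transported. -/
def talentiMass (n : ℕ) : ℝ := ∫ y : Fin n → ℝ, talentiWeight y ^ (-n : ℝ)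

lemma talentiMass_eq (hn : n ≠ 0) :
    talentiMass n = π ^ (n / 2 : ℝ) * Gamma (n / 2) / Gamma n := by
  have : (0 : ℝ) < n := by positivity
  rw [talentiMass, integral_talentiWeight_rpow_neg n (by linarith), sub_half]

lemma talentiMass_pos (hn : n ≠ 0) : 0 < talentiMass n := by
  have : 0 < Gamma (n : ℝ) := Gamma_pos_of_pos (by positivity)
  have : 0 < Gamma (n / 2 : ℝ) := Gamma_pos_of_pos (by positivity)
  rw [talentiMass_eq hn]
  positivity

lemma integral_talentiWeight_rpow_one_sub (hn : 2 < n) :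
    ∫ y : Fin n → ℝ, talentiWeight y ^ (-(n - 1) : ℝ) =
      2 * (n - 1) / (n - 2) * talentiMass n := by
  have hn' : (2 : ℝ) < n := mod_cast hn
  have h_gamma : Gamma (n : ℝ) = (n - 1) * Gamma (n - 1 : ℝ) := by
    rw [← Gamma_add_one (by linarith), sub_add_cancel]
  have h_gamma_half : Gamma (n / 2 : ℝ) = (n / 2 - 1) * Gamma (n / 2 - 1 : ℝ) := by
    rw [← Gamma_add_one (by linarith), sub_add_cancel]
  have hΓ : 0 < Gamma (n - 1 : ℝ) := Gamma_pos_of_pos (by linarith)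
  have h1 : (n - 1 : ℝ) ≠ 0 := by linarith
  have h2 : (n - 2 : ℝ) ≠ 0 := by linarith
  rw [integral_talentiWeight_rpow_neg n (by linarith), talentiMass_eq (by lia), h_gamma,
    h_gamma_half, sub_right_comm, sub_half]
  field_simp

lemma sobolevConst_eq (hn : n ≠ 0) :
    sobolevConst n = talentiMass n ^ (-(2 / n) : ℝ) / (n * (n - 2)) := by
  have : 0 < Gamma (n : ℝ) := Gamma_pos_of_pos (by positivity)
  have : 0 < Gamma (n / 2 : ℝ) := Gamma_pos_of_pos (by positivity)
  have h_mass : talentiMass n = π ^ (n / 2 : ℝ) * (Gamma n / Gamma (n / 2 : ℝ))⁻¹ := by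
    rw [talentiMass_eq hn, inv_div, mul_div_assoc]
  have h_exp : (n / 2 : ℝ) * -(2 / n) = -1 := by field_simp
  rw [h_mass, mul_rpow (by positivity) (by positivity), ← rpow_mul pi_pos.le, h_exp,
    rpow_neg_one, inv_rpow (by positivity), ← rpow_neg (by positivity), neg_neg, sobolevConst,
    mul_assoc π, one_div, mul_inv]
  ring

lemma tendsto_setIntegral_openCube {g : (Fin n → ℝ) → ℝ} (hg : Integrable g) :
    Tendsto (fun k : ℕ => ∫ x in openCube n (-k) k, g x) atTop (𝓝 (∫ x, g x)) := by
  have h_mono : Monotone fun k : ℕ => openCube n (-k : ℝ) k := fun j k hjk =>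
    pi_mono fun _ _ => Ioo_subset_Ioo (neg_le_neg (mod_cast hjk)) (mod_cast hjk)
  have h_exhaust : ⋃ k : ℕ, openCube n (-k : ℝ) k = univ := by
    refine eq_univ_of_forall fun x => ?_
    obtain ⟨k, hk⟩ := exists_nat_gt ‖x‖
    exact mem_iUnion.2 ⟨k, fun i _ => abs_lt.1 ((norm_le_pi_norm x i).trans_lt hk)⟩
  have h_tendsto := tendsto_setIntegral_of_monotone
    (s := fun k : ℕ => openCube n (-k : ℝ) k)
    (fun k => MeasurableSet.univ_pi fun _ => measurableSet_Ioo) h_mono hg.integrableOn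
  rwa [h_exhaust, setIntegral_univ] at h_tendsto

lemma talentiWeight_rpow_mul_sum_sq (y : Fin n → ℝ) (s : ℝ) :
    talentiWeight y ^ (-s) * ∑ i, y i ^ 2 =
      talentiWeight y ^ (-(s - 1)) - talentiWeight y ^ (-s) := by
  rw [neg_sub, ← neg_add_eq_sub s 1, rpow_add (talentiWeight_pos y), rpow_one, talentiWeight]
  ring

variable {f : (Fin n → ℝ) → ℝ} {l : ℝ}

lemma GaussianDominated.integral_pos (hf : GaussianDominated f) : 0 < ∫ x, f x :=
  integral_pos_of_integrable_nonneg_nonzero hf.continuous hf.integrable (fun x => (hf.pos x).le)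
    (hf.pos 0).ne'

lemma talentiWeight_openCube_le (hn : 2 < n) {a b c : ℝ} (hab : a < b) (hc : 0 < c)
    (hf : GaussianDominated f) (hfd : Differentiable ℝ f)
    (h_grad : ∀ i, Integrable fun x => fderiv ℝ f x (Pi.single i 1) ^ 2)
    (h_mass : ∫ x, f x ^ (2 * n / (n - 2) : ℝ) =
      c * ∫ y in openCube n a b, talentiWeight y ^ (-n : ℝ)) (hl : 0 < l) :
    c ^ (1 - 1 / n : ℝ) * (∫ y in openCube n a b, talentiWeight y ^ (-(n - 1) : ℝ)) ≤
      (n / (n - 2) + 1) / n * (l / 2 * (∫ x, ∑ i, fderiv ℝ f x (Pi.single i 1) ^ 2) +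
        1 / (2 * l) * (c * ((∫ y in openCube n a b, talentiWeight y ^ (-(n - 1) : ℝ)) -
          ∫ y in openCube n a b, talentiWeight y ^ (-n : ℝ)))) := by
  have hn' : (0 : ℝ) < n - 2 := sub_pos.2 (mod_cast hn)
  have : (0 : ℝ) < n := by linarith
  have h_pow : ∀ y : Fin n → ℝ, (c * talentiWeight y ^ (-n : ℝ)) ^ (1 - 1 / n : ℝ) =
      c ^ (1 - 1 / n : ℝ) * talentiWeight y ^ (-(n - 1) : ℝ) := fun y => by
    have hy := talentiWeight_pos y
    rw [mul_rpow hc.le (rpow_nonneg hy.le _), ← rpow_mul hy.le]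
    congr 2
    field_simp
  have h_exp : (2 * n / (n - 2) / 2 : ℝ) = n / (n - 2) := by ring
  have h_transport := integral_rpow_openCube_le (by lia) hab (q := 2 * n / (n - 2))
    (G := fun y => c * talentiWeight y ^ (-n : ℝ)) (by positivity) (by field_simp; ring) hf hfd
    h_grad (continuous_const.mul (continuous_talentiWeight_rpow _))
    (fun y => mul_pos hc (rpow_pos_of_pos (talentiWeight_pos y) _))
    (by rw [h_mass, integral_const_mul]) hl
  simp only [h_pow, mul_assoc c, talentiWeight_rpow_mul_sum_sq, h_exp] at h_transport
  rwa [integral_const_mul, integral_const_mul,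
    integral_sub (integrable_talentiWeight_rpow_neg n (by linarith)).integrableOn
      (integrable_talentiWeight_rpow_neg n (by linarith)).integrableOn] at h_transport

lemma talentiMass_mul_le (hn : 2 < n) (hf : GaussianDominated f) (hfd : Differentiable ℝ f)
    (h_grad : ∀ i, Integrable fun x => fderiv ℝ f x (Pi.single i 1) ^ 2) {c : ℝ}
    (h_mass : ∫ x, f x ^ (2 * n / (n - 2) : ℝ) = c * talentiMass n) (hl : 0 < l) :
    c ^ (1 - 1 / n : ℝ) * (2 * (n - 1) / (n - 2) * talentiMass n) ≤
      (n / (n - 2) + 1) / n * (l / 2 * (∫ x, ∑ i, fderiv ℝ f x (Pi.single i 1) ^ 2) +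
        1 / (2 * l) * (c * (2 * (n - 1) / (n - 2) * talentiMass n - talentiMass n))) := by
  have hn' : (2 : ℝ) < n := mod_cast hn
  have h_pos := (hf.rpow (p := 2 * n / (n - 2)) (div_pos (by linarith) (by linarith))).integral_pos
  have hZ := talentiMass_pos (n := n) (by lia)
  obtain rfl := (eq_div_iff hZ.ne').2 h_mass.symm
  rw [← integral_talentiWeight_rpow_one_sub hn]
  have tZ : Tendsto (fun k : ℕ => ∫ y in openCube n (-k) k, talentiWeight y ^ (-n : ℝ)) atTop
      (𝓝 (talentiMass n)) :=
    tendsto_setIntegral_openCube (integrable_talentiWeight_rpow_neg n (by linarith))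
  have tA := tendsto_setIntegral_openCube
    (integrable_talentiWeight_rpow_neg n (s := n - 1) (by linarith))
  have tc := (tendsto_const_nhds (x := ∫ x, f x ^ (2 * n / (n - 2) : ℝ))).div tZ hZ.ne'
  refine le_of_tendsto_of_tendsto ((tc.rpow_const (.inl (by positivity))).mul tA)
    ((((tc.mul (tA.sub tZ)).const_mul _).const_add _).const_mul _) ?_
  filter_upwards [eventually_gt_atTop 0, tZ.eventually (lt_mem_nhds hZ)] with k hk hZk
  exact talentiWeight_openCube_le hn (neg_lt_self (mod_cast hk)) (div_pos h_pos hZk) hf hfd h_grad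
    (div_mul_cancel₀ _ hZk.ne').symm hl

lemma mul_le_sq_mul_of_forall_le {n c w N Z : ℝ} (hn : 2 < n) (hw : 0 < w)
    (h : ∀ l, 0 < l → c / w * (2 * (n - 1) / (n - 2) * Z) ≤
      (n / (n - 2) + 1) / n * (l / 2 * N +
        1 / (2 * l) * (c * (2 * (n - 1) / (n - 2) * Z - Z)))) :
    c * Z * (n * (n - 2)) ≤ w ^ 2 * N := by
  have hn2 : 0 < n - 2 := by linarith
  have hn1 : 0 < n - 1 := by linarith
  have h_opt := h (w / (n - 2)) (by positivity)
  rw [← sub_nonneg] at h_opt ⊢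
  refine (mul_nonneg_iff_of_pos_left (show 0 < (n - 1) / ((n - 2) ^ 2 * n * w) by positivity)).1
    (h_opt.trans_eq ?_)
  field_simp
  ring

theorem GaussianDominated.rpow_integral_le_sobolevConst_mul (hn : 2 < n)
    (hf : GaussianDominated f) (hfd : Differentiable ℝ f)
    (h_grad : ∀ i, Integrable fun x => fderiv ℝ f x (Pi.single i 1) ^ 2) :
    (∫ x, f x ^ (2 * n / (n - 2) : ℝ)) ^ ((n - 2) / n : ℝ) ≤
      sobolevConst n * ∫ x, ∑ i, fderiv ℝ f x (Pi.single i 1) ^ 2 := by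
  have hn' : (2 : ℝ) < n := mod_cast hn
  have : (0 : ℝ) < n - 2 := sub_pos.2 hn'
  have hn0 : (0 : ℝ) < n := by linarith
  have hM := (hf.rpow (p := 2 * n / (n - 2)) (by positivity)).integral_pos
  have hZ := talentiMass_pos (n := n) (by lia)
  set M := ∫ x, f x ^ (2 * n / (n - 2) : ℝ)
  have h_mass : M = M / talentiMass n * talentiMass n := (div_mul_cancel₀ _ hZ.ne').symm
  have hc : 0 < M / talentiMass n := div_pos hM hZ
  have h_opt := mul_le_sq_mul_of_forall_le hn' (rpow_pos_of_pos hc (1 / n)) fun l hl => by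
    simpa only [rpow_sub hc, rpow_one] using talentiMass_mul_le hn hf hfd h_grad h_mass hl
  have h_sq : ((M / talentiMass n) ^ (1 / n : ℝ)) ^ 2 =
      M ^ (2 / n : ℝ) * talentiMass n ^ (-(2 / n) : ℝ) := by
    rw [← rpow_natCast, ← rpow_mul hc.le, div_rpow hM.le hZ.le, rpow_neg hZ.le, div_eq_mul_inv,
      Nat.cast_ofNat, one_div_mul_eq_div]
  rw [← h_mass, h_sq] at h_opt
  rw [sub_div, div_self hn0.ne', rpow_sub hM, rpow_one, sobolevConst_eq (by lia),
    div_le_iff₀ (by positivity), div_mul_eq_mul_div, div_mul_eq_mul_div,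
    le_div_iff₀ (by positivity)]
  linarith

end SharpConstant

section EuclideanTransfer

open Set Filter Topology

variable {n : ℕ}

lemma norm_sq_eq_sum_apply_basis_sq {E ι : Type*} [NormedAddCommGroup E] [InnerProductSpace ℝ E]
    [CompleteSpace E] [Fintype ι] (b : OrthonormalBasis ι ℝ E) (L : E →L[ℝ] ℝ) :
    ‖L‖ ^ 2 = ∑ i, L (b i) ^ 2 := by
  rw [← (InnerProductSpace.toDual ℝ E).symm.norm_map, ← b.sum_sq_norm_inner_left]
  simp only [InnerProductSpace.toDual_symm_apply, norm_eq_abs, sq_abs]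

lemma norm_sq_eq_sum_apply_single_sq (L : EuclideanSpace ℝ (Fin n) →L[ℝ] ℝ) :
    ‖L‖ ^ 2 = ∑ i, L (EuclideanSpace.single i 1) ^ 2 := by
  simpa using norm_sq_eq_sum_apply_basis_sq (EuclideanSpace.basisFun (Fin n) ℝ) L

variable {w : EuclideanSpace ℝ (Fin n) → ℝ}

lemma fderiv_comp_toLp_single (hw : Differentiable ℝ w) (x : Fin n → ℝ) (i : Fin n) :
    fderiv ℝ (fun x => w (WithLp.toLp 2 x)) x (Pi.single i 1) =
      fderiv ℝ w (WithLp.toLp 2 x) (EuclideanSpace.single i 1) := by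
  have h_chain := (hw (WithLp.toLp 2 x)).hasFDerivAt.comp x
    (EuclideanSpace.equiv (Fin n) ℝ).symm.hasFDerivAt
  exact congrArg (fun L => L (Pi.single i 1)) h_chain.fderiv

theorem rpow_integral_le_of_gaussianDominated (hn : 2 < n) (hw : Differentiable ℝ w)
    (hw_dom : GaussianDominated fun x => w (WithLp.toLp 2 x))
    (h_grad : Integrable fun x => ‖fderiv ℝ w x‖ ^ 2) :
    (∫ x, w x ^ (2 * n / (n - 2) : ℝ)) ^ ((n - 2) / n : ℝ) ≤
      sobolevConst n * ∫ x, ‖fderiv ℝ w x‖ ^ 2 := by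
  have h_mp := PiLp.volume_preserving_toLp (Fin n)
  have h_emb : MeasurableEmbedding (WithLp.toLp 2 : (Fin n → ℝ) → EuclideanSpace ℝ (Fin n)) :=
    (MeasurableEquiv.toLp 2 (Fin n → ℝ)).measurableEmbedding
  have h_sum : ∀ x, ∑ i, fderiv ℝ (fun x => w (WithLp.toLp 2 x)) x (Pi.single i 1) ^ 2 =
      ‖fderiv ℝ w (WithLp.toLp 2 x)‖ ^ 2 := fun x => by
    simp only [fderiv_comp_toLp_single hw, norm_sq_eq_sum_apply_single_sq]
  have hw' : Differentiable ℝ fun x => w (WithLp.toLp 2 x) :=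
    hw.comp (EuclideanSpace.equiv (Fin n) ℝ).symm.differentiable
  have h_int : ∀ i, Integrable fun x =>
      fderiv ℝ (fun x => w (WithLp.toLp 2 x)) x (Pi.single i 1) ^ 2 := fun i => by
    refine ((h_mp.integrable_comp_emb h_emb).2 h_grad).mono'
      ((measurable_fderiv_apply_const ℝ _ _).pow_const 2).aestronglyMeasurable
      (ae_of_all _ fun x => ?_)
    rw [norm_of_nonneg (sq_nonneg _), Function.comp_apply, ← h_sum]
    exact Finset.single_le_sum (f := fun i => fderiv ℝ (fun x => w (WithLp.toLp 2 x)) x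
      (Pi.single i 1) ^ 2) (fun _ _ => sq_nonneg _) (Finset.mem_univ i)
  have h_sob := hw_dom.rpow_integral_le_sobolevConst_mul hn hw' h_int
  simp only [h_sum] at h_sob
  rwa [h_mp.integral_comp h_emb fun y => w y ^ (2 * n / (n - 2) : ℝ),
    h_mp.integral_comp h_emb fun y => ‖fderiv ℝ w y‖ ^ 2] at h_sob

end EuclideanTransfer

section Lp

open Set Filter Topology

lemma eLpNorm_eq_ofReal_rpow_integral {α : Type*} [MeasurableSpace α] {μ : Measure α} {f : α → ℝ}
    {q : ℝ} (hq : 0 < q) (hf0 : ∀ x, 0 ≤ f x) (hf : MemLp f (ENNReal.ofReal q) μ) :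
    eLpNorm f (ENNReal.ofReal q) μ = ENNReal.ofReal ((∫ x, f x ^ q ∂μ) ^ q⁻¹) := by
  rw [hf.eLpNorm_eq_integral_rpow_norm (by simpa using hq) ENNReal.ofReal_ne_top,
    ENNReal.toReal_ofReal hq.le]
  simp only [norm_of_nonneg (hf0 _)]

lemma memLp_ofReal_iff_integrable_rpow {α : Type*} [MeasurableSpace α] {μ : Measure α} {f : α → ℝ}
    {q : ℝ} (hq : 0 < q) (hf0 : ∀ x, 0 ≤ f x) (hf : AEStronglyMeasurable f μ) :
    MemLp f (ENNReal.ofReal q) μ ↔ Integrable (fun x => f x ^ q) μ := by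
  rw [← integrable_norm_rpow_iff hf (by simpa using hq) ENNReal.ofReal_ne_top,
    ENNReal.toReal_ofReal hq.le]
  simp only [norm_of_nonneg (hf0 _)]

lemma eLpNorm_le_sqrt_mul_eLpNorm_two_iff {α F : Type*} [MeasurableSpace α] {μ : Measure α}
    [NormedAddCommGroup F] {f : α → ℝ} {g : α → F} {q S : ℝ} (hq : 0 < q) (hS : 0 ≤ S)
    (hf0 : ∀ x, 0 ≤ f x) (hf : MemLp f (ENNReal.ofReal q) μ) (hg : MemLp g 2 μ) :
    eLpNorm f (ENNReal.ofReal q) μ ≤ ENNReal.ofReal √S * eLpNorm g 2 μ ↔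
      (∫ x, f x ^ q ∂μ) ^ (2 / q) ≤ S * ∫ x, ‖g x‖ ^ 2 ∂μ := by
  have hf_int : 0 ≤ ∫ x, f x ^ q ∂μ := integral_nonneg fun x => rpow_nonneg (hf0 x) _
  have hg_int : 0 ≤ ∫ x, ‖g x‖ ^ 2 ∂μ := integral_nonneg fun x => sq_nonneg _
  have h_sq : (∫ x, f x ^ q ∂μ) ^ (2 / q) = ((∫ x, f x ^ q ∂μ) ^ q⁻¹) ^ 2 := by
    rw [← rpow_natCast, ← rpow_mul hf_int, Nat.cast_ofNat, inv_mul_eq_div]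
  rw [eLpNorm_eq_ofReal_rpow_integral hq hf0 hf,
    hg.eLpNorm_eq_integral_rpow_norm two_ne_zero ENNReal.ofNat_ne_top, ENNReal.toReal_ofNat,
    ← one_div 2, ← sqrt_eq_rpow, ← ENNReal.ofReal_mul (sqrt_nonneg _), ← sqrt_mul hS,
    ENNReal.ofReal_le_ofReal_iff (sqrt_nonneg _)]
  simp only [rpow_two]
  rw [le_sqrt (rpow_nonneg hf_int _) (mul_nonneg hS hg_int), h_sq]

lemma eLpNorm_add_const_smul_le {α F : Type*} [MeasurableSpace α] {μ : Measure α}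
    [NormedAddCommGroup F] [NormedSpace ℝ F] {f g : α → F} {p : ENNReal}
    (hf : AEStronglyMeasurable f μ) (hg : AEStronglyMeasurable g μ) (hp : 1 ≤ p) (c : ℝ) :
    eLpNorm (fun x => f x + c • g x) p μ ≤ eLpNorm f p μ + ‖c‖ₑ * eLpNorm g p μ := by
  rw [← eLpNorm_const_smul]
  exact eLpNorm_add_le hf (hg.const_smul c) hp

variable {E F : Type*} [NormedAddCommGroup E] [MeasurableSpace E] [BorelSpace E]
  [NormedAddCommGroup F] {μ : Measure E}

lemma tendsto_eLpNorm_indicator_norm_ge {f : E → F} {p : ENNReal} (hp0 : p ≠ 0) (hp : p ≠ ⊤)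
    (hf : MemLp f p μ) :
    Tendsto (fun k : ℕ => eLpNorm ({x | (k : ℝ) ≤ ‖x‖}.indicator f) p μ) atTop (𝓝 0) := by
  have h_pos : 0 < p.toReal := ENNReal.toReal_pos hp0 hp
  have h_int : ∫⁻ x, ‖f x‖ₑ ^ p.toReal ∂μ ≠ ⊤ :=
    (lintegral_rpow_enorm_lt_top_of_eLpNorm_lt_top hp0 hp hf.2).ne
  have h_tail : Tendsto (fun k : ℕ => ∫⁻ x, ‖{x | (k : ℝ) ≤ ‖x‖}.indicator f x‖ₑ ^ p.toReal ∂μ)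
      atTop (𝓝 (∫⁻ _, 0 ∂μ)) := by
    refine tendsto_lintegral_of_dominated_convergence' _ (fun k =>
      ((hf.1.indicator (measurableSet_le measurable_const measurable_norm)).enorm.pow_const _))
      (fun k => ae_of_all _ fun x => ENNReal.rpow_le_rpow ?_ h_pos.le) h_int
      (ae_of_all _ fun x => tendsto_const_nhds.congr' ?_)
    · exact enorm_indicator_le_enorm_self f x
    · obtain ⟨m, hm⟩ := exists_nat_gt ‖x‖
      filter_upwards [eventually_ge_atTop m] with k hk
      have hx : x ∉ {x : E | (k : ℝ) ≤ ‖x‖} := not_le.2 (hm.trans_le (mod_cast hk))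
      rw [indicator_of_notMem hx, enorm_zero, ENNReal.zero_rpow_of_pos h_pos]
  simp only [eLpNorm_eq_lintegral_rpow_enorm_toReal hp0 hp]
  rw [lintegral_zero] at h_tail
  have h_root := h_tail.ennrpow_const (1 / p.toReal)
  rwa [ENNReal.zero_rpow_of_pos (by positivity)] at h_root

variable [InnerProductSpace ℝ E] [FiniteDimensional ℝ E] [NormedSpace ℝ F]

lemma eLpNorm_finrank_smul_comp_smul (hE : Module.finrank ℝ E ≠ 0) (f : E → F) {c : ℝ}
    (hc : 0 < c) :
    eLpNorm (fun x => c • f (c • x)) (Module.finrank ℝ E) volume =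
      eLpNorm f (Module.finrank ℝ E) volume := by
  have h_emb : MeasurableEmbedding fun x : E => c • x :=
    (Homeomorph.smulOfNeZero c hc.ne').measurableEmbedding
  rw [show (fun x => c • f (c • x)) = c • (f ∘ fun x => c • x) from rfl, eLpNorm_const_smul,
    ← h_emb.eLpNorm_map_measure, Measure.map_addHaar_smul _ hc.ne',
    eLpNorm_smul_measure_of_ne_top (ENNReal.natCast_ne_top _), smul_eq_mul, ← mul_assoc,
    one_div, ENNReal.toReal_inv, ENNReal.toReal_natCast, abs_of_pos (by positivity),
    ENNReal.ofReal_rpow_of_pos (by positivity), enorm_eq_ofReal hc.le,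
    ← ENNReal.ofReal_mul hc.le, ← inv_pow, pow_rpow_inv_natCast (by positivity) hE,
    mul_inv_cancel₀ hc.ne', ENNReal.ofReal_one, one_mul]

end Lp

section Cutoff

open Set Filter Topology

variable {E : Type*} [NormedAddCommGroup E] [InnerProductSpace ℝ E]

/-- The smooth cutoff `x ↦ φ (x / (k + 1))`, equal to `1` on the ball of radius `k + 1` and to `0`
outside the ball of radius `2 (k + 1)`, for a bump function `φ`. -/
def cutoff (k : ℕ) (x : E) : ℝ :=
  (⟨1, 2, one_pos, one_lt_two⟩ : ContDiffBump (0 : E)) ((k + 1 : ℝ)⁻¹ • x)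

lemma contDiff_cutoff (k : ℕ) : ContDiff ℝ 1 (cutoff k : E → ℝ) :=
  (ContDiffBump.contDiff _).comp (contDiff_const_smul _)

lemma differentiable_cutoff (k : ℕ) : Differentiable ℝ (cutoff k : E → ℝ) :=
  (contDiff_cutoff k).differentiable one_ne_zero

lemma cutoff_nonneg (k : ℕ) (x : E) : 0 ≤ cutoff k x := ContDiffBump.nonneg _

lemma cutoff_le_one (k : ℕ) (x : E) : cutoff k x ≤ 1 := ContDiffBump.le_one _

lemma hasCompactSupport_cutoff [FiniteDimensional ℝ E] (k : ℕ) :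
    HasCompactSupport (cutoff k : E → ℝ) :=
  (ContDiffBump.hasCompactSupport _).comp_smul (by positivity)

lemma cutoff_eq_one {k : ℕ} {x : E} (hx : ‖x‖ ≤ k + 1) : cutoff k x = 1 := by
  refine ContDiffBump.one_of_mem_closedBall _ (mem_closedBall_zero_iff.2 ?_)
  rw [norm_smul, norm_inv, norm_of_nonneg (by positivity), inv_mul_le_one₀ (by positivity)]
  exact hx

lemma tendsto_cutoff (x : E) : Tendsto (fun k => cutoff k x) atTop (𝓝 1) := by
  refine tendsto_const_nhds.congr' ?_
  obtain ⟨m, hm⟩ := exists_nat_gt ‖x‖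
  filter_upwards [eventually_ge_atTop m] with k hk
  have hmk : (m : ℝ) ≤ k := mod_cast hk
  exact (cutoff_eq_one (by linarith)).symm

lemma fderiv_cutoff_eq_zero {k : ℕ} {x : E} (hx : ‖x‖ < k) : fderiv ℝ (cutoff k) x = 0 := by
  have h_eq : cutoff k =ᶠ[𝓝 x] fun _ => (1 : ℝ) := by
    filter_upwards [continuous_norm.continuousAt.eventually_lt_const hx] with y hy
    exact cutoff_eq_one (by linarith)
  rw [h_eq.fderiv_eq, fderiv_fun_const, Pi.zero_apply]

variable [FiniteDimensional ℝ E] [MeasurableSpace E] [BorelSpace E]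

lemma eLpNorm_fderiv_cutoff (hE : Module.finrank ℝ E ≠ 0) (k : ℕ) :
    eLpNorm (fderiv ℝ (cutoff k : E → ℝ)) (Module.finrank ℝ E) volume =
      eLpNorm (fderiv ℝ (cutoff 0 : E → ℝ)) (Module.finrank ℝ E) volume := by
  have h_scale : (cutoff k : E → ℝ) = fun x => cutoff 0 ((k + 1 : ℝ)⁻¹ • x) := by
    funext x
    simp [cutoff]
  have h_fderiv : fderiv ℝ (cutoff k : E → ℝ) =
      fun x => (k + 1 : ℝ)⁻¹ • fderiv ℝ (cutoff 0 : E → ℝ) ((k + 1 : ℝ)⁻¹ • x) := by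
    funext x
    rw [h_scale, fderiv_comp_smul]
  rw [h_fderiv, eLpNorm_finrank_smul_comp_smul hE (fderiv ℝ (cutoff 0)) (by positivity)]

lemma eLpNorm_fderiv_cutoff_ne_top (k : ℕ) (p : ENNReal) :
    eLpNorm (fderiv ℝ (cutoff k : E → ℝ)) p volume ≠ ⊤ :=
  (((contDiff_cutoff k).continuous_fderiv one_ne_zero).memLp_of_hasCompactSupport
    ((hasCompactSupport_cutoff k).fderiv ℝ)).2.ne

lemma eLpNorm_smul_fderiv_cutoff_le {u : E → ℝ} (hu : AEStronglyMeasurable u volume)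
    (p : ENNReal) {r : ENNReal} [p.HolderTriple (Module.finrank ℝ E) r] (k : ℕ) :
    eLpNorm (u • fderiv ℝ (cutoff k : E → ℝ)) r volume ≤
      eLpNorm ({x | (k : ℝ) ≤ ‖x‖}.indicator u) p volume *
        eLpNorm (fderiv ℝ (cutoff k : E → ℝ)) (Module.finrank ℝ E) volume := by
  have h_supp : u • fderiv ℝ (cutoff k : E → ℝ) =
      {x : E | (k : ℝ) ≤ ‖x‖}.indicator u • fderiv ℝ (cutoff k : E → ℝ) := by
    funext x
    by_cases hx : x ∈ {x : E | (k : ℝ) ≤ ‖x‖}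
    · simp only [Pi.smul_apply', indicator_of_mem hx]
    · simp only [Pi.smul_apply', fderiv_cutoff_eq_zero (not_le.1 hx), smul_zero]
  rw [h_supp]
  exact eLpNorm_smul_le_mul_eLpNorm
    ((contDiff_cutoff k).continuous_fderiv one_ne_zero).aestronglyMeasurable
    (hu.indicator (measurableSet_le measurable_const measurable_norm))

lemma tendsto_eLpNorm_smul_fderiv_cutoff (hE : Module.finrank ℝ E ≠ 0) {u : E → ℝ}
    {p r : ENNReal} [p.HolderTriple (Module.finrank ℝ E) r] (hp0 : p ≠ 0) (hp : p ≠ ⊤)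
    (hu : MemLp u p) :
    Tendsto (fun k => eLpNorm (u • fderiv ℝ (cutoff k : E → ℝ)) r volume) atTop (𝓝 0) := by
  refine tendsto_of_tendsto_of_tendsto_of_le_of_le tendsto_const_nhds ?_ (fun _ => zero_le)
    fun k => eLpNorm_smul_fderiv_cutoff_le hu.1 p k
  simp only [eLpNorm_fderiv_cutoff hE]
  simpa using ENNReal.Tendsto.mul_const (tendsto_eLpNorm_indicator_norm_ge hp0 hp hu)
    (.inr (eLpNorm_fderiv_cutoff_ne_top 0 _))

lemma eLpNorm_fderiv_cutoff_mul_le {u : E → ℝ} (hu : Differentiable ℝ u) {p : ENNReal}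
    (hp : 1 ≤ p) (k : ℕ) :
    eLpNorm (fderiv ℝ fun x => cutoff k x * u x) p volume ≤
      eLpNorm (fderiv ℝ u) p volume + eLpNorm (u • fderiv ℝ (cutoff k : E → ℝ)) p volume := by
  have h_fderiv : (fderiv ℝ fun x => cutoff k x * u x) =
      (fun x => cutoff k x • fderiv ℝ u x) + u • fderiv ℝ (cutoff k) := by
    funext x
    exact ((differentiable_cutoff k x).hasFDerivAt.mul (hu x).hasFDerivAt).fderiv
  have h_meas : AEStronglyMeasurable (fun x => cutoff k x • fderiv ℝ u x) volume :=
    ((differentiable_cutoff k).continuous.measurable.smul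
      (measurable_fderiv ℝ u)).aestronglyMeasurable
  have h_meas' : AEStronglyMeasurable (u • fderiv ℝ (cutoff k)) volume :=
    (hu.continuous.smul ((contDiff_cutoff k).continuous_fderiv one_ne_zero)).aestronglyMeasurable
  rw [h_fderiv]
  refine (eLpNorm_add_le h_meas h_meas' hp).trans ?_
  gcongr
  refine eLpNorm_mono fun x => ?_
  rw [norm_smul, norm_of_nonneg (cutoff_nonneg k x)]
  exact mul_le_of_le_one_left (norm_nonneg _) (cutoff_le_one k x)

lemma memLp_smul_fderiv_cutoff {u : E → ℝ} (hu : Continuous u) (k : ℕ) (p : ENNReal) :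
    MemLp (u • fderiv ℝ (cutoff k : E → ℝ)) p :=
  (hu.smul ((contDiff_cutoff k).continuous_fderiv one_ne_zero)).memLp_of_hasCompactSupport
    ((hasCompactSupport_cutoff k).fderiv ℝ).smul_left

lemma memLp_fderiv_cutoff_mul {u : E → ℝ} (hu : Differentiable ℝ u) {p : ENNReal} (hp : 1 ≤ p)
    (h_grad : MemLp (fderiv ℝ u) p) (k : ℕ) : MemLp (fderiv ℝ fun x => cutoff k x * u x) p :=
  ⟨(measurable_fderiv ℝ _).aestronglyMeasurable, (eLpNorm_fderiv_cutoff_mul_le hu hp k).trans_lt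
    (ENNReal.add_lt_top.2 ⟨h_grad.2, (memLp_smul_fderiv_cutoff hu.continuous k p).2⟩)⟩

end Cutoff

section Gaussian

variable {E : Type*} [NormedAddCommGroup E] [InnerProductSpace ℝ E]

lemma hasFDerivAt_exp_neg_norm_sq (x : E) :
    HasFDerivAt (fun y : E => exp (-‖y‖ ^ 2)) ((-2 * exp (-‖x‖ ^ 2)) • innerSL ℝ x) x := by
  refine (hasStrictFDerivAt_norm_sq x).hasFDerivAt.fun_neg.exp.congr_fderiv ?_
  ext y
  simp
  ring

lemma differentiable_exp_neg_norm_sq : Differentiable ℝ fun x : E => exp (-‖x‖ ^ 2) :=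
  fun x => (hasFDerivAt_exp_neg_norm_sq x).differentiableAt

lemma norm_fderiv_exp_neg_norm_sq_sq_le (x : E) :
    ‖fderiv ℝ (fun y => exp (-‖y‖ ^ 2)) x‖ ^ 2 ≤ 4 * exp (-‖x‖ ^ 2) := by
  have h_exp : ‖x‖ ^ 2 * exp (-‖x‖ ^ 2) ≤ 1 := by
    rw [exp_neg, ← div_eq_mul_inv, div_le_one (exp_pos _)]
    linarith [add_one_le_exp (‖x‖ ^ 2)]
  calc ‖fderiv ℝ (fun y => exp (-‖y‖ ^ 2)) x‖ ^ 2
      = 4 * (‖x‖ ^ 2 * exp (-‖x‖ ^ 2)) * exp (-‖x‖ ^ 2) := by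
        rw [(hasFDerivAt_exp_neg_norm_sq x).fderiv, norm_smul, innerSL_apply_norm, norm_mul,
          norm_neg, norm_two, norm_of_nonneg (exp_pos _).le]
        ring
    _ ≤ 4 * exp (-‖x‖ ^ 2) := by gcongr; linarith

variable [FiniteDimensional ℝ E] [MeasurableSpace E] [BorelSpace E]

lemma integrable_exp_neg_norm_sq : Integrable fun x : E => exp (-‖x‖ ^ 2) := by
  refine (GaussianFourier.integrable_cexp_neg_mul_sq_norm_add (b := 1) (by simp) 0
    (0 : E)).norm.congr (ae_of_all _ fun x => ?_)
  simp [Complex.norm_exp, ← Complex.ofReal_pow]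

lemma memLp_two_fderiv_exp_neg_norm_sq : MemLp (fderiv ℝ fun x : E => exp (-‖x‖ ^ 2)) 2 := by
  have h_meas : Measurable (fderiv ℝ fun x : E => exp (-‖x‖ ^ 2)) := measurable_fderiv ℝ _
  refine (memLp_two_iff_integrable_sq_norm h_meas.aestronglyMeasurable).2 <|
    (integrable_exp_neg_norm_sq.const_mul 4).mono' (h_meas.norm.pow_const 2).aestronglyMeasurable
      (ae_of_all _ fun x => ?_)
  rw [norm_of_nonneg (sq_nonneg _)]
  exact norm_fderiv_exp_neg_norm_sq_sq_le x

lemma eLpNorm_fderiv_add_const_mul_le {f g : E → ℝ} (hf : Differentiable ℝ f)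
    (hg : Differentiable ℝ g) {p : ENNReal} (hp : 1 ≤ p) (c : ℝ) :
    eLpNorm (fderiv ℝ fun x => f x + c * g x) p volume ≤
      eLpNorm (fderiv ℝ f) p volume + ‖c‖ₑ * eLpNorm (fderiv ℝ g) p volume := by
  have h_fderiv : fderiv ℝ (fun x => f x + c * g x) = fun x => fderiv ℝ f x + c • fderiv ℝ g x := by
    funext x
    exact ((hf x).hasFDerivAt.add ((hg x).hasFDerivAt.const_mul c)).fderiv
  rw [h_fderiv]
  exact eLpNorm_add_const_smul_le (measurable_fderiv ℝ f).aestronglyMeasurable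
    (measurable_fderiv ℝ g).aestronglyMeasurable hp c

end Gaussian

section Sobolev

open Set Filter Topology

variable {n : ℕ} {u w : EuclideanSpace ℝ (Fin n) → ℝ}

lemma sobolevConst_nonneg (hn : 2 < n) : 0 ≤ sobolevConst n := by
  have hn' : (2 : ℝ) < n := mod_cast hn
  rw [sobolevConst_eq (by lia)]
  have := talentiMass_pos (n := n) (by lia)
  have : (0 : ℝ) < n - 2 := by linarith
  positivity

lemma eLpNorm_le_of_gaussianDominated (hn : 2 < n) (hw : Differentiable ℝ w)
    (hw_dom : GaussianDominated fun x => w (WithLp.toLp 2 x)) (h_grad : MemLp (fderiv ℝ w) 2) :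
    eLpNorm w (.ofReal (2 * n / (n - 2))) volume ≤
      .ofReal √(sobolevConst n) * eLpNorm (fderiv ℝ w) 2 volume := by
  have hn' : (0 : ℝ) < n - 2 := sub_pos.2 (mod_cast hn)
  have hq : (0 : ℝ) < 2 * n / (n - 2) := by positivity
  have hw0 : ∀ x, 0 ≤ w x := fun x => (hw_dom.pos (WithLp.ofLp x)).le
  have hw_int : Integrable fun x => w x ^ (2 * n / (n - 2) : ℝ) :=
    ((PiLp.volume_preserving_toLp (Fin n)).integrable_comp_emb
      (MeasurableEquiv.toLp 2 (Fin n → ℝ)).measurableEmbedding).1 (hw_dom.rpow hq).integrable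
  rw [eLpNorm_le_sqrt_mul_eLpNorm_two_iff hq (sobolevConst_nonneg hn) hw0
    ((memLp_ofReal_iff_integrable_rpow hq hw0 hw.continuous.aestronglyMeasurable).2 hw_int) h_grad,
    show 2 / (2 * n / (n - 2)) = ((n - 2) / n : ℝ) by field_simp]
  exact rpow_integral_le_of_gaussianDominated hn hw hw_dom
    ((memLp_two_iff_integrable_sq_norm h_grad.1).1 h_grad)

lemma gaussianDominated_add_gaussian (hw0 : ∀ x, 0 ≤ w x) (hw : Continuous w)
    (hw_supp : HasCompactSupport w) {ε : ℝ} (hε : 0 < ε) :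
    GaussianDominated fun x => w (WithLp.toLp 2 x) + ε * exp (-‖WithLp.toLp 2 x‖ ^ 2) where
  continuous := by fun_prop
  pos x := add_pos_of_nonneg_of_pos (hw0 _) (by positivity)
  bound := by
    obtain ⟨B, hB⟩ := (hw_supp.mul_right (f' := fun x => exp (‖x‖ ^ 2))).exists_bound_of_continuous
      (hw.mul (by fun_prop))
    refine ⟨B + ε, 1, one_pos, fun x => ?_⟩
    have h_bound : w (WithLp.toLp 2 x) ≤ B * exp (-‖WithLp.toLp 2 x‖ ^ 2) := by
      rw [exp_neg, ← div_eq_mul_inv, le_div_iff₀ (exp_pos _)]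
      exact (le_abs_self _).trans (hB _)
    rw [← EuclideanSpace.real_norm_sq_eq (WithLp.toLp 2 x), neg_one_mul, add_mul]
    gcongr

lemma eLpNorm_le_add_gaussian (hn : 2 < n) (hw0 : ∀ x, 0 ≤ w x) (hw : Differentiable ℝ w)
    (hw_supp : HasCompactSupport w) (h_grad : MemLp (fderiv ℝ w) 2) {ε : ℝ} (hε : 0 < ε) :
    eLpNorm w (.ofReal (2 * n / (n - 2))) volume ≤
      .ofReal √(sobolevConst n) * (eLpNorm (fderiv ℝ w) 2 volume + .ofReal ε *
        eLpNorm (fderiv ℝ fun x : EuclideanSpace ℝ (Fin n) => exp (-‖x‖ ^ 2)) 2 volume) := by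
  set g : EuclideanSpace ℝ (Fin n) → ℝ := fun x => exp (-‖x‖ ^ 2)
  have hg : Differentiable ℝ g := differentiable_exp_neg_norm_sq
  have hg_grad : MemLp (fderiv ℝ g) 2 := memLp_two_fderiv_exp_neg_norm_sq
  have h_fderiv : eLpNorm (fderiv ℝ fun x => w x + ε * g x) 2 volume ≤
      eLpNorm (fderiv ℝ w) 2 volume + .ofReal ε * eLpNorm (fderiv ℝ g) 2 volume := by
    rw [← enorm_eq_ofReal hε.le]
    exact eLpNorm_fderiv_add_const_mul_le hw hg one_le_two ε
  have h_sum : MemLp (fderiv ℝ fun x => w x + ε * g x) 2 :=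
    ⟨(measurable_fderiv ℝ _).aestronglyMeasurable, h_fderiv.trans_lt (ENNReal.add_lt_top.2
      ⟨h_grad.2, ENNReal.mul_lt_top ENNReal.ofReal_lt_top hg_grad.2⟩)⟩
  calc eLpNorm w (.ofReal (2 * n / (n - 2))) volume
      ≤ eLpNorm (fun x => w x + ε * g x) (.ofReal (2 * n / (n - 2))) volume :=
        eLpNorm_mono_real fun x => by
          rw [norm_of_nonneg (hw0 x)]
          exact le_add_of_nonneg_right (by positivity)
    _ ≤ .ofReal √(sobolevConst n) * eLpNorm (fderiv ℝ fun x => w x + ε * g x) 2 volume :=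
        eLpNorm_le_of_gaussianDominated hn (hw.add (hg.const_mul ε))
          (gaussianDominated_add_gaussian hw0 hw.continuous hw_supp hε) h_sum
    _ ≤ _ := by gcongr

lemma eLpNorm_le_of_hasCompactSupport (hn : 2 < n) (hw0 : ∀ x, 0 ≤ w x)
    (hw : Differentiable ℝ w) (hw_supp : HasCompactSupport w) (h_grad : MemLp (fderiv ℝ w) 2) :
    eLpNorm w (.ofReal (2 * n / (n - 2))) volume ≤
      .ofReal √(sobolevConst n) * eLpNorm (fderiv ℝ w) 2 volume := by
  refine ge_of_tendsto (x := 𝓝[>] (0 : ℝ)) ?_ (eventually_mem_nhdsWithin.mono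
    fun ε hε => eLpNorm_le_add_gaussian hn hw0 hw hw_supp h_grad hε)
  have h_ofReal : Tendsto ENNReal.ofReal (𝓝[>] 0) (𝓝 0) := by
    simpa using (ENNReal.continuous_ofReal.tendsto 0).mono_left nhdsWithin_le_nhds
  have h_lim := ENNReal.Tendsto.mul_const h_ofReal
    (.inr (memLp_two_fderiv_exp_neg_norm_sq (E := EuclideanSpace ℝ (Fin n))).2.ne)
  simpa using ENNReal.Tendsto.const_mul (h_lim.const_add (eLpNorm (fderiv ℝ w) 2 volume))
    (.inr ENNReal.ofReal_ne_top)

lemma holderTriple_sobolevExponent (hn : 2 < n) :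
    (ENNReal.ofReal (2 * n / (n - 2))).HolderTriple n 2 := by
  have hn' : (0 : ℝ) < n - 2 := sub_pos.2 (mod_cast hn)
  refine ⟨?_⟩
  rw [← ENNReal.ofReal_natCast, ← ENNReal.ofReal_ofNat, ← ENNReal.ofReal_inv_of_pos (by positivity),
    ← ENNReal.ofReal_inv_of_pos (by positivity), ← ENNReal.ofReal_inv_of_pos (by positivity),
    ← ENNReal.ofReal_add (by positivity) (by positivity)]
  congr 1
  field_simp
  ring

lemma tendsto_eLpNorm_fderiv_add_smul_fderiv_cutoff (hn : 2 < n)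
    (hu_Lp : MemLp u (.ofReal (2 * n / (n - 2)))) :
    Tendsto (fun k => eLpNorm (fderiv ℝ u) 2 volume +
      eLpNorm (u • fderiv ℝ (cutoff k : EuclideanSpace ℝ (Fin n) → ℝ)) 2 volume) atTop
      (𝓝 (eLpNorm (fderiv ℝ u) 2 volume)) := by
  have hn' : (0 : ℝ) < n - 2 := sub_pos.2 (mod_cast hn)
  have h_finrank := finrank_euclideanSpace_fin (𝕜 := ℝ) (n := n)
  have : (ENNReal.ofReal (2 * n / (n - 2))).HolderTriple
      (Module.finrank ℝ (EuclideanSpace ℝ (Fin n))) 2 := by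
    rw [h_finrank]
    exact holderTriple_sobolevExponent hn
  simpa using (tendsto_eLpNorm_smul_fderiv_cutoff (r := 2) (by rw [h_finrank]; lia)
    (by simpa using (by positivity)) ENNReal.ofReal_ne_top hu_Lp).const_add
    (eLpNorm (fderiv ℝ u) 2 volume)

lemma eLpNorm_le_sqrt_sobolevConst_mul (hn : 2 < n) (hu0 : ∀ x, 0 ≤ u x)
    (hu : Differentiable ℝ u) (hu_Lp : MemLp u (.ofReal (2 * n / (n - 2))))
    (h_grad : MemLp (fderiv ℝ u) 2) :
    eLpNorm u (.ofReal (2 * n / (n - 2))) volume ≤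
      .ofReal √(sobolevConst n) * eLpNorm (fderiv ℝ u) 2 volume := by
  have hu_k : ∀ k, Differentiable ℝ fun x => cutoff k x * u x := fun k =>
    (differentiable_cutoff k).mul hu
  have h_bound : ∀ k, eLpNorm (fun x => cutoff k x * u x) (.ofReal (2 * n / (n - 2))) volume ≤
      .ofReal √(sobolevConst n) * (eLpNorm (fderiv ℝ u) 2 volume +
        eLpNorm (u • fderiv ℝ (cutoff k : EuclideanSpace ℝ (Fin n) → ℝ)) 2 volume) := fun k =>
    (eLpNorm_le_of_hasCompactSupport hn (fun x => mul_nonneg (cutoff_nonneg k x) (hu0 x)) (hu_k k)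
      (hasCompactSupport_cutoff k).mul_right (memLp_fderiv_cutoff_mul hu one_le_two h_grad k)).trans
      (by gcongr; exact eLpNorm_fderiv_cutoff_mul_le hu one_le_two k)
  have h_lim := ENNReal.Tendsto.const_mul (a := .ofReal √(sobolevConst n))
    (tendsto_eLpNorm_fderiv_add_smul_fderiv_cutoff hn hu_Lp) (.inr ENNReal.ofReal_ne_top)
  calc eLpNorm u (.ofReal (2 * n / (n - 2))) volume
      ≤ liminf (fun k => eLpNorm (fun x => cutoff k x * u x) (.ofReal (2 * n / (n - 2))) volume)
          atTop :=
        Lp.eLpNorm_lim_le_liminf_eLpNorm (fun k => (hu_k k).continuous.aestronglyMeasurable) u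
          (ae_of_all _ fun x => by simpa using (tendsto_cutoff x).mul_const (u x))
    _ ≤ liminf (fun k => .ofReal √(sobolevConst n) * (eLpNorm (fderiv ℝ u) 2 volume +
          eLpNorm (u • fderiv ℝ (cutoff k : EuclideanSpace ℝ (Fin n) → ℝ)) 2 volume)) atTop :=
        liminf_le_liminf (.of_forall h_bound)
    _ = .ofReal √(sobolevConst n) * eLpNorm (fderiv ℝ u) 2 volume := h_lim.liminf_eq

lemma norm_gradient_eq_norm_fderiv (u : EuclideanSpace ℝ (Fin n) → ℝ)
    (x : EuclideanSpace ℝ (Fin n)) : ‖gradient u x‖ = ‖fderiv ℝ u x‖ :=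
  LinearIsometryEquiv.norm_map _ _

theorem rpow_integral_le_sobolevConst_mul (hn : 2 < n) (hu0 : ∀ x, 0 ≤ u x)
    (hu : Differentiable ℝ u) (hu_Lp : Integrable fun x => u x ^ (2 * n / (n - 2) : ℝ))
    (h_grad : Integrable fun x => ‖gradient u x‖ ^ 2) :
    (∫ x, u x ^ (2 * n / (n - 2) : ℝ)) ^ ((n - 2) / n : ℝ) ≤
      sobolevConst n * ∫ x, ‖gradient u x‖ ^ 2 := by
  have hn' : (0 : ℝ) < n - 2 := sub_pos.2 (mod_cast hn)
  have hq : (0 : ℝ) < 2 * n / (n - 2) := by positivity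
  simp only [norm_gradient_eq_norm_fderiv] at h_grad ⊢
  have hu_memLp := (memLp_ofReal_iff_integrable_rpow hq hu0 hu.continuous.aestronglyMeasurable).2
    hu_Lp
  have h_fderiv := (memLp_two_iff_integrable_sq_norm
    (measurable_fderiv ℝ u).aestronglyMeasurable).2 h_grad
  rw [show ((n - 2) / n : ℝ) = 2 / (2 * n / (n - 2)) by field_simp,
    ← eLpNorm_le_sqrt_mul_eLpNorm_two_iff hq (sobolevConst_nonneg hn) hu0 hu_memLp h_fderiv]
  exact eLpNorm_le_sqrt_sobolevConst_mul hn hu0 hu hu_memLp h_fderiv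

end Sobolev

section ConvolutionDuality

open Set Filter Topology
open scoped Convolution

/-- Bounded continuous functions, as an unbundled predicate. -/
structure IsBoundedContinuous {X : Type*} [TopologicalSpace X] (k : X → ℝ) : Prop where
  continuous : Continuous k
  bddAbove : BddAbove (range fun x => ‖k x‖)

lemma isBoundedContinuous_of_norm_le {X : Type*} [TopologicalSpace X] {k : X → ℝ} {C : ℝ}
    (hk : Continuous k) (hC : ∀ x, ‖k x‖ ≤ C) : IsBoundedContinuous k :=
  ⟨hk, C, forall_mem_range.2 hC⟩

lemma IsBoundedContinuous.exists_norm_le {X : Type*} [TopologicalSpace X] {k : X → ℝ}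
    (hk : IsBoundedContinuous k) : ∃ C, ∀ x, ‖k x‖ ≤ C :=
  hk.bddAbove.imp fun _ hC => forall_mem_range.1 hC

lemma IsBoundedContinuous.const_mul {X : Type*} [TopologicalSpace X] {k : X → ℝ}
    (hk : IsBoundedContinuous k) (c : ℝ) : IsBoundedContinuous fun x => c * k x :=
  have ⟨_, hC⟩ := hk.exists_norm_le
  isBoundedContinuous_of_norm_le (hk.continuous.const_mul c) fun x => by
    rw [norm_mul]
    exact mul_le_mul_of_nonneg_left (hC x) (norm_nonneg c)

lemma IsBoundedContinuous.sub {X : Type*} [TopologicalSpace X] {k k' : X → ℝ}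
    (hk : IsBoundedContinuous k) (hk' : IsBoundedContinuous k') :
    IsBoundedContinuous fun x => k x - k' x :=
  have ⟨_, hC⟩ := hk.exists_norm_le
  have ⟨_, hC'⟩ := hk'.exists_norm_le
  isBoundedContinuous_of_norm_le (hk.continuous.sub hk'.continuous) fun x =>
    norm_sub_le_of_le (hC x) (hC' x)

variable {E : Type*} [NormedAddCommGroup E] [InnerProductSpace ℝ E] [FiniteDimensional ℝ E]
  [MeasurableSpace E] [BorelSpace E] {f f' k k' v w w' w'' : E → ℝ} {e : E}

namespace IsBoundedContinuous

lemma integrable_mul (hk : IsBoundedContinuous k) (hf : Integrable f) :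
    Integrable fun x => f x * k x :=
  have ⟨_, hC⟩ := hk.exists_norm_le
  hf.mul_bdd hk.continuous.aestronglyMeasurable (ae_of_all _ hC)

lemma convolutionExistsAt (hk : IsBoundedContinuous k) (hv : Integrable v) (x : E) :
    ConvolutionExistsAt v k x (ContinuousLinearMap.lsmul ℝ ℝ) volume :=
  BddAbove.convolutionExistsAt _ (hk.bddAbove.mono (image_subset_range _ _)) .univ
    (subset_univ _) hv.integrableOn hk.continuous.aestronglyMeasurable

end IsBoundedContinuous

lemma neg_sum_convolution_eq {ι : Type*} [Fintype ι] {k : ι → E → ℝ} {l l' : E → ℝ}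
    (hk : ∀ i, IsBoundedContinuous (k i)) (hl : IsBoundedContinuous l)
    (hl' : IsBoundedContinuous l') (h_eq : ∀ x, -∑ i, k i x = l x - l' x) (hv : Integrable v)
    (x : E) : -∑ i, (v ⋆ k i) x = (v ⋆ l) x - (v ⋆ l') x := by
  simp only [convolution]
  rw [← integral_finsetSum _ fun i _ => (hk i).convolutionExistsAt hv x, ← integral_neg,
    ← integral_sub (hl.convolutionExistsAt hv x) (hl'.convolutionExistsAt hv x)]
  refine integral_congr_ae (ae_of_all _ fun y => ?_)
  simp only [ContinuousLinearMap.lsmul_apply, ← Finset.smul_sum, ← smul_neg, h_eq, smul_sub]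

lemma norm_convolution_le (hv : Integrable v) {C : ℝ} (hC : ∀ x, ‖k x‖ ≤ C) (x : E) :
    ‖(v ⋆ k) x‖ ≤ (∫ y, ‖v y‖) * C := by
  rw [← integral_mul_const]
  refine norm_integral_le_of_norm_le (hv.norm.mul_const C) (ae_of_all _ fun y => ?_)
  rw [ContinuousLinearMap.lsmul_apply, norm_smul]
  gcongr
  exact hC _

lemma IsBoundedContinuous.convolution (hk : IsBoundedContinuous k) (hv : Integrable v) :
    IsBoundedContinuous (v ⋆ k) :=
  have ⟨_, hC⟩ := hk.exists_norm_le
  isBoundedContinuous_of_norm_le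
    (BddAbove.continuous_convolution_right_of_integrable _ hk.bddAbove hv hk.continuous)
    (norm_convolution_le hv hC)

lemma hasLineDerivAt_convolution (hk : IsBoundedContinuous k) (hk' : IsBoundedContinuous k')
    (hv : Integrable v) (h_deriv : ∀ x, HasLineDerivAt ℝ k (k' x) x e) (x : E) :
    HasLineDerivAt ℝ (v ⋆ k) ((v ⋆ k') x) x e := by
  obtain ⟨C, hC⟩ := hk'.exists_norm_le
  have h_line : ∀ (z : E) (t : ℝ),
      HasDerivAt (fun t : ℝ => k (z + t • e)) (k' (z + t • e)) t := fun z t => by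
    have h_at := h_deriv (z + t • e)
    rw [HasLineDerivAt, ← sub_self t] at h_at
    simpa only [add_assoc, ← add_smul, add_sub_cancel] using h_at.comp_sub_const t t
  have h_diff := hasDerivAt_integral_of_dominated_loc_of_deriv_le (μ := volume) (x₀ := (0 : ℝ))
    (F := fun t y => v y • k (x + t • e - y)) (F' := fun t y => v y • k' (x + t • e - y))
    (bound := fun y => ‖v y‖ * C) univ_mem
    (Eventually.of_forall fun t => (hk.convolutionExistsAt hv _).aestronglyMeasurable)
    (hk.convolutionExistsAt hv _) (hk'.convolutionExistsAt hv _).aestronglyMeasurable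
    (ae_of_all _ fun y t _ => by rw [norm_smul]; gcongr; exact hC _) (hv.norm.mul_const C)
    (ae_of_all _ fun y t _ => by
      simpa only [add_sub_right_comm] using! (h_line (x - y) t).const_smul (v y))
  simpa only [HasLineDerivAt, convolution_lsmul, zero_smul, add_zero] using h_diff.2

/-- `w'` and `w''` are the first and second derivatives of `w` along `e`, with the boundedness and
integrability that make `∫ w' ^ 2 = -∫ w * w''` an honest integration by parts. -/
structure HasRegularLineDerivs (e : E) (w w' w'' : E → ℝ) : Prop where
  hasLineDerivAt : ∀ x, HasLineDerivAt ℝ w (w' x) x e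
  hasLineDerivAt' : ∀ x, HasLineDerivAt ℝ w' (w'' x) x e
  isBoundedContinuous : IsBoundedContinuous w
  isBoundedContinuous' : IsBoundedContinuous w'
  isBoundedContinuous'' : IsBoundedContinuous w''
  integrable' : Integrable w'
  integrable'' : Integrable w''

namespace HasRegularLineDerivs

lemma convolution (h : HasRegularLineDerivs e w w' w'') (hv : Integrable v) :
    HasRegularLineDerivs e (v ⋆ w) (v ⋆ w') (v ⋆ w'') where
  hasLineDerivAt := hasLineDerivAt_convolution h.isBoundedContinuous h.isBoundedContinuous' hv
    h.hasLineDerivAt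
  hasLineDerivAt' := hasLineDerivAt_convolution h.isBoundedContinuous' h.isBoundedContinuous'' hv
    h.hasLineDerivAt'
  isBoundedContinuous := h.isBoundedContinuous.convolution hv
  isBoundedContinuous' := h.isBoundedContinuous'.convolution hv
  isBoundedContinuous'' := h.isBoundedContinuous''.convolution hv
  integrable' := hv.integrable_convolution _ h.integrable'
  integrable'' := hv.integrable_convolution _ h.integrable''

lemma const_mul (h : HasRegularLineDerivs e w w' w'') (c : ℝ) :
    HasRegularLineDerivs e (fun x => c * w x) (fun x => c * w' x) (fun x => c * w'' x) where
  hasLineDerivAt x := HasDerivAt.const_mul c (h.hasLineDerivAt x)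
  hasLineDerivAt' x := HasDerivAt.const_mul c (h.hasLineDerivAt' x)
  isBoundedContinuous := h.isBoundedContinuous.const_mul c
  isBoundedContinuous' := h.isBoundedContinuous'.const_mul c
  isBoundedContinuous'' := h.isBoundedContinuous''.const_mul c
  integrable' := h.integrable'.const_mul c
  integrable'' := h.integrable''.const_mul c

lemma memLp_two (h : HasRegularLineDerivs e w w' w'') : MemLp w' 2 := by
  rw [memLp_two_iff_integrable_sq h.integrable'.aestronglyMeasurable]
  simpa only [sq] using h.isBoundedContinuous'.integrable_mul h.integrable'

lemma integral_mul_eq (h : HasRegularLineDerivs e w w' w'')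
    (hf : ∀ x, HasLineDerivAt ℝ f (f' x) x e) (hf_int' : Integrable fun x => f x * w' x)
    (hf_int'' : Integrable fun x => f x * w'' x) (hf' : Integrable fun x => f' x * w' x) :
    ∫ x, f x * -w'' x = ∫ x, f' x * w' x := by
  have h_parts := integral_bilinear_hasLineDerivAt_right_eq_neg_left_of_integrable
    (B := ContinuousLinearMap.mul ℝ ℝ) hf' hf_int'' hf_int' (fun x _ => hf x)
    (fun x _ => h.hasLineDerivAt' x)
  simp only [ContinuousLinearMap.mul_apply'] at h_parts
  simp only [mul_neg, integral_neg, h_parts, neg_neg]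

lemma two_mul_integral_mul_le (h : HasRegularLineDerivs e w w' w'')
    (hf : ∀ x, HasLineDerivAt ℝ f (f' x) x e) (hf_int : Integrable f) (hf' : MemLp f' 2) :
    2 * ∫ x, f x * -w'' x ≤ (∫ x, f' x ^ 2) + ∫ x, w x * -w'' x := by
  have h_sq : Integrable fun x => w' x * w' x := h.memLp_two.integrable_mul h.memLp_two
  have hf_sq := (memLp_two_iff_integrable_sq hf'.aestronglyMeasurable).1 hf'
  have h_cross := hf'.integrable_mul h.memLp_two
  rw [h.integral_mul_eq hf (h.isBoundedContinuous'.integrable_mul hf_int)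
      (h.isBoundedContinuous''.integrable_mul hf_int) h_cross,
    h.integral_mul_eq h.hasLineDerivAt
      ((h.isBoundedContinuous.integrable_mul h.integrable').congr
        (ae_of_all _ fun x => mul_comm _ _))
      ((h.isBoundedContinuous.integrable_mul h.integrable'').congr
        (ae_of_all _ fun x => mul_comm _ _))
      h_sq,
    ← integral_const_mul, ← integral_add hf_sq h_sq]
  exact integral_mono (h_cross.const_mul 2) (hf_sq.add h_sq)
    fun x => by simpa only [Pi.mul_apply, sq, mul_assoc] using two_mul_le_add_sq (f' x) (w' x)

end HasRegularLineDerivs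

/-- A weak form of `2 ∫ ∇f · ∇w ≤ ∫ ‖∇f‖ ^ 2 + ∫ ‖∇w‖ ^ 2`. -/
theorem two_mul_integral_mul_neg_sum_le {ι : Type*} [Fintype ι] (b : OrthonormalBasis ι ℝ E)
    {w : E → ℝ} {w' w'' : ι → E → ℝ} (hw : ∀ i, HasRegularLineDerivs (b i) w (w' i) (w'' i))
    (hf : Differentiable ℝ f) (hf_int : Integrable f)
    (h_grad : Integrable fun x => ‖fderiv ℝ f x‖ ^ 2) :
    2 * ∫ x, f x * -∑ i, w'' i x ≤
      (∫ x, ‖fderiv ℝ f x‖ ^ 2) + ∫ x, w x * -∑ i, w'' i x := by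
  have h_meas : ∀ i, AEStronglyMeasurable fun x => fderiv ℝ f x (b i) := fun i =>
    (measurable_fderiv_apply_const ℝ f _).aestronglyMeasurable
  have h_sq : ∀ i, Integrable fun x => fderiv ℝ f x (b i) ^ 2 := fun i =>
    h_grad.mono' ((h_meas i).pow 2) (ae_of_all _ fun x => by
      rw [norm_of_nonneg (sq_nonneg _), norm_sq_eq_sum_apply_basis_sq b]
      exact Finset.single_le_sum (f := fun i => fderiv ℝ f x (b i) ^ 2)
        (fun j _ => sq_nonneg _) (Finset.mem_univ i))
  have h_sum : ∀ g : E → ℝ, (∀ i, Integrable fun x => g x * w'' i x) →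
      ∫ x, g x * -∑ i, w'' i x = ∑ i, ∫ x, g x * -w'' i x := fun g hg => by
    simp only [← Finset.sum_neg_distrib, Finset.mul_sum]
    exact integral_finsetSum _ fun i _ => by simpa only [mul_neg] using! (hg i).neg
  rw [h_sum f fun i => (hw i).isBoundedContinuous''.integrable_mul hf_int,
    h_sum w fun i => by
      simpa only [mul_comm] using (hw i).isBoundedContinuous.integrable_mul (hw i).integrable'']
  simp only [norm_sq_eq_sum_apply_basis_sq b]
  rw [integral_finsetSum _ fun i _ => h_sq i, Finset.mul_sum, ← Finset.sum_add_distrib]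
  exact Finset.sum_le_sum fun i _ => (hw i).two_mul_integral_mul_le
    (fun x => (hf x).hasFDerivAt.hasLineDerivAt _) hf_int
    ((memLp_two_iff_integrable_sq (h_meas i)).2 (h_sq i))

end ConvolutionDuality

section PowerKernel

open Set Filter Topology
open scoped Convolution RealInnerProductSpace

variable {E : Type*} [NormedAddCommGroup E]

/-- The regularisation `(‖x‖² + a) ^ (-p)` of the power `‖x‖ ^ (-2 p)`. -/
def powerKernel (a p : ℝ) (x : E) : ℝ := (‖x‖ ^ 2 + a) ^ (-p)

variable {a b p : ℝ}

lemma powerKernel_pos (ha : 0 < a) (p : ℝ) (x : E) : 0 < powerKernel a p x :=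
  rpow_pos_of_pos (by positivity) _

@[fun_prop]
lemma continuous_powerKernel (ha : 0 < a) (p : ℝ) : Continuous (powerKernel a p : E → ℝ) :=
  Continuous.rpow_const (by fun_prop) fun x => Or.inl (by positivity)

lemma powerKernel_le (ha : 0 < a) (hp : 0 ≤ p) (x : E) : powerKernel a p x ≤ a ^ (-p) :=
  rpow_le_rpow_of_nonpos ha (le_add_of_nonneg_left (sq_nonneg _)) (neg_nonpos.2 hp)

lemma isBoundedContinuous_powerKernel (ha : 0 < a) (hp : 0 ≤ p) :
    IsBoundedContinuous (powerKernel a p : E → ℝ) :=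
  isBoundedContinuous_of_norm_le (continuous_powerKernel ha p) fun x => by
    rw [norm_of_nonneg (powerKernel_pos ha p x).le]
    exact powerKernel_le ha hp x

lemma rpow_mul_powerKernel (ha : 0 < a) (p s : ℝ) (x : E) :
    (‖x‖ ^ 2 + a) ^ s * powerKernel a p x = powerKernel a (p - s) x := by
  rw [powerKernel, powerKernel, ← rpow_add (by positivity)]
  ring_nf

lemma mul_powerKernel_add_one (ha : 0 < a) (p : ℝ) (x : E) :
    (‖x‖ ^ 2 + a) * powerKernel a (p + 1) x = powerKernel a p x := by
  simpa using rpow_mul_powerKernel ha (p + 1) 1 x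

lemma powerKernel_anti (ha : 0 < a) (hab : a ≤ b) (hp : 0 ≤ p) (x : E) :
    powerKernel b p x ≤ powerKernel a p x :=
  rpow_le_rpow_of_nonpos (by positivity) (by gcongr) (neg_nonpos.2 hp)

lemma powerKernel_sub_le (ha : 0 < a) (hab : a ≤ b) (hp : 0 ≤ p) (x : E) :
    powerKernel a p x - powerKernel b p x ≤ p * (b - a) * powerKernel a (p + 1) x := by
  have hb : 0 < b := ha.trans_le hab
  have hs : 0 < ‖x‖ ^ 2 + a := by positivity
  have : 0 < ‖x‖ ^ 2 + b := by positivity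
  set r := (‖x‖ ^ 2 + b) / (‖x‖ ^ 2 + a) with hr
  have hr0 : 0 < r := by positivity
  have h_mul : (‖x‖ ^ 2 + a) * r = ‖x‖ ^ 2 + b := by rw [hr]; field_simp
  have h_factor : powerKernel b p x = powerKernel a p x * r ^ (-p) := by
    rw [powerKernel, powerKernel, ← mul_rpow hs.le hr0.le, h_mul]
  have h_bernoulli : 1 - p * (r - 1) ≤ r ^ (-p) := by
    rw [rpow_def_of_pos hr0]
    nlinarith [add_one_le_exp (log r * -p), log_le_sub_one_of_pos hr0]
  calc powerKernel a p x - powerKernel b p x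
      ≤ powerKernel a p x - powerKernel a p x * (1 - p * (r - 1)) := by
        rw [h_factor]
        have := (powerKernel_pos ha p x).le
        gcongr
    _ = p * ((‖x‖ ^ 2 + a) * r - (‖x‖ ^ 2 + a)) * powerKernel a (p + 1) x := by
        rw [← mul_powerKernel_add_one ha p]; ring
    _ = p * (b - a) * powerKernel a (p + 1) x := by rw [h_mul]; ring

variable [InnerProductSpace ℝ E] {e : E}

lemma norm_inner_pow_mul_powerKernel_sub_le (ha : 0 < a) (hab : a ≤ b) (hp : 0 ≤ p)
    (he : ‖e‖ ≤ 1) (j : ℕ) (x : E) :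
    ‖⟪x, e⟫ ^ j * (powerKernel a p x - powerKernel b p x)‖ ≤
      p * (b - a) * powerKernel a (p + 1 - j / 2) x := by
  have h_inner : ‖⟪x, e⟫‖ ≤ (‖x‖ ^ 2 + a) ^ (1 / 2 : ℝ) := by
    calc ‖⟪x, e⟫‖ ≤ ‖x‖ * ‖e‖ := norm_inner_le_norm x e
      _ ≤ ‖x‖ := mul_le_of_le_one_right (norm_nonneg x) he
      _ ≤ √(‖x‖ ^ 2 + a) := le_sqrt_of_sq_le (by linarith)
      _ = _ := sqrt_eq_rpow _
  have h_pow : ‖⟪x, e⟫‖ ^ j ≤ (‖x‖ ^ 2 + a) ^ (j / 2 : ℝ) := by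
    calc ‖⟪x, e⟫‖ ^ j ≤ ((‖x‖ ^ 2 + a) ^ (1 / 2 : ℝ)) ^ j := by gcongr
      _ = _ := by rw [← rpow_natCast, ← rpow_mul (by positivity)]; ring_nf
  rw [← rpow_mul_powerKernel ha, norm_mul, norm_pow,
    norm_of_nonneg (sub_nonneg.2 (powerKernel_anti ha hab hp x)), mul_left_comm]
  gcongr
  · exact sub_nonneg.2 (powerKernel_anti ha hab hp x)
  · exact powerKernel_sub_le ha hab hp x

lemma isBoundedContinuous_inner_pow_mul_powerKernel_sub (ha : 0 < a) (hab : a ≤ b) (hp : 0 ≤ p)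
    (he : ‖e‖ ≤ 1) {j : ℕ} (hj : j / 2 ≤ p + 1) :
    IsBoundedContinuous fun x => ⟪x, e⟫ ^ j * (powerKernel a p x - powerKernel b p x) := by
  have hb := ha.trans_le hab
  have : 0 ≤ b - a := sub_nonneg.2 hab
  refine isBoundedContinuous_of_norm_le (C := p * (b - a) * a ^ (-(p + 1 - j / 2))) (by fun_prop)
    fun x => (norm_inner_pow_mul_powerKernel_sub_le ha hab hp he j x).trans ?_
  gcongr
  exact powerKernel_le ha (by linarith) x

lemma hasLineDerivAt_powerKernel (ha : 0 < a) (p : ℝ) (x e : E) :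
    HasLineDerivAt ℝ (powerKernel a p) (-2 * p * (⟪x, e⟫ * powerKernel a (p + 1) x)) x e := by
  have h_base : HasFDerivAt (fun y : E => ‖y‖ ^ 2 + a) (2 • innerSL ℝ x) x :=
    (hasStrictFDerivAt_norm_sq x).hasFDerivAt.add_const a
  have h_rpow := h_base.rpow_const (p := -p) (Or.inl (by positivity))
  refine HasDerivAt.congr_deriv (h_rpow.hasLineDerivAt e) ?_
  simp only [powerKernel, smul_apply, innerSL_apply_apply, smul_eq_mul,
    nsmul_eq_mul, neg_add, ← sub_eq_add_neg]
  push_cast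
  ring

lemma hasLineDerivAt_powerKernel_sub (ha : 0 < a) (hb : 0 < b) (p : ℝ) (x e : E) :
    HasLineDerivAt ℝ (fun x => powerKernel a p x - powerKernel b p x)
      (-2 * p * (⟪x, e⟫ * (powerKernel a (p + 1) x - powerKernel b (p + 1) x))) x e :=
  (HasDerivAt.sub (hasLineDerivAt_powerKernel ha p x e)
    (hasLineDerivAt_powerKernel hb p x e)).congr_deriv (by ring)

lemma hasLineDerivAt_inner_mul_powerKernel_sub (ha : 0 < a) (hb : 0 < b) (p : ℝ) (x : E)
    (he : ‖e‖ = 1) :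
    HasLineDerivAt ℝ (fun x => ⟪x, e⟫ * (powerKernel a p x - powerKernel b p x))
      (powerKernel a p x - powerKernel b p x -
        2 * p * (⟪x, e⟫ ^ 2 * (powerKernel a (p + 1) x - powerKernel b (p + 1) x))) x e := by
  have h_inner : HasLineDerivAt ℝ (fun y : E => ⟪y, e⟫) 1 x e := by
    have h_lin := ((innerSL ℝ e).hasFDerivAt (x := x)).hasLineDerivAt e
    simpa only [innerSL_apply_apply, real_inner_comm e, real_inner_self_eq_norm_sq, he,
      one_pow] using! h_lin
  refine (HasDerivAt.mul h_inner (hasLineDerivAt_powerKernel_sub ha hb p x e)).congr_deriv ?_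
  simp only [zero_smul, add_zero]
  ring

-- The trace weight `2 (p + 1)` cancels the `‖x‖²` part of `powerKernel · (p + 1)`.
lemma sum_second_deriv_powerKernel_sub {ι : Type*} [Fintype ι] (ha : 0 < a) (hb : 0 < b)
    (basis : OrthonormalBasis ι ℝ E) (hp : Module.finrank ℝ E = 2 * (p + 1)) (x : E) :
    ∑ i, (powerKernel a (p + 1) x - powerKernel b (p + 1) x - 2 * (p + 1) *
        (⟪x, basis i⟫ ^ 2 * (powerKernel a (p + 1 + 1) x - powerKernel b (p + 1 + 1) x))) =
      2 * (p + 1) * (a * powerKernel a (p + 1 + 1) x - b * powerKernel b (p + 1 + 1) x) := by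
  have h_norm : ∑ i, ⟪x, basis i⟫ ^ 2 = ‖x‖ ^ 2 := by
    simpa only [norm_eq_abs, sq_abs] using basis.sum_sq_norm_inner_left x
  rw [Finset.sum_sub_distrib, ← Finset.mul_sum, ← Finset.sum_mul, h_norm, Finset.sum_const,
    Finset.card_univ, ← Module.finrank_eq_card_basis basis.toBasis, nsmul_eq_mul, hp,
    ← mul_powerKernel_add_one ha (p + 1), ← mul_powerKernel_add_one hb (p + 1)]
  ring

variable [FiniteDimensional ℝ E] [MeasurableSpace E] [BorelSpace E]

lemma integrable_powerKernel (ha : 0 < a) (hp : Module.finrank ℝ E / 2 < p) :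
    Integrable (powerKernel a p : E → ℝ) := by
  have h_one := integrable_rpow_neg_one_add_norm_sq (E := E) (μ := volume) (r := 2 * p)
    (by linarith)
  have hp0 : 0 < p := lt_of_le_of_lt (by positivity) hp
  have hm : 0 < min 1 a := lt_min one_pos ha
  refine (h_one.const_mul (min 1 a ^ (-p))).mono'
    (continuous_powerKernel ha p).aestronglyMeasurable (ae_of_all _ fun x => ?_)
  rw [norm_of_nonneg (powerKernel_pos ha p x).le, show -(2 * p) / 2 = -p by ring,
    ← mul_rpow hm.le (by positivity)]
  refine rpow_le_rpow_of_nonpos (by positivity) ?_ (neg_nonpos.2 hp0.le)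
  nlinarith [min_le_left 1 a, min_le_right 1 a, sq_nonneg ‖x‖]

lemma integrable_inner_pow_mul_powerKernel_sub (ha : 0 < a) (hab : a ≤ b) (hp : 0 ≤ p)
    (he : ‖e‖ ≤ 1) {j : ℕ} (hj : (Module.finrank ℝ E + j) / 2 < p + 1) :
    Integrable fun x => ⟪x, e⟫ ^ j * (powerKernel a p x - powerKernel b p x) :=
  have hb := ha.trans_le hab
  ((integrable_powerKernel ha (by linarith)).const_mul _).mono'
    (Continuous.aestronglyMeasurable (by fun_prop))
    (ae_of_all _ (norm_inner_pow_mul_powerKernel_sub_le ha hab hp he j))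

lemma hasRegularLineDerivs_powerKernel_sub (ha : 0 < a) (hab : a ≤ b) (hp : 0 ≤ p)
    (hdim : Module.finrank ℝ E < 2 * p + 3) (he : ‖e‖ = 1) :
    HasRegularLineDerivs e (fun x => powerKernel a p x - powerKernel b p x)
      (fun x => -2 * p * (⟪x, e⟫ * (powerKernel a (p + 1) x - powerKernel b (p + 1) x)))
      (fun x => -2 * p * (powerKernel a (p + 1) x - powerKernel b (p + 1) x -
        2 * (p + 1) * (⟪x, e⟫ ^ 2 *
          (powerKernel a (p + 1 + 1) x - powerKernel b (p + 1 + 1) x)))) := by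
  have hb := ha.trans_le hab
  have h_bdd : ∀ (j : ℕ) {q : ℝ}, 0 ≤ q → (j / 2 : ℝ) ≤ q + 1 →
      IsBoundedContinuous fun x => ⟪x, e⟫ ^ j * (powerKernel a q x - powerKernel b q x) :=
    fun j q hq hj => isBoundedContinuous_inner_pow_mul_powerKernel_sub ha hab hq he.le hj
  have h_int : ∀ (j : ℕ) {q : ℝ}, 0 ≤ q → (Module.finrank ℝ E + j : ℝ) / 2 < q + 1 →
      Integrable fun x => ⟪x, e⟫ ^ j * (powerKernel a q x - powerKernel b q x) :=
    fun j q hq hj => integrable_inner_pow_mul_powerKernel_sub ha hab hq he.le hj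
  refine ⟨fun x => hasLineDerivAt_powerKernel_sub ha hb p x e, fun x => HasDerivAt.const_mul _
    (hasLineDerivAt_inner_mul_powerKernel_sub ha hb (p + 1) x he), ?_, ?_, ?_, ?_, ?_⟩
  · simpa only [pow_zero, one_mul] using h_bdd 0 hp (by push_cast; linarith)
  · simpa only [pow_one] using
      (h_bdd 1 (q := p + 1) (by linarith) (by push_cast; linarith)).const_mul (-2 * p)
  · simpa only [pow_zero, one_mul] using
      ((h_bdd 0 (q := p + 1) (by linarith) (by push_cast; linarith)).sub
        ((h_bdd 2 (q := p + 1 + 1) (by linarith) (by push_cast; linarith)).const_mul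
          (2 * (p + 1)))).const_mul (-2 * p)
  · simpa only [pow_one] using
      (h_int 1 (q := p + 1) (by linarith) (by push_cast; linarith)).const_mul (-2 * p)
  · simpa only [pow_zero, one_mul] using!
      ((h_int 0 (q := p + 1) (by linarith) (by push_cast; linarith)).sub
        ((h_int 2 (q := p + 1 + 1) (by linarith) (by push_cast; linarith)).const_mul
          (2 * (p + 1)))).const_mul (-2 * p)

end PowerKernel

section RegularizedGreen

open Set Filter Topology
open scoped Convolution RealInnerProductSpace

variable {d : ℕ} {a b : ℝ}

/-- The Green function of `ℝ^d` with `‖x‖²` replaced by `‖x‖² + a`. -/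
def regGreenKernel (d : ℕ) (a : ℝ) (x : EuclideanSpace ℝ (Fin d)) : ℝ :=
  powerKernel a ((d - 2) / 2) x / ((d - 2) * sphereArea d)

/-- The function `-Δ (regGreenKernel d a)`, an approximation of the identity as `a → 0`. -/
def greenMollifier (d : ℕ) (a : ℝ) (x : EuclideanSpace ℝ (Fin d)) : ℝ :=
  d / sphereArea d * (a * powerKernel a ((d + 2) / 2) x)

lemma sphereArea_pos (hd : 0 < d) : 0 < sphereArea d := by
  have : 0 < Gamma (d / 2) := Gamma_pos_of_pos (by positivity)
  rw [sphereArea]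
  positivity

lemma isBoundedContinuous_greenMollifier (d : ℕ) (ha : 0 < a) :
    IsBoundedContinuous (greenMollifier d a) :=
  ((isBoundedContinuous_powerKernel ha (by positivity)).const_mul a).const_mul _

theorem two_mul_integral_mul_convolution_greenMollifier_sub_le (hd : 2 < d) (ha : 0 < a)
    (hab : a ≤ b) {f v : EuclideanSpace ℝ (Fin d) → ℝ} (hf : Differentiable ℝ f)
    (hf_int : Integrable f) (h_grad : Integrable fun x => ‖fderiv ℝ f x‖ ^ 2)
    (hv : Integrable v) :
    2 * ∫ x, f x * ((v ⋆ greenMollifier d a) x - (v ⋆ greenMollifier d b) x) ≤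
      (∫ x, ‖fderiv ℝ f x‖ ^ 2) +
        ∫ x, (v ⋆ fun y => regGreenKernel d a y - regGreenKernel d b y) x *
          ((v ⋆ greenMollifier d a) x - (v ⋆ greenMollifier d b) x) := by
  have hb := ha.trans_le hab
  have hd2 : (0 : ℝ) < d - 2 := by rw [sub_pos]; exact_mod_cast hd
  have hs := sphereArea_pos (pos_of_gt hd)
  let basis := stdOrthonormalBasis ℝ (EuclideanSpace ℝ (Fin d))
  have h_kernel := fun i => (hasRegularLineDerivs_powerKernel_sub (p := (d - 2) / 2) ha hab
    (by positivity) (by rw [finrank_euclideanSpace_fin]; linarith)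
    (basis.orthonormal.1 i)).const_mul ((d - 2) * sphereArea d)⁻¹
  have h_trace : ∀ x, -∑ i, ((d - 2) * sphereArea d)⁻¹ * (-2 * ((d - 2) / 2) *
      (powerKernel a ((d - 2) / 2 + 1) x - powerKernel b ((d - 2) / 2 + 1) x -
        2 * ((d - 2) / 2 + 1) * (⟪x, basis i⟫ ^ 2 * (powerKernel a ((d - 2) / 2 + 1 + 1) x -
          powerKernel b ((d - 2) / 2 + 1 + 1) x)))) =
      greenMollifier d a x - greenMollifier d b x := fun x => by
    rw [← Finset.mul_sum, ← Finset.mul_sum,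
      sum_second_deriv_powerKernel_sub ha hb basis (by rw [finrank_euclideanSpace_fin]; ring),
      greenMollifier, greenMollifier, show ((d : ℝ) - 2) / 2 + 1 + 1 = (d + 2) / 2 by ring]
    field_simp
    ring
  have h_dual := two_mul_integral_mul_neg_sum_le basis
    (fun i => (h_kernel i).convolution hv) hf hf_int h_grad
  simp only [neg_sum_convolution_eq (fun i => (h_kernel i).isBoundedContinuous'')
    (isBoundedContinuous_greenMollifier d ha) (isBoundedContinuous_greenMollifier d hb)
    h_trace hv] at h_dual
  convert h_dual using 6
  funext y
  rw [regGreenKernel, regGreenKernel, ← sub_div, div_eq_inv_mul]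

end RegularizedGreen

section Scheffe

open Filter Topology

variable {α ι : Type*} [MeasurableSpace α] {μ : Measure α} {l : Filter ι}
  [l.IsCountablyGenerated] {g : ι → α → ℝ} {v φ : α → ℝ}

-- Scheffé's argument: `|v - g| = 2 (v - g)⁺ - (v - g)`, and `(v - g)⁺ ≤ v` is dominated.
theorem tendsto_integral_abs_sub_of_integral_eq (hv : Integrable v μ)
    (hg : ∀ᶠ i in l, Integrable (g i) μ) (hg0 : ∀ᶠ i in l, ∀ x, 0 ≤ g i x)
    (h_mass : ∀ᶠ i in l, ∫ x, g i x ∂μ = ∫ x, v x ∂μ)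
    (h_lim : ∀ x, Tendsto (fun i => g i x) l (𝓝 (v x))) :
    Tendsto (fun i => ∫ x, |v x - g i x| ∂μ) l (𝓝 0) := by
  have h_pos : Tendsto (fun i => ∫ x, max (v x - g i x) 0 ∂μ) l (𝓝 0) := by
    have h_dom := tendsto_integral_filter_of_dominated_convergence (μ := μ) (l := l)
      (F := fun i x => max (v x - g i x) 0) (f := fun _ => 0) (fun x => ‖v x‖) ?_ ?_ hv.norm
      (ae_of_all _ fun x => ?_)
    · simpa only [integral_zero] using h_dom
    · filter_upwards [hg] with i hi using (hv.sub hi).pos_part.aestronglyMeasurable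
    · filter_upwards [hg0] with i hi
      refine ae_of_all _ fun x => ?_
      rw [norm_of_nonneg (le_max_right _ _)]
      exact max_le ((sub_le_self _ (hi x)).trans (le_abs_self _)) (norm_nonneg _)
    · simpa using ((h_lim x).const_sub (v x)).max (tendsto_const_nhds (x := 0))
  have h_twice := h_pos.const_mul 2
  rw [mul_zero] at h_twice
  refine h_twice.congr' ?_
  filter_upwards [hg, h_mass] with i hi h_eq
  have h_sub : Integrable (fun x => v x - g i x) μ := hv.sub hi
  have h_abs : ∀ x, |v x - g i x| = 2 * max (v x - g i x) 0 - (v x - g i x) := fun x => by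
    rcases le_total 0 (v x - g i x) with h | h
    · rw [abs_of_nonneg h, max_eq_left h]; ring
    · rw [abs_of_nonpos h, max_eq_right h]; ring
  simp only [h_abs]
  rw [integral_sub (h_sub.pos_part.const_mul 2) h_sub, integral_sub hv hi, h_eq, sub_self,
    sub_zero, integral_const_mul]

lemma tendsto_integral_mul_of_integral_eq (hv : Integrable v μ)
    (hg : ∀ᶠ i in l, Integrable (g i) μ) (hg0 : ∀ᶠ i in l, ∀ x, 0 ≤ g i x)
    (h_mass : ∀ᶠ i in l, ∫ x, g i x ∂μ = ∫ x, v x ∂μ)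
    (h_lim : ∀ x, Tendsto (fun i => g i x) l (𝓝 (v x)))
    (hφ : AEStronglyMeasurable φ μ) {C : ℝ} (hC : ∀ x, ‖φ x‖ ≤ C) :
    Tendsto (fun i => ∫ x, φ x * g i x ∂μ) l (𝓝 (∫ x, φ x * v x ∂μ)) := by
  have h_zero := (tendsto_integral_abs_sub_of_integral_eq hv hg hg0 h_mass h_lim).const_mul C
  rw [mul_zero] at h_zero
  rw [tendsto_iff_norm_sub_tendsto_zero]
  refine squeeze_zero' (Eventually.of_forall fun _ => norm_nonneg _) ?_ h_zero
  filter_upwards [hg] with i hi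
  rw [← integral_sub (hi.bdd_mul hφ (ae_of_all _ hC)) (hv.bdd_mul hφ (ae_of_all _ hC)),
    ← integral_const_mul]
  refine norm_integral_le_of_norm_le ((hv.sub hi).abs.const_mul C) (ae_of_all _ fun x => ?_)
  rw [← mul_sub, norm_mul, norm_sub_rev]
  exact mul_le_mul_of_nonneg_right (hC x) (norm_nonneg _)

end Scheffe

section Mollifier

open Set Filter Topology Module
open scoped Convolution

variable {d : ℕ} {a b c : ℝ} {v : EuclideanSpace ℝ (Fin d) → ℝ}

lemma greenMollifier_nonneg (d : ℕ) (ha : 0 < a) (x : EuclideanSpace ℝ (Fin d)) :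
    0 ≤ greenMollifier d a x := by
  rcases d.eq_zero_or_pos with rfl | hd
  · simp [greenMollifier]
  · have := sphereArea_pos hd
    have := (powerKernel_pos ha ((d + 2) / 2) x).le
    unfold greenMollifier
    positivity

lemma integrable_greenMollifier (d : ℕ) (ha : 0 < a) : Integrable (greenMollifier d a) :=
  ((integrable_powerKernel ha (by
    rw [finrank_euclideanSpace_fin]; linarith)).const_mul a).const_mul _

lemma integral_greenMollifier_one (hd : 0 < d) : ∫ x, greenMollifier d 1 x = 1 := by
  have h_talenti : ∀ y : Fin d → ℝ, powerKernel 1 ((d + 2) / 2) (WithLp.toLp 2 y) =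
      talentiWeight y ^ (-((d + 2) / 2) : ℝ) := fun y => by
    rw [powerKernel, talentiWeight, EuclideanSpace.real_norm_sq_eq, add_comm]
  have h_mass : ∫ x : EuclideanSpace ℝ (Fin d), powerKernel 1 ((d + 2) / 2) x =
      π ^ (d / 2 : ℝ) / (d / 2 * Gamma (d / 2)) := by
    rw [← (PiLp.volume_preserving_toLp (Fin d)).integral_comp
      (MeasurableEquiv.toLp 2 (Fin d → ℝ)).measurableEmbedding]
    simp only [h_talenti]
    rw [integral_talentiWeight_rpow_neg d (by linarith), show ((d : ℝ) + 2) / 2 = d / 2 + 1 by ring,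
      add_sub_cancel_left, Gamma_one, mul_one, Gamma_add_one (by positivity)]
  have : 0 < Gamma (d / 2 : ℝ) := Gamma_pos_of_pos (by positivity)
  simp only [greenMollifier, one_mul]
  rw [integral_const_mul, h_mass, sphereArea]
  field_simp

lemma greenMollifier_inv_sq (hc : 0 < c) (x : EuclideanSpace ℝ (Fin d)) :
    greenMollifier d (c ^ 2)⁻¹ x = c ^ d * greenMollifier d 1 (c • x) := by
  have h_base : ‖c • x‖ ^ 2 + 1 = c ^ 2 * (‖x‖ ^ 2 + (c ^ 2)⁻¹) := by
    rw [norm_smul, norm_of_nonneg hc.le]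
    field_simp
  have h_exp : (c ^ 2 : ℝ) ^ (-((d + 2) / 2) : ℝ) = (c ^ d * c ^ 2)⁻¹ := by
    rw [← pow_add, ← rpow_natCast c 2, ← rpow_natCast c (d + 2), ← rpow_mul hc.le,
      ← rpow_neg hc.le]
    congr 1
    push_cast
    ring
  rw [greenMollifier, greenMollifier, powerKernel, powerKernel, h_base,
    mul_rpow (by positivity) (by positivity), h_exp]
  field_simp

lemma integral_greenMollifier (hd : 0 < d) (ha : 0 < a) : ∫ x, greenMollifier d a x = 1 := by
  obtain ⟨c, hc, rfl⟩ : ∃ c : ℝ, 0 < c ∧ (c ^ 2)⁻¹ = a :=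
    ⟨(√a)⁻¹, by positivity, by rw [inv_pow, inv_inv, sq_sqrt ha.le]⟩
  simp only [greenMollifier_inv_sq hc]
  rw [integral_const_mul, Measure.integral_comp_smul, integral_greenMollifier_one hd,
    finrank_euclideanSpace_fin, abs_of_pos (by positivity), smul_eq_mul, mul_one,
    mul_inv_cancel₀ (by positivity)]

lemma tendsto_norm_pow_mul_greenMollifier_one (hd : 0 < d) :
    Tendsto (fun x : EuclideanSpace ℝ (Fin d) => ‖x‖ ^ finrank ℝ (EuclideanSpace ℝ (Fin d)) *
      greenMollifier d 1 x) (Bornology.cobounded _) (𝓝 0) := by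
  have hs := sphereArea_pos hd
  have h_norm : ∀ x : EuclideanSpace ℝ (Fin d), ‖x‖ ^ d ≤ (‖x‖ ^ 2 + 1) ^ (d / 2 : ℝ) := fun x => by
    calc ‖x‖ ^ d = (‖x‖ ^ 2) ^ (d / 2 : ℝ) := by
          rw [← rpow_natCast, ← rpow_natCast, ← rpow_mul (norm_nonneg x)]
          congr 1
          push_cast
          ring
      _ ≤ _ := by gcongr; linarith
  have h_sq : Tendsto (fun x : EuclideanSpace ℝ (Fin d) => ‖x‖ ^ 2 + 1)
      (Bornology.cobounded _) atTop :=
    tendsto_atTop_add_const_right _ _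
      ((tendsto_pow_atTop two_ne_zero).comp tendsto_norm_cobounded_atTop)
  have h_lim := h_sq.inv_tendsto_atTop.const_mul (d / sphereArea d)
  rw [mul_zero] at h_lim
  refine squeeze_zero (fun x => mul_nonneg (by positivity) (greenMollifier_nonneg d one_pos x))
    (fun x => ?_) h_lim
  have h_decay : (‖x‖ ^ 2 + 1) ^ (d / 2 : ℝ) * powerKernel 1 ((d + 2) / 2) x =
      (‖x‖ ^ 2 + 1)⁻¹ := by
    rw [rpow_mul_powerKernel one_pos, powerKernel, ← rpow_neg_one]
    ring_nf
  rw [finrank_euclideanSpace_fin, greenMollifier, one_mul, mul_left_comm, Pi.inv_apply, ← h_decay]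
  have := (powerKernel_pos one_pos ((d + 2) / 2) x).le
  gcongr
  exact h_norm x

lemma tendsto_convolution_greenMollifier (hd : 0 < d) (hv : Integrable v) (hv_cont : Continuous v)
    (x : EuclideanSpace ℝ (Fin d)) :
    Tendsto (fun c : ℝ => (v ⋆ greenMollifier d (c ^ 2)⁻¹) x) atTop (𝓝 (v x)) := by
  have h_peak := tendsto_integral_comp_smul_smul_of_integrable'
    (fun y => greenMollifier_nonneg d one_pos y) (integral_greenMollifier_one hd)
    (tendsto_norm_pow_mul_greenMollifier_one hd) hv hv_cont.continuousAt (x₀ := x)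
  refine h_peak.congr' ?_
  filter_upwards [eventually_gt_atTop 0] with c hc
  simp only [convolution_lsmul, greenMollifier_inv_sq hc, finrank_euclideanSpace_fin, smul_eq_mul,
    mul_comm]

lemma tendsto_convolution_greenMollifier_zero (hd : 0 < d) (hv : Integrable v)
    (x : EuclideanSpace ℝ (Fin d)) :
    Tendsto (fun c : ℝ => (v ⋆ greenMollifier d (c ^ 2)) x) atTop (𝓝 0) := by
  obtain ⟨C, hC⟩ := (isBoundedContinuous_greenMollifier d one_pos).exists_norm_le
  have h_lim : Tendsto (fun c : ℝ => (∫ y, ‖v y‖) * ((c⁻¹) ^ d * C)) atTop (𝓝 0) := by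
    simpa [hd.ne'] using
      ((tendsto_inv_atTop_zero.pow d).mul_const C).const_mul (∫ y, ‖v y‖)
  refine squeeze_zero_norm' ?_ h_lim
  filter_upwards [eventually_gt_atTop 0] with c hc
  refine norm_convolution_le hv (fun y => ?_) x
  have h_scale := greenMollifier_inv_sq (d := d) (inv_pos.2 hc) y
  rw [inv_pow, inv_inv] at h_scale
  rw [h_scale, norm_mul, norm_of_nonneg (by positivity), inv_pow]
  gcongr
  exact hC _

end Mollifier

section GreenPotential

open Set Filter Topology Metric Module
open scoped Convolution

variable {d : ℕ} {v : EuclideanSpace ℝ (Fin d) → ℝ}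

lemma greenKernel_nonneg (hd : 2 < d) (x : EuclideanSpace ℝ (Fin d)) : 0 ≤ greenKernel d x := by
  have := sphereArea_pos (pos_of_gt hd)
  have : (0 : ℝ) < d - 2 := by rw [sub_pos]; exact_mod_cast hd
  unfold greenKernel
  positivity

@[fun_prop]
lemma measurable_greenKernel (d : ℕ) : Measurable (greenKernel d) := by
  unfold greenKernel
  fun_prop

lemma integrable_indicator_ball_greenKernel (hd : 2 < d) :
    Integrable ((ball 0 1).indicator (greenKernel d)) := by
  rw [integrable_indicator_iff measurableSet_ball]
  refine integrableOn_ball_of_norm_le_rpow (C := ((d - 2) * sphereArea d)⁻¹) (α := d - 2)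
    ?_ ?_ (ae_of_all _ fun x => ?_) (measurable_greenKernel d).aestronglyMeasurable
  · rw [finrank_euclideanSpace_fin]
    exact (pos_of_gt hd)
  · rw [finrank_euclideanSpace_fin]
    linarith
  · rw [norm_of_nonneg (greenKernel_nonneg hd x), greenKernel, div_eq_inv_mul, neg_sub]

lemma greenKernel_le_indicator_add (hd : 2 < d) (x : EuclideanSpace ℝ (Fin d)) :
    greenKernel d x ≤ (ball 0 1).indicator (greenKernel d) x + ((d - 2) * sphereArea d)⁻¹ := by
  have := sphereArea_pos (pos_of_gt hd)
  have hd2 : (0 : ℝ) < d - 2 := by rw [sub_pos]; exact_mod_cast hd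
  by_cases hx : x ∈ ball (0 : EuclideanSpace ℝ (Fin d)) 1
  · rw [indicator_of_mem hx]
    exact le_add_of_nonneg_right (by positivity)
  · rw [indicator_of_notMem hx, zero_add, greenKernel, div_eq_inv_mul]
    refine mul_le_of_le_one_right (by positivity) (rpow_le_one_of_one_le_of_nonpos ?_ ?_)
    · simpa using hx
    · linarith

lemma invLap_eq_convolution (d : ℕ) (v : EuclideanSpace ℝ (Fin d) → ℝ) :
    invLap d v = v ⋆ greenKernel d := by
  ext x
  simp only [invLap, convolution_lsmul, smul_eq_mul, mul_comm]

lemma stronglyMeasurable_invLap (hv : Measurable v) : StronglyMeasurable (invLap d v) :=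
  StronglyMeasurable.integral_prod_right
    (f := fun x y => greenKernel d (x - y) * v y) (by fun_prop)

lemma norm_greenKernel_mul_le (hd : 2 < d) {M : ℝ} (hM : ∀ x, ‖v x‖ ≤ M)
    (x y : EuclideanSpace ℝ (Fin d)) :
    ‖v y • greenKernel d (x - y)‖ ≤ M * (ball 0 1).indicator (greenKernel d) (x - y) +
      ((d - 2) * sphereArea d)⁻¹ * ‖v y‖ := by
  have hG := greenKernel_nonneg hd
  calc ‖v y • greenKernel d (x - y)‖ = ‖v y‖ * greenKernel d (x - y) := by
        rw [norm_smul, norm_of_nonneg (hG _)]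
    _ ≤ ‖v y‖ * ((ball 0 1).indicator (greenKernel d) (x - y) + ((d - 2) * sphereArea d)⁻¹) := by
        gcongr
        exact greenKernel_le_indicator_add hd _
    _ ≤ _ := by
        rw [mul_add, mul_comm ‖v y‖ (_⁻¹)]
        gcongr
        · exact indicator_nonneg (fun z _ => hG z) _
        · exact hM y

lemma integrable_majorant_greenKernel_mul (hd : 2 < d) (hv : Integrable v) (M : ℝ)
    (x : EuclideanSpace ℝ (Fin d)) :
    Integrable fun y => M * (ball 0 1).indicator (greenKernel d) (x - y) +
      ((d - 2) * sphereArea d)⁻¹ * ‖v y‖ :=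
  (((integrable_indicator_ball_greenKernel hd).comp_sub_left x).const_mul M).add
    (hv.norm.const_mul _)

lemma convolutionExistsAt_greenKernel (hd : 2 < d) (hv : Integrable v) {M : ℝ}
    (hM : ∀ x, ‖v x‖ ≤ M) (x : EuclideanSpace ℝ (Fin d)) :
    ConvolutionExistsAt v (greenKernel d) x (ContinuousLinearMap.lsmul ℝ ℝ) volume :=
  (integrable_majorant_greenKernel_mul hd hv M x).mono'
    (hv.aestronglyMeasurable.smul (Measurable.aestronglyMeasurable (by fun_prop)))
    (ae_of_all _ (norm_greenKernel_mul_le hd hM x))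

lemma norm_invLap_le (hd : 2 < d) (hv : Integrable v) {M : ℝ} (hM : ∀ x, ‖v x‖ ≤ M)
    (x : EuclideanSpace ℝ (Fin d)) :
    ‖invLap d v x‖ ≤ M * (∫ z, (ball 0 1).indicator (greenKernel d) z) +
      ((d - 2) * sphereArea d)⁻¹ * ∫ y, ‖v y‖ := by
  rw [invLap_eq_convolution]
  refine (norm_integral_le_of_norm_le (integrable_majorant_greenKernel_mul hd hv M x)
    (ae_of_all _ (norm_greenKernel_mul_le hd hM x))).trans_eq ?_
  rw [integral_add (((integrable_indicator_ball_greenKernel hd).comp_sub_left x).const_mul M)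
      (hv.norm.const_mul _), integral_const_mul, integral_const_mul,
    integral_sub_left_eq_self (fun z => (ball 0 1).indicator (greenKernel d) z)]

end GreenPotential

section GreenDuality

open Set Filter Topology Module
open scoped Convolution

variable {d : ℕ} {a b : ℝ} {f v : EuclideanSpace ℝ (Fin d) → ℝ}

lemma regGreenKernel_anti (hd : 2 < d) (ha : 0 < a) (hab : a ≤ b)
    (x : EuclideanSpace ℝ (Fin d)) : regGreenKernel d b x ≤ regGreenKernel d a x := by
  have := sphereArea_pos (pos_of_gt hd)
  have hd2 : (0 : ℝ) < d - 2 := by rw [sub_pos]; exact_mod_cast hd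
  unfold regGreenKernel
  gcongr
  exact powerKernel_anti ha hab (by positivity) x

lemma isBoundedContinuous_regGreenKernel (hd : 2 < d) (ha : 0 < a) :
    IsBoundedContinuous (regGreenKernel d a) := by
  have hd2 : (0 : ℝ) < d - 2 := by rw [sub_pos]; exact_mod_cast hd
  have h_eq : regGreenKernel d a =
      fun x => ((d - 2) * sphereArea d)⁻¹ * powerKernel a ((d - 2) / 2) x :=
    funext fun x => div_eq_inv_mul _ _
  rw [h_eq]
  exact (isBoundedContinuous_powerKernel ha (by positivity)).const_mul _

lemma regGreenKernel_sub_le_greenKernel (hd : 2 < d) (ha : 0 < a) (hb : 0 < b)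
    {x : EuclideanSpace ℝ (Fin d)} (hx : x ≠ 0) :
    regGreenKernel d a x - regGreenKernel d b x ≤ greenKernel d x := by
  have := sphereArea_pos (pos_of_gt hd)
  have hd2 : (0 : ℝ) < d - 2 := by rw [sub_pos]; exact_mod_cast hd
  have hx' : 0 < ‖x‖ := norm_pos_iff.2 hx
  have h_pow : powerKernel a ((d - 2) / 2) x ≤ ‖x‖ ^ (2 - d : ℝ) := by
    calc powerKernel a ((d - 2) / 2) x ≤ (‖x‖ ^ 2) ^ (-((d - 2) / 2) : ℝ) :=
          rpow_le_rpow_of_nonpos (by positivity) (by linarith) (by linarith)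
      _ = ‖x‖ ^ (2 - d : ℝ) := by
          rw [← rpow_natCast, ← rpow_mul hx'.le]
          congr 1
          push_cast
          ring
  have h_pos := (powerKernel_pos hb ((d - 2) / 2) x).le
  rw [regGreenKernel, regGreenKernel, greenKernel, ← sub_div]
  gcongr
  linarith

lemma convolution_nonneg {k : EuclideanSpace ℝ (Fin d) → ℝ} (hv0 : ∀ x, 0 ≤ v x)
    (hk0 : ∀ x, 0 ≤ k x) (x : EuclideanSpace ℝ (Fin d)) : 0 ≤ (v ⋆ k) x :=
  integral_nonneg fun y => mul_nonneg (hv0 y) (hk0 _)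

lemma convolution_regGreenKernel_sub_le_invLap (hd : 2 < d) (ha : 0 < a) (hb : 0 < b)
    (hv : Integrable v) (hv0 : ∀ x, 0 ≤ v x) {M : ℝ} (hM : ∀ x, ‖v x‖ ≤ M)
    (x : EuclideanSpace ℝ (Fin d)) :
    (v ⋆ fun y => regGreenKernel d a y - regGreenKernel d b y) x ≤ invLap d v x := by
  have : Nontrivial (EuclideanSpace ℝ (Fin d)) :=
    nontrivial_of_finrank_pos (R := ℝ) (by rw [finrank_euclideanSpace_fin]; exact pos_of_gt hd)
  rw [invLap_eq_convolution]
  refine integral_mono_ae (((isBoundedContinuous_regGreenKernel hd ha).sub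
    (isBoundedContinuous_regGreenKernel hd hb)).convolutionExistsAt hv x)
    (convolutionExistsAt_greenKernel hd hv hM x) ?_
  filter_upwards [Measure.ae_ne volume x] with y hy
  exact mul_le_mul_of_nonneg_left
    (regGreenKernel_sub_le_greenKernel hd ha hb (sub_ne_zero.2 hy.symm)) (hv0 y)

lemma norm_convolution_greenMollifier_le (hd : 0 < d) (ha : 0 < a) {M : ℝ}
    (hM : ∀ x, ‖v x‖ ≤ M) (x : EuclideanSpace ℝ (Fin d)) :
    ‖(v ⋆ greenMollifier d a) x‖ ≤ M := by
  have h_pos := greenMollifier_nonneg d ha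
  have h_int := integrable_greenMollifier d ha
  calc ‖(v ⋆ greenMollifier d a) x‖
      ≤ ∫ y, M * greenMollifier d a (x - y) := by
        refine norm_integral_le_of_norm_le ((h_int.comp_sub_left x).const_mul M)
          (ae_of_all _ fun y => ?_)
        rw [ContinuousLinearMap.lsmul_apply, norm_smul, norm_of_nonneg (h_pos _)]
        exact mul_le_mul_of_nonneg_right (hM y) (h_pos _)
    _ = M := by
        rw [integral_const_mul, integral_sub_left_eq_self (greenMollifier d a),
          integral_greenMollifier hd ha, mul_one]

lemma tendsto_integral_mul_convolution_greenMollifier_sub (hd : 0 < d) (hf_int : Integrable f)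
    (hv : Integrable v) (hv_cont : Continuous v) {M : ℝ} (hM : ∀ x, ‖v x‖ ≤ M) :
    Tendsto (fun c : ℝ => ∫ x, f x * ((v ⋆ greenMollifier d (c ^ 2)⁻¹) x -
      (v ⋆ greenMollifier d (c ^ 2)) x)) atTop (𝓝 (∫ x, f x * v x)) := by
  refine tendsto_integral_filter_of_dominated_convergence (fun x => ‖f x‖ * (M + M)) ?_ ?_
    (hf_int.norm.mul_const _) (ae_of_all _ fun x => ?_)
  · filter_upwards [eventually_gt_atTop 0] with c hc
    have h_cont : ∀ {a : ℝ}, 0 < a → Continuous (v ⋆ greenMollifier d a) := fun ha =>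
      ((isBoundedContinuous_greenMollifier d ha).convolution hv).continuous
    exact hf_int.aestronglyMeasurable.mul ((h_cont (a := (c ^ 2)⁻¹) (by positivity)).sub
      (h_cont (a := c ^ 2) (by positivity))).aestronglyMeasurable
  · filter_upwards [eventually_gt_atTop 0] with c hc
    refine ae_of_all _ fun x => ?_
    rw [norm_mul]
    gcongr
    exact (norm_sub_le _ _).trans (add_le_add
      (norm_convolution_greenMollifier_le hd (by positivity) hM x)
      (norm_convolution_greenMollifier_le hd (by positivity) hM x))
  · simpa only [sub_zero] using ((tendsto_convolution_greenMollifier hd hv hv_cont x).sub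
      (tendsto_convolution_greenMollifier_zero hd hv x)).const_mul (f x)

lemma integrable_convolution_greenMollifier (ha : 0 < a) (hv : Integrable v) :
    Integrable (v ⋆ greenMollifier d a) :=
  hv.integrable_convolution _ (integrable_greenMollifier d ha)

lemma integral_convolution_regGreenKernel_mul_le (hd : 2 < d) (ha : 0 < a) (hab : a ≤ b)
    (hv : Integrable v) (hv_cont : Continuous v) (hv0 : ∀ x, 0 ≤ v x) {M : ℝ}
    (hM : ∀ x, ‖v x‖ ≤ M) :
    ∫ x, (v ⋆ fun y => regGreenKernel d a y - regGreenKernel d b y) x *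
        ((v ⋆ greenMollifier d a) x - (v ⋆ greenMollifier d b) x) ≤
      ∫ x, invLap d v x * (v ⋆ greenMollifier d a) x := by
  have hb := ha.trans_le hab
  have h_anti : ∀ x, 0 ≤ regGreenKernel d a x - regGreenKernel d b x := fun x =>
    sub_nonneg.2 (regGreenKernel_anti hd ha hab x)
  have h_pot : ∀ x, 0 ≤ (v ⋆ fun y => regGreenKernel d a y - regGreenKernel d b y) x :=
    convolution_nonneg hv0 h_anti
  have h_moll : ∀ {c : ℝ}, 0 < c → ∀ x, 0 ≤ (v ⋆ greenMollifier d c) x := fun hc =>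
    convolution_nonneg hv0 (greenMollifier_nonneg d hc)
  have h_reg := (((isBoundedContinuous_regGreenKernel hd ha).sub
    (isBoundedContinuous_regGreenKernel hd hb)).convolution hv)
  refine integral_mono ?_ ?_ fun x => ?_
  · exact (h_reg.integrable_mul ((integrable_convolution_greenMollifier ha hv).sub
      (integrable_convolution_greenMollifier hb hv))).congr (ae_of_all _ fun x => mul_comm _ _)
  · exact (integrable_convolution_greenMollifier ha hv).bdd_mul
      (stronglyMeasurable_invLap hv_cont.measurable).aestronglyMeasurable
      (ae_of_all _ (norm_invLap_le hd hv hM))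
  · exact (mul_le_mul_of_nonneg_left (sub_le_self _ (h_moll hb x)) (h_pot x)).trans
      (mul_le_mul_of_nonneg_right (convolution_regGreenKernel_sub_le_invLap hd ha hb hv hv0 hM x)
        (h_moll ha x))

lemma tendsto_integral_invLap_mul_convolution_greenMollifier (hd : 2 < d) (hv : Integrable v)
    (hv_cont : Continuous v) (hv0 : ∀ x, 0 ≤ v x) {M : ℝ} (hM : ∀ x, ‖v x‖ ≤ M) :
    Tendsto (fun c : ℝ => ∫ x, invLap d v x * (v ⋆ greenMollifier d (c ^ 2)⁻¹) x) atTop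
      (𝓝 (∫ x, invLap d v x * v x)) := by
  have hd0 := pos_of_gt hd
  refine tendsto_integral_mul_of_integral_eq hv ?_ ?_ ?_
    (tendsto_convolution_greenMollifier hd0 hv hv_cont)
    (stronglyMeasurable_invLap hv_cont.measurable).aestronglyMeasurable (norm_invLap_le hd hv hM)
  · filter_upwards [eventually_gt_atTop 0] with c hc
    exact integrable_convolution_greenMollifier (by positivity) hv
  · filter_upwards [eventually_gt_atTop 0] with c hc
    exact convolution_nonneg hv0 (greenMollifier_nonneg d (by positivity))
  · filter_upwards [eventually_gt_atTop 0] with c hc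
    rw [integral_convolution _ hv (integrable_greenMollifier d (by positivity)),
      integral_greenMollifier hd0 (by positivity), ContinuousLinearMap.lsmul_apply, smul_eq_mul,
      mul_one]

theorem two_mul_integral_mul_le_add_integral_mul_invLap (hd : 2 < d) (hf : Differentiable ℝ f)
    (hf_int : Integrable f) (h_grad : Integrable fun x => ‖fderiv ℝ f x‖ ^ 2) (hv : Integrable v)
    (hv_cont : Continuous v) (hv0 : ∀ x, 0 ≤ v x) {M : ℝ} (hM : ∀ x, ‖v x‖ ≤ M) :
    2 * ∫ x, f x * v x ≤ (∫ x, ‖fderiv ℝ f x‖ ^ 2) + ∫ x, invLap d v x * v x := by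
  refine le_of_tendsto_of_tendsto
    ((tendsto_integral_mul_convolution_greenMollifier_sub (pos_of_gt hd) hf_int hv hv_cont
      hM).const_mul 2)
    ((tendsto_integral_invLap_mul_convolution_greenMollifier hd hv hv_cont hv0 hM).const_add _) ?_
  filter_upwards [eventually_ge_atTop 1] with c hc
  have h_pos : 0 < (c ^ 2)⁻¹ := by positivity
  have h_le : (c ^ 2)⁻¹ ≤ c ^ 2 :=
    (inv_le_one_of_one_le₀ (one_le_pow₀ hc)).trans (one_le_pow₀ hc)
  exact (two_mul_integral_mul_convolution_greenMollifier_sub_le hd h_pos h_le hf hf_int h_grad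
    hv).trans (add_le_add_right
      (integral_convolution_regGreenKernel_mul_le hd h_pos h_le hv hv_cont hv0 hM) _)

end GreenDuality

section HardyLittlewoodSobolev

open Set Filter Topology Metric Module
open scoped ENNReal Pointwise

lemma lintegral_mul_lintegral_mul_le_two_mul {α : Type*} [MeasurableSpace α] {μ : Measure α}
    [SFinite μ] {K : α → α → ℝ≥0∞} (hK : Measurable (Function.uncurry K))
    (hK_symm : ∀ x y, K x y = K y x) {f : α → ℝ≥0∞} (hf : Measurable f) :
    ∫⁻ x, f x * ∫⁻ y, K x y * f y ∂μ ∂μ ≤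
      2 * ∫⁻ x, f x * ∫⁻ y, K x y * {y | f y ≤ f x}.indicator f y ∂μ ∂μ := by
  let H : α → α → ℝ≥0∞ := fun x y => f x * (K x y * {y | f y ≤ f x}.indicator f y)
  have hH : Measurable (Function.uncurry H) := by
    refine (hf.comp measurable_fst).mul (hK.mul ?_)
    exact Measurable.ite (measurableSet_le (hf.comp measurable_snd) (hf.comp measurable_fst))
      (hf.comp measurable_snd) measurable_const
  have h_pt : ∀ x y, f x * (K x y * f y) ≤ H x y + H y x := fun x y => by
    rcases le_total (f y) (f x) with h | h
    · refine le_add_right (le_of_eq ?_)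
      simp only [H, indicator_of_mem (show y ∈ {y | f y ≤ f x} from h)]
    · refine le_add_left (le_of_eq ?_)
      simp only [H, indicator_of_mem (show x ∈ {x | f x ≤ f y} from h), hK_symm y x]
      ring
  calc ∫⁻ x, f x * ∫⁻ y, K x y * f y ∂μ ∂μ = ∫⁻ x, ∫⁻ y, f x * (K x y * f y) ∂μ ∂μ := by
        refine lintegral_congr fun x => (lintegral_const_mul _ ?_).symm
        exact hK.of_uncurry_left.mul hf
    _ ≤ ∫⁻ x, ∫⁻ y, H x y + H y x ∂μ ∂μ := lintegral_mono fun x => lintegral_mono fun y => h_pt x y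
    _ = (∫⁻ x, ∫⁻ y, H x y ∂μ ∂μ) + ∫⁻ x, ∫⁻ y, H y x ∂μ ∂μ := by
        rw [← lintegral_add_left hH.lintegral_prod_right]
        exact lintegral_congr fun x => lintegral_add_left hH.of_uncurry_left _
    _ = 2 * ∫⁻ x, ∫⁻ y, H x y ∂μ ∂μ := by
        rw [two_mul, lintegral_lintegral_swap (f := fun x y => H y x)
          (hH.comp measurable_swap).aemeasurable]
    _ = _ := by
        congr 1
        refine lintegral_congr fun x => lintegral_const_mul _ ?_
        exact hK.of_uncurry_left.mul (hf.indicator (measurableSet_le hf measurable_const))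

lemma lintegral_mul_indicator_le {G : Type*} [AddCommGroup G] [MeasurableSpace G] [MeasurableAdd₂ G]
    [MeasurableNeg G] {μ : Measure G} [μ.IsAddLeftInvariant] [μ.IsNegInvariant] {p q : ℝ}
    (hpq : p.HolderConjugate q) {k f : G → ℝ≥0∞} (hk : Measurable k) (hf : Measurable f)
    {s : Set G} (hs : MeasurableSet s) (b : ℝ≥0∞) (x : G) :
    ∫⁻ y, k (x - y) * {y | f y ≤ b}.indicator f y ∂μ ≤
      b * (∫⁻ z in s, k z ∂μ) +
        (∫⁻ z in sᶜ, k z ^ p ∂μ) ^ (1 / p) * (∫⁻ y, f y ^ q ∂μ) ^ (1 / q) := by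
  have h_meas : ∀ {g : G → ℝ≥0∞}, Measurable g → Measurable fun y => g (x - y) := fun hg =>
    hg.comp (measurable_const.sub measurable_id)
  have h_shift : ∀ {g : G → ℝ≥0∞} {t : Set G}, MeasurableSet t →
      ∫⁻ y, t.indicator g (x - y) ∂μ = ∫⁻ z in t, g z ∂μ := fun ht => by
    rw [lintegral_sub_left_eq_self (fun z => indicator _ _ z) x, lintegral_indicator ht]
  have h_split : ∀ y, k (x - y) * {y | f y ≤ b}.indicator f y ≤
      b * s.indicator k (x - y) + sᶜ.indicator k (x - y) * f y := fun y => by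
    by_cases hy : x - y ∈ s
    · rw [indicator_of_mem hy, mul_comm]
      refine le_add_right (mul_le_mul_left ?_ _)
      exact indicator_apply_le' (fun h => h) fun _ => zero_le
    · rw [indicator_of_mem (mem_compl hy)]
      refine le_add_left (mul_le_mul_right ?_ _)
      exact indicator_apply_le' (fun _ => le_rfl) fun _ => zero_le
  have h_pow : ∀ z, sᶜ.indicator k z ^ p = sᶜ.indicator (fun z => k z ^ p) z := fun z => by
    by_cases hz : z ∈ sᶜ
    · simp only [indicator_of_mem hz]
    · simp only [indicator_of_notMem hz, ENNReal.zero_rpow_of_pos hpq.pos]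
  calc ∫⁻ y, k (x - y) * {y | f y ≤ b}.indicator f y ∂μ
      ≤ ∫⁻ y, b * s.indicator k (x - y) + sᶜ.indicator k (x - y) * f y ∂μ := lintegral_mono h_split
    _ = b * (∫⁻ z in s, k z ∂μ) + ∫⁻ y, sᶜ.indicator k (x - y) * f y ∂μ := by
        rw [lintegral_add_left ((h_meas (hk.indicator hs)).const_mul b),
          lintegral_const_mul _ (h_meas (hk.indicator hs)), h_shift hs]
    _ ≤ _ := by
        gcongr
        refine (ENNReal.lintegral_mul_le_Lp_mul_Lq μ hpq
          (h_meas (hk.indicator hs.compl)).aemeasurable hf.aemeasurable).trans_eq ?_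
        simp only [h_pow, h_shift hs.compl]

variable {E : Type*} [NormedAddCommGroup E] [NormedSpace ℝ E] [FiniteDimensional ℝ E]
  [MeasurableSpace E] [BorelSpace E] (μ : Measure E) [μ.IsAddHaarMeasure]

lemma setLIntegral_smul_rpow_norm {r : ℝ} (hr : 0 < r) (s : Set E) (a : ℝ) :
    ∫⁻ z in r • s, .ofReal (‖z‖ ^ a) ∂μ =
      .ofReal (r ^ (finrank ℝ E + a)) * ∫⁻ z in s, .ofReal (‖z‖ ^ a) ∂μ := by
  have h_emb : MeasurableEmbedding fun x : E => r • x :=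
    (Homeomorph.smulOfNeZero r hr.ne').measurableEmbedding
  have h_map := Measure.map_addHaar_smul μ hr.ne'
  have h_norm : ∀ z : E, ENNReal.ofReal (‖r • z‖ ^ a) =
      .ofReal (r ^ a) * .ofReal (‖z‖ ^ a) := fun z => by
    rw [norm_smul, norm_of_nonneg hr.le, mul_rpow hr.le (norm_nonneg z),
      ENNReal.ofReal_mul (by positivity)]
  have h_meas : μ = ENNReal.ofReal (r ^ finrank ℝ E) • μ.map (fun x => r • x) := by
    rw [h_map, smul_smul, abs_of_pos (by positivity), ← ENNReal.ofReal_mul (by positivity),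
      mul_inv_cancel₀ (by positivity), ENNReal.ofReal_one, one_smul]
  conv_lhs => rw [h_meas]
  rw [Measure.restrict_smul, lintegral_smul_measure, h_emb.restrict_map, h_emb.lintegral_map,
    ← image_smul, preimage_image_eq _ h_emb.injective]
  simp only [h_norm]
  rw [lintegral_const_mul _ (by fun_prop), smul_eq_mul, ← mul_assoc,
    ← ENNReal.ofReal_mul (by positivity), rpow_add hr, rpow_natCast]

lemma setLIntegral_ball_rpow_norm_ne_top {a : ℝ} (hE : 0 < finrank ℝ E)
    (ha : -finrank ℝ E < a) (r : ℝ) : ∫⁻ z in ball 0 r, .ofReal (‖z‖ ^ a) ∂μ ≠ ⊤ := by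
  have h_int : IntegrableOn (fun z : E => ‖z‖ ^ a) (ball 0 r) μ :=
    integrableOn_ball_of_norm_le_rpow (C := 1) (α := -a) hE (by linarith)
      (ae_of_all _ fun z => by rw [norm_of_nonneg (by positivity), neg_neg, one_mul])
      (Measurable.aestronglyMeasurable (by fun_prop))
  exact h_int.lintegral_lt_top.ne

lemma setLIntegral_compl_ball_rpow_norm_ne_top {a : ℝ} (ha : a < -finrank ℝ E) :
    ∫⁻ z in (ball 0 1)ᶜ, .ofReal (‖z‖ ^ a) ∂μ ≠ ⊤ := by
  have h_int := (integrable_one_add_norm (μ := μ) (r := -a) (by linarith)).const_mul (2 ^ (-a))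
  refine ((setLIntegral_mono' measurableSet_ball.compl fun z hz => ?_).trans
    (setLIntegral_le_lintegral _ _)).trans_lt h_int.lintegral_lt_top |>.ne
  have hz1 : 1 ≤ ‖z‖ := by simpa using hz
  refine ENNReal.ofReal_le_ofReal ?_
  have h_exp : a ≤ 0 := by
    have : (0 : ℝ) ≤ finrank ℝ E := by positivity
    linarith
  calc ‖z‖ ^ a = 2 ^ (-a) * (2 * ‖z‖) ^ a := by
        rw [mul_rpow zero_le_two (norm_nonneg z), ← mul_assoc, ← rpow_add two_pos, neg_add_cancel,
          rpow_zero, one_mul]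
    _ ≤ 2 ^ (-a) * (1 + ‖z‖) ^ (- -a) := by
        rw [neg_neg]
        gcongr 2 ^ (-a) * ?_
        exact rpow_le_rpow_of_nonpos (by positivity) (by linarith) h_exp

variable {l : ℝ} {f : E → ℝ≥0∞}

lemma exists_lintegral_rpow_norm_sub_mul_indicator_le (hl : 0 < l) (hlE : l < finrank ℝ E)
    (hf : Measurable f)
    (hf_Lp : ∫⁻ y, f y ^ (2 * finrank ℝ E / (2 * finrank ℝ E - l) : ℝ) ∂μ ≠ ⊤) :
    ∃ A ≠ ⊤, ∃ B ≠ ⊤, ∀ r : ℝ, 0 < r → ∀ (b : ℝ≥0∞) (x : E),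
      ∫⁻ y, .ofReal (‖x - y‖ ^ (-l)) * {y | f y ≤ b}.indicator f y ∂μ ≤
        b * (.ofReal (r ^ (finrank ℝ E - l)) * A) + .ofReal (r ^ (-(l / 2))) * B := by
  set n := (finrank ℝ E : ℝ)
  have hn0 : 0 < n := hl.trans hlE
  have hnl : 0 < 2 * n - l := by linarith
  have hpq : (2 * n / l).HolderConjugate (2 * n / (2 * n - l)) := by
    rw [Real.holderConjugate_iff]
    exact ⟨by rw [lt_div_iff₀ hl]; linarith, by field_simp; ring⟩
  refine ⟨∫⁻ z in ball 0 1, .ofReal (‖z‖ ^ (-l)) ∂μ,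
    setLIntegral_ball_rpow_norm_ne_top μ (Nat.cast_pos.1 hn0) (by simpa using hlE) 1,
    (∫⁻ z in (ball 0 1)ᶜ, .ofReal (‖z‖ ^ (-(2 * n))) ∂μ) ^ (1 / (2 * n / l)) *
      (∫⁻ y, f y ^ (2 * n / (2 * n - l)) ∂μ) ^ (1 / (2 * n / (2 * n - l))), ?_, ?_⟩
  · exact ENNReal.mul_ne_top (ENNReal.rpow_ne_top_of_nonneg (by positivity)
      (setLIntegral_compl_ball_rpow_norm_ne_top μ (by change _ < -n; linarith)))
      (ENNReal.rpow_ne_top_of_nonneg (by positivity) hf_Lp)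
  intro r hr b x
  have h_pow : ∀ z : E, ENNReal.ofReal (‖z‖ ^ (-l)) ^ (2 * n / l) = .ofReal (‖z‖ ^ (-(2 * n))) :=
    fun z => by
      rw [ENNReal.ofReal_rpow_of_nonneg (by positivity) (by positivity),
        ← rpow_mul (norm_nonneg z)]
      congr 2
      field_simp
  have h_compl : (r • ball (0 : E) 1)ᶜ = r • (ball (0 : E) 1)ᶜ :=
    (image_compl_eq (Homeomorph.smulOfNeZero r hr.ne').bijective).symm
  have h_scale : ENNReal.ofReal (r ^ (n + -(2 * n))) ^ (1 / (2 * n / l)) =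
      .ofReal (r ^ (-(l / 2))) := by
    rw [ENNReal.ofReal_rpow_of_pos (by positivity), ← rpow_mul hr.le]
    congr 2
    field_simp
    ring
  have h_bound := lintegral_mul_indicator_le (μ := μ) hpq
    (k := fun z : E => .ofReal (‖z‖ ^ (-l))) (by fun_prop) hf
    (measurableSet_ball (x := (0 : E)) (ε := r)) b x
  rwa [lintegral_congr h_pow, ← smul_unitBall_of_pos hr, h_compl, setLIntegral_smul_rpow_norm μ hr,
    setLIntegral_smul_rpow_norm μ hr, ENNReal.mul_rpow_of_nonneg _ _ (by positivity), h_scale,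
    mul_assoc (ENNReal.ofReal (r ^ (-(l / 2))))] at h_bound

-- The radius `r = f x ^ (-2 / (2 n - l))` balances the near and the far contribution.
lemma exists_mul_lintegral_rpow_norm_sub_mul_indicator_le (hl : 0 < l) (hlE : l < finrank ℝ E)
    (hf : Measurable f)
    (hf_Lp : ∫⁻ y, f y ^ (2 * finrank ℝ E / (2 * finrank ℝ E - l) : ℝ) ∂μ ≠ ⊤) :
    ∃ C ≠ ⊤, ∀ x, f x ≠ ⊤ →
      f x * ∫⁻ y, .ofReal (‖x - y‖ ^ (-l)) * {y | f y ≤ f x}.indicator f y ∂μ ≤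
        C * f x ^ (2 * finrank ℝ E / (2 * finrank ℝ E - l) : ℝ) := by
  obtain ⟨A, hA, B, hB, h_bound⟩ :=
    exists_lintegral_rpow_norm_sub_mul_indicator_le μ hl hlE hf hf_Lp
  refine ⟨A + B, ENNReal.add_ne_top.2 ⟨hA, hB⟩, fun x hx => ?_⟩
  set n := (finrank ℝ E : ℝ)
  have hnl : 0 < 2 * n - l := by linarith
  rcases eq_or_ne (f x) 0 with h0 | h0
  · rw [h0, zero_mul]
    exact zero_le
  obtain ⟨b, hb, hbx⟩ : ∃ b : ℝ, 0 < b ∧ f x = .ofReal b :=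
    ⟨(f x).toReal, ENNReal.toReal_pos h0 hx, (ENNReal.ofReal_toReal hx).symm⟩
  have h_near : b * b * (b ^ (-2 / (2 * n - l))) ^ (n - l) = b ^ (2 * n / (2 * n - l)) := by
    rw [← rpow_mul hb.le, ← pow_two, ← rpow_natCast, ← rpow_add hb]
    congr 1
    push_cast
    field_simp
    ring
  have h_far : b * (b ^ (-2 / (2 * n - l))) ^ (-(l / 2)) = b ^ (2 * n / (2 * n - l)) := by
    rw [← rpow_mul hb.le, mul_comm, ← rpow_add_one hb.ne']
    congr 1
    field_simp
    ring
  refine (mul_le_mul_right (h_bound (b ^ (-2 / (2 * n - l))) (by positivity) (f x) x) _).trans_eq ?_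
  rw [hbx, ENNReal.ofReal_rpow_of_pos hb, mul_add, ← mul_assoc, ← mul_assoc, ← mul_assoc,
    ← ENNReal.ofReal_mul hb.le, ← ENNReal.ofReal_mul (by positivity), ← ENNReal.ofReal_mul hb.le,
    h_near, h_far, ← mul_add, mul_comm]

theorem lintegral_mul_lintegral_rpow_norm_sub_mul_ne_top (hl : 0 < l) (hlE : l < finrank ℝ E)
    (hf : Measurable f)
    (hf_Lp : ∫⁻ y, f y ^ (2 * finrank ℝ E / (2 * finrank ℝ E - l) : ℝ) ∂μ ≠ ⊤) :
    ∫⁻ x, f x * ∫⁻ y, .ofReal (‖x - y‖ ^ (-l)) * f y ∂μ ∂μ ≠ ⊤ := by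
  obtain ⟨C, hC, h_bound⟩ := exists_mul_lintegral_rpow_norm_sub_mul_indicator_le μ hl hlE hf hf_Lp
  have h_exp : 0 < 2 * finrank ℝ E / (2 * finrank ℝ E - l) := div_pos (by linarith) (by linarith)
  have hf_fin : ∀ᵐ x ∂μ, f x ≠ ⊤ := by
    filter_upwards [ae_lt_top (hf.pow_const _) hf_Lp] with x hx
    exact ((ENNReal.rpow_lt_top_iff_of_pos h_exp).1 hx).ne
  refine ne_top_of_le_ne_top (ENNReal.mul_ne_top ENNReal.ofNat_ne_top ?_)
    (lintegral_mul_lintegral_mul_le_two_mul (K := fun x y => .ofReal (‖x - y‖ ^ (-l)))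
      (by fun_prop) (fun x y => by rw [norm_sub_rev]) hf)
  refine ne_top_of_le_ne_top (ENNReal.mul_ne_top hC hf_Lp) ?_
  rw [← lintegral_const_mul _ (hf.pow_const _)]
  refine lintegral_mono_ae ?_
  filter_upwards [hf_fin] with x hx using h_bound x hx

end HardyLittlewoodSobolev

section GreenEnergy

open scoped ENNReal

variable {d : ℕ} {v w : EuclideanSpace ℝ (Fin d) → ℝ}

/-- The energy `∫ v (-Δ)⁻¹ v` of a nonnegative function, as an extended nonnegative real, so that
no integrability is needed for it to be meaningful. -/
def greenEnergy (d : ℕ) (v : EuclideanSpace ℝ (Fin d) → ℝ) : ℝ≥0∞ :=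
  ∫⁻ x, .ofReal (v x) * ∫⁻ y, .ofReal (greenKernel d (x - y)) * .ofReal (v y)

lemma greenEnergy_mono (hwv : ∀ x, w x ≤ v x) : greenEnergy d w ≤ greenEnergy d v := by
  unfold greenEnergy
  gcongr with x y
  · exact hwv x
  · exact hwv _

lemma greenEnergy_ne_top (hd : 2 < d) (hv : Measurable v) (hv0 : ∀ x, 0 ≤ v x)
    (hv_Lp : Integrable fun x => v x ^ (2 * d / (d + 2) : ℝ)) : greenEnergy d v ≠ ⊤ := by
  have hs := sphereArea_pos (pos_of_gt hd)
  have hd2 : (0 : ℝ) < d - 2 := by rw [sub_pos]; exact_mod_cast hd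
  have h_kernel : ∀ x : EuclideanSpace ℝ (Fin d), ENNReal.ofReal (greenKernel d x) =
      .ofReal ((d - 2) * sphereArea d)⁻¹ * .ofReal (‖x‖ ^ (-(d - 2) : ℝ)) := fun x => by
    rw [← ENNReal.ofReal_mul (by positivity), neg_sub, greenKernel, div_eq_inv_mul]
  have h_Lp : ∫⁻ x, ENNReal.ofReal (v x) ^ (2 * d / (2 * d - (d - 2)) : ℝ) ≠ ⊤ := by
    have h_pow : ∀ x, ENNReal.ofReal (v x) ^ (2 * d / (2 * d - (d - 2)) : ℝ) =
        .ofReal (v x ^ (2 * d / (d + 2) : ℝ)) := fun x => by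
      rw [show (2 * d - (d - 2) : ℝ) = d + 2 by ring,
        ENNReal.ofReal_rpow_of_nonneg (hv0 x) (by positivity)]
    rw [lintegral_congr h_pow]
    exact hv_Lp.lintegral_lt_top.ne
  have h_energy := lintegral_mul_lintegral_rpow_norm_sub_mul_ne_top volume (l := (d - 2 : ℝ)) hd2
    (by rw [finrank_euclideanSpace_fin]; linarith) hv.ennreal_ofReal
    (by rwa [finrank_euclideanSpace_fin])
  have h_eq : greenEnergy d v = .ofReal ((d - 2) * sphereArea d)⁻¹ *
      ∫⁻ x, .ofReal (v x) * ∫⁻ y, .ofReal (‖x - y‖ ^ (-(d - 2) : ℝ)) * .ofReal (v y) := by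
    simp only [greenEnergy, h_kernel, mul_assoc]
    rw [← lintegral_const_mul' _ _ ENNReal.ofReal_ne_top]
    refine lintegral_congr fun x => ?_
    rw [lintegral_const_mul' _ _ ENNReal.ofReal_ne_top, mul_left_comm]
  rw [h_eq]
  exact ENNReal.mul_ne_top ENNReal.ofReal_ne_top h_energy

lemma integral_mul_invLap_eq_toReal_greenEnergy (hd : 2 < d) (hv : Measurable v)
    (hv0 : ∀ x, 0 ≤ v x) (h_fin : greenEnergy d v ≠ ⊤) :
    ∫ x, v x * invLap d v x = (greenEnergy d v).toReal := by
  have h_meas : Measurable fun x => ENNReal.ofReal (v x) *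
      ∫⁻ y, .ofReal (greenKernel d (x - y)) * .ofReal (v y) :=
    hv.ennreal_ofReal.mul (Measurable.lintegral_prod_right (by fun_prop))
  have h_pt : ∀ x, v x * invLap d v x = (ENNReal.ofReal (v x) *
      ∫⁻ y, .ofReal (greenKernel d (x - y)) * .ofReal (v y)).toReal := fun x => by
    have hG := greenKernel_nonneg (d := d) hd
    rw [ENNReal.toReal_mul, ENNReal.toReal_ofReal (hv0 x), invLap,
      integral_eq_lintegral_of_nonneg_ae (ae_of_all _ fun y => mul_nonneg (hG _) (hv0 y))
        (Measurable.aestronglyMeasurable (by fun_prop))]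
    simp only [ENNReal.ofReal_mul (hG _)]
  simp only [h_pt]
  exact integral_toReal h_meas.aemeasurable (ae_lt_top h_meas h_fin)

lemma integral_mul_invLap_mono (hd : 2 < d) (hw : Measurable w) (hw0 : ∀ x, 0 ≤ w x)
    (hv : Measurable v) (hwv : ∀ x, w x ≤ v x)
    (hv_Lp : Integrable fun x => v x ^ (2 * d / (d + 2) : ℝ)) :
    ∫ x, w x * invLap d w x ≤ ∫ x, v x * invLap d v x := by
  have hv0 := fun x => (hw0 x).trans (hwv x)
  have h_fin := greenEnergy_ne_top hd hv hv0 hv_Lp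
  have h_mono := greenEnergy_mono hwv
  rw [integral_mul_invLap_eq_toReal_greenEnergy hd hw hw0 (ne_top_of_le_ne_top h_fin h_mono),
    integral_mul_invLap_eq_toReal_greenEnergy hd hv hv0 h_fin]
  exact ENNReal.toReal_mono h_fin h_mono

end GreenEnergy

section SobolevDuality

open Set Filter Topology

variable {d : ℕ} {u v : EuclideanSpace ℝ (Fin d) → ℝ}

lemma sq_toReal_eLpNorm_two {α F : Type*} [MeasurableSpace α] {μ : Measure α}
    [NormedAddCommGroup F] {f : α → F} (hf : MemLp f 2 μ) :
    (eLpNorm f 2 μ).toReal ^ 2 = ∫ x, ‖f x‖ ^ 2 ∂μ := by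
  have h_int : 0 ≤ ∫ x, ‖f x‖ ^ 2 ∂μ := integral_nonneg fun x => sq_nonneg _
  rw [hf.eLpNorm_eq_integral_rpow_norm two_ne_zero ENNReal.ofNat_ne_top, ENNReal.toReal_ofNat,
    ← one_div, ← sqrt_eq_rpow, ENNReal.toReal_ofReal (sqrt_nonneg _)]
  simp only [rpow_two]
  exact sq_sqrt h_int

lemma two_mul_integral_cutoff_mul_le (hd : 2 < d) (hu : Differentiable ℝ u)
    (h_grad : MemLp (fderiv ℝ u) 2) (hv : Continuous v) (hv0 : ∀ x, 0 ≤ v x)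
    (hv_Lp : Integrable fun x => v x ^ (2 * d / (d + 2) : ℝ)) (k : ℕ) :
    2 * ∫ x, cutoff k x * u x * (cutoff k x * v x) ≤
      (eLpNorm (fderiv ℝ fun x => cutoff k x * u x) 2 volume).toReal ^ 2 +
        ∫ x, v x * invLap d v x := by
  have h_cutoff : Continuous (cutoff k : EuclideanSpace ℝ (Fin d) → ℝ) :=
    (contDiff_cutoff k).continuous
  have hu_k : Differentiable ℝ fun x => cutoff k x * u x := (differentiable_cutoff k).mul hu
  have hv_k : Continuous fun x => cutoff k x * v x := h_cutoff.mul hv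
  have hv_k_supp : HasCompactSupport fun x => cutoff k x * v x :=
    (hasCompactSupport_cutoff k).mul_right
  have hv_k0 : ∀ x, 0 ≤ cutoff k x * v x := fun x => mul_nonneg (cutoff_nonneg k x) (hv0 x)
  have h_grad_k := memLp_fderiv_cutoff_mul hu one_le_two h_grad k
  obtain ⟨M, hM⟩ := hv_k_supp.exists_bound_of_continuous hv_k
  have h_dual := two_mul_integral_mul_le_add_integral_mul_invLap hd hu_k
    (hu_k.continuous.integrable_of_hasCompactSupport (hasCompactSupport_cutoff k).mul_right)
    ((memLp_two_iff_integrable_sq_norm h_grad_k.1).1 h_grad_k)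
    (hv_k.integrable_of_hasCompactSupport hv_k_supp) hv_k hv_k0 hM
  have h_mono := integral_mul_invLap_mono hd hv_k.measurable hv_k0 hv.measurable
    (fun x => mul_le_of_le_one_left (hv0 x) (cutoff_le_one k x)) hv_Lp
  simp only [mul_comm (invLap d _ _)] at h_dual
  rw [sq_toReal_eLpNorm_two h_grad_k]
  exact h_dual.trans (add_le_add_right h_mono _)

lemma tendsto_integral_cutoff_mul_mul (huv : Integrable fun x => u x * v x) :
    Tendsto (fun k => ∫ x, cutoff k x * u x * (cutoff k x * v x)) atTop (𝓝 (∫ x, u x * v x)) := by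
  have h_comm : ∀ k x, cutoff k x * u x * (cutoff k x * v x) = cutoff k x ^ 2 * (u x * v x) :=
    fun k x => by ring
  simp only [h_comm]
  refine tendsto_integral_of_dominated_convergence (fun x => ‖u x * v x‖) (fun k => ?_) huv.norm
    (fun k => ae_of_all _ fun x => ?_) (ae_of_all _ fun x => ?_)
  · exact ((contDiff_cutoff k).continuous.pow 2).aestronglyMeasurable.mul huv.1
  · rw [norm_mul, norm_of_nonneg (sq_nonneg _)]
    exact mul_le_of_le_one_left (norm_nonneg _)
      (pow_le_one₀ (cutoff_nonneg k x) (cutoff_le_one k x))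
  · simpa using ((tendsto_cutoff x).pow 2).mul_const (u x * v x)

lemma exists_tendsto_toReal_eLpNorm_fderiv_cutoff_mul (hd : 2 < d) (hu : Differentiable ℝ u)
    (hu_Lp : MemLp u (.ofReal (2 * d / (d - 2)))) (h_grad : MemLp (fderiv ℝ u) 2) :
    ∃ b : ℕ → ℝ, Tendsto b atTop (𝓝 (eLpNorm (fderiv ℝ u) 2 volume).toReal) ∧
      ∀ k, (eLpNorm (fderiv ℝ fun x => cutoff k x * u x) 2 volume).toReal ≤ b k := by
  have h_lim := tendsto_eLpNorm_fderiv_add_smul_fderiv_cutoff hd hu_Lp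
  refine ⟨_, (ENNReal.tendsto_toReal h_grad.2.ne).comp h_lim, fun k => ENNReal.toReal_mono ?_ ?_⟩
  · exact ENNReal.add_ne_top.2 ⟨h_grad.2.ne, (memLp_smul_fderiv_cutoff hu.continuous k 2).2.ne⟩
  · exact eLpNorm_fderiv_cutoff_mul_le hu one_le_two k

theorem two_mul_integral_mul_le_of_memLp (hd : 2 < d) (hu : Differentiable ℝ u)
    (hu_Lp : MemLp u (.ofReal (2 * d / (d - 2)))) (h_grad : MemLp (fderiv ℝ u) 2)
    (hv : Continuous v) (hv0 : ∀ x, 0 ≤ v x)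
    (hv_Lp : Integrable fun x => v x ^ (2 * d / (d + 2) : ℝ))
    (huv : Integrable fun x => u x * v x) :
    2 * ∫ x, u x * v x ≤ (∫ x, ‖fderiv ℝ u x‖ ^ 2) + ∫ x, v x * invLap d v x := by
  obtain ⟨b, hb, h_le⟩ := exists_tendsto_toReal_eLpNorm_fderiv_cutoff_mul hd hu hu_Lp h_grad
  rw [← sq_toReal_eLpNorm_two h_grad]
  refine le_of_tendsto_of_tendsto' ((tendsto_integral_cutoff_mul_mul huv).const_mul 2)
    ((hb.pow 2).add_const _) fun k => ?_
  refine (two_mul_integral_cutoff_mul_le hd hu h_grad hv hv0 hv_Lp k).trans ?_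
  gcongr
  exact h_le k

end SobolevDuality

section ImprovedHLS

variable {d : ℕ} {u : EuclideanSpace ℝ (Fin d) → ℝ}

lemma rpow_rpow_dualExponent (hd : 2 < d) {a : ℝ} (ha : 0 ≤ a) :
    (a ^ ((d + 2) / (d - 2) : ℝ)) ^ (2 * d / (d + 2) : ℝ) = a ^ (2 * d / (d - 2) : ℝ) := by
  have hd' : (0 : ℝ) < d - 2 := sub_pos.2 (mod_cast hd)
  rw [← rpow_mul ha]
  congr 1
  field_simp

lemma mul_rpow_dualExponent (hd : 2 < d) {a : ℝ} (ha : 0 ≤ a) :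
    a * a ^ ((d + 2) / (d - 2) : ℝ) = a ^ (2 * d / (d - 2) : ℝ) := by
  have hd' : (0 : ℝ) < d - 2 := sub_pos.2 (mod_cast hd)
  rw [← rpow_one_add' ha (by positivity)]
  congr 1
  field_simp
  ring

lemma lpNorm'_rpow_two (hu0 : ∀ x, 0 ≤ u x) (p : ℝ) :
    lpNorm' p u ^ (2 : ℝ) = (∫ x, u x ^ p) ^ (2 / p) := by
  simp only [lpNorm', abs_of_nonneg (hu0 _)]
  rw [← rpow_mul (integral_nonneg fun x => rpow_nonneg (hu0 x) _), one_div_mul_eq_div]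

lemma two_mul_const_mul_integral_rpow_le (hd : 2 < d) (hu0 : ∀ x, 0 ≤ u x)
    (hu : Differentiable ℝ u) (hu_Lp : Integrable fun x => u x ^ (2 * d / (d - 2) : ℝ))
    (h_grad : Integrable fun x => ‖gradient u x‖ ^ 2) (c : ℝ) :
    2 * (c * ∫ x, u x ^ (2 * d / (d - 2) : ℝ)) ≤ c ^ 2 * (∫ x, ‖gradient u x‖ ^ 2) +
      ∫ x, u x ^ ((d + 2) / (d - 2) : ℝ) * invLap d (fun y => u y ^ ((d + 2) / (d - 2) : ℝ)) x := by
  have hd' : (0 : ℝ) < d - 2 := sub_pos.2 (mod_cast hd)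
  simp only [norm_gradient_eq_norm_fderiv] at h_grad ⊢
  have hu_memLp := (memLp_ofReal_iff_integrable_rpow (by positivity) hu0
    hu.continuous.aestronglyMeasurable).2 hu_Lp
  have h_grad_memLp := (memLp_two_iff_integrable_sq_norm
    (measurable_fderiv ℝ u).aestronglyMeasurable).2 h_grad
  have h_fderiv : fderiv ℝ (fun x => c * u x) = fun x => c • fderiv ℝ u x :=
    funext fun x => fderiv_const_mul (hu x) c
  have h_mul : ∀ x, c * u x * u x ^ ((d + 2) / (d - 2) : ℝ) = c * u x ^ (2 * d / (d - 2) : ℝ) :=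
    fun x => by rw [mul_assoc, mul_rpow_dualExponent hd (hu0 x)]
  have h_dual := two_mul_integral_mul_le_of_memLp (u := fun x => c * u x)
    (v := fun x => u x ^ ((d + 2) / (d - 2) : ℝ)) hd (hu.const_mul c) (hu_memLp.const_mul c)
    (by rw [h_fderiv]; exact h_grad_memLp.const_smul c)
    (hu.continuous.rpow_const fun x => .inr (by positivity)) (fun x => rpow_nonneg (hu0 x) _)
    (by simpa only [rpow_rpow_dualExponent hd (hu0 _)] using hu_Lp)
    (by simpa only [h_mul] using hu_Lp.const_mul c)
  simpa only [h_mul, h_fderiv, norm_smul, mul_pow, norm_eq_abs, sq_abs, integral_const_mul]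
    using h_dual

lemma sobolevConst_mul_rpow_sub_le (hd : 2 < d) (hu0 : ∀ x, 0 ≤ u x)
    (hu : Differentiable ℝ u) (hu_Lp : Integrable fun x => u x ^ (2 * d / (d - 2) : ℝ))
    (h_grad : Integrable fun x => ‖gradient u x‖ ^ 2) :
    sobolevConst d * (∫ x, u x ^ (2 * d / (d - 2) : ℝ)) ^ ((d + 2) / d : ℝ) -
      (∫ x, u x ^ ((d + 2) / (d - 2) : ℝ) *
        invLap d (fun y => u y ^ ((d + 2) / (d - 2) : ℝ)) x) ≤
    sobolevConst d * (∫ x, u x ^ (2 * d / (d - 2) : ℝ)) ^ (4 / d : ℝ) *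
      (sobolevConst d * (∫ x, ‖gradient u x‖ ^ 2) -
        (∫ x, u x ^ (2 * d / (d - 2) : ℝ)) ^ ((d - 2) / d : ℝ)) := by
  have hd' : (0 : ℝ) < d - 2 := sub_pos.2 (mod_cast hd)
  have h_dual := two_mul_const_mul_integral_rpow_le hd hu0 hu hu_Lp h_grad
  set X := ∫ x, u x ^ (2 * d / (d - 2) : ℝ)
  set S := sobolevConst d
  have hX : 0 ≤ X := integral_nonneg fun x => rpow_nonneg (hu0 x) _
  have h_cross : X ^ (2 / d : ℝ) * X = X ^ ((d + 2) / d : ℝ) := by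
    rw [← rpow_add_one' hX (by positivity)]
    congr 1
    field_simp
    ring
  have h_sq : (X ^ (2 / d : ℝ)) ^ 2 = X ^ (4 / d : ℝ) := by
    rw [← rpow_mul_natCast hX]
    congr 1
    push_cast
    ring
  have h_split : X ^ (4 / d : ℝ) * X ^ ((d - 2) / d : ℝ) = X ^ ((d + 2) / d : ℝ) := by
    rw [← rpow_add_of_nonneg hX (by positivity) (by positivity)]
    congr 1
    field_simp
    ring
  have h_opt := h_dual (S * X ^ (2 / d : ℝ))
  rw [mul_pow, h_sq, mul_assoc S, h_cross] at h_opt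
  rw [mul_sub, mul_assoc S _ (X ^ _), h_split]
  linarith

lemma one_le_add_two_div_mul_one_sub_exp {x : ℝ} (hx : 0 < x) :
    1 ≤ (x + 2) / x * (1 - exp (-x / 2)) := by
  have h_exp : exp (-x / 2) ≤ (x / 2 + 1)⁻¹ := by
    rw [neg_div, exp_neg]
    exact inv_anti₀ (by positivity) (add_one_le_exp _)
  calc (1 : ℝ) = (x + 2) / x * (1 - (x / 2 + 1)⁻¹) := by field_simp; ring
    _ ≤ (x + 2) / x * (1 - exp (-x / 2)) := by gcongr

theorem flow_improved_hls_general (hd : 2 < d) (hu0 : ∀ x, 0 ≤ u x) (hu : MemD12 d u) {C : ℝ}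
    (hC : 1 ≤ C) :
    sobolevConst d *
        lpNorm' (2 * d / (d + 2)) (fun x => u x ^ ((d + 2) / (d - 2) : ℝ)) ^ (2 : ℝ) -
      (∫ x, u x ^ ((d + 2) / (d - 2) : ℝ) *
        invLap d (fun y => u y ^ ((d + 2) / (d - 2) : ℝ)) x) ≤
    C * sobolevConst d *
      (∫ x, (u x ^ ((d + 2) / (d - 2) : ℝ)) ^ (2 * d / (d + 2) : ℝ)) ^ (4 / d : ℝ) *
      (sobolevConst d * (∫ x, ‖gradient u x‖ ^ 2) - lpNorm' (2 * d / (d - 2)) u ^ (2 : ℝ)) := by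
  obtain ⟨hu_diff, h_grad, hu_abs⟩ := hu
  have hu_Lp : Integrable fun x => u x ^ (2 * d / (d - 2) : ℝ) := by
    simpa only [abs_of_nonneg (hu0 _)] using hu_abs
  have hd' : (0 : ℝ) < d - 2 := sub_pos.2 (mod_cast hd)
  have h_sobolev := rpow_integral_le_sobolevConst_mul hd hu0 hu_diff hu_Lp h_grad
  have h_deficit := sobolevConst_mul_rpow_sub_le hd hu0 hu_diff hu_Lp h_grad
  have hX : 0 ≤ ∫ x, u x ^ (2 * d / (d - 2) : ℝ) :=
    integral_nonneg fun x => rpow_nonneg (hu0 x) _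
  rw [lpNorm'_rpow_two hu0, lpNorm'_rpow_two fun x => rpow_nonneg (hu0 x) _,
    show 2 / (2 * d / (d + 2)) = ((d + 2) / d : ℝ) by field_simp,
    show 2 / (2 * d / (d - 2)) = ((d - 2) / d : ℝ) by field_simp, mul_assoc C, mul_assoc C]
  simp only [rpow_rpow_dualExponent hd (hu0 _)]
  exact h_deficit.trans (le_mul_of_one_le_left (mul_nonneg
    (mul_nonneg (sobolevConst_nonneg hd) (rpow_nonneg hX _)) (sub_nonneg.2 h_sobolev)) hC)

end ImprovedHLS

/-- the flow-based improvement of the Hardy-Littlewood-Sobolev inequality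
with constant `C = ((d+2)/d)(1 − e^{−d/2})`, extended to all dimensions `d ≥ 3`. -/
theorem flow_improved_hls (d : ℕ) (hd : 3 ≤ d)
    (u : EuclideanSpace ℝ (Fin d) → ℝ) (hu0 : ∀ x, 0 ≤ u x) (hu : MemD12 d u) :
    sobolevConst d *
        lpNorm' (2 * (d : ℝ) / ((d : ℝ) + 2))
          (fun x => u x ^ (((d : ℝ) + 2) / ((d : ℝ) - 2))) ^ (2 : ℝ) -
      (∫ x, u x ^ (((d : ℝ) + 2) / ((d : ℝ) - 2)) *
        invLap d (fun y => u y ^ (((d : ℝ) + 2) / ((d : ℝ) - 2))) x) ≤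
    ((d : ℝ) + 2) / (d : ℝ) * (1 - Real.exp (-(d : ℝ) / 2)) * sobolevConst d *
      (∫ x, (u x ^ (((d : ℝ) + 2) / ((d : ℝ) - 2))) ^ (2 * (d : ℝ) / ((d : ℝ) + 2))) ^
        ((4 : ℝ) / (d : ℝ)) *
      (sobolevConst d * (∫ x, ‖gradient u x‖ ^ 2) -
        lpNorm' (2 * (d : ℝ) / ((d : ℝ) - 2)) u ^ (2 : ℝ)) := by
  have hd0 : (0 : ℝ) < d := mod_cast (by lia)
  exact flow_improved_hls_general hd hu0 hu (one_le_add_two_div_mul_one_sub_exp hd0)
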